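/- arXiv:1207.1961 — 4 statements merged into one kernel-verified Lean document; each statement's English description precedes it below -/
import Mathlib

section
/- If every vertex of a finite graph G ≠ K₃ has odd degree, then G has an oriented perfect path double cover. -/
/-- An oriented perfect path double cover: for each vertex `v`, a directed path
`P v` (a nonempty list of distinct vertices, consecutive ones adjacent) starting
at `v`, such that each vertex is the end of exactly one path, and each arc of the
symmetric orientation lies in exactly one path. -/
def HasOPPDC {V : Type*} (G : SimpleGraph V) : Prop :=
  ∃ P : V → List V,
    (∀ v, P v ≠ [] ∧ (P v).Nodup ∧ (P v).Chain' G.Adj ∧ (P v).head? = some v) ∧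
    (∀ w : V, ∃! v, (P v).getLast? = some w) ∧
    (∀ a b : V, G.Adj a b → ∃! v, (a, b) ∈ (P v).zip (P v).tail)

namespace PathDecomposition

open Multiset

variable {V : Type*}

/-- The multiset of edges traversed by a list of vertices. -/
def edges : List V → Multiset (Sym2 V)
  | [] => 0
  | [_] => 0
  | a :: b :: l => s(a, b) ::ₘ edges (b :: l)

/-- The two end vertices of a list (a one-element list has its vertex as a double end). -/
def ends (p : List V) : Multiset V := (p.head?.toList : Multiset V) + (p.getLast?.toList : Multiset V)

/-- `L` is a family of undirected paths with edge multiset `E` and end multiset `D`. -/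
def IsDecomp (L : Multiset (List V)) (E : Multiset (Sym2 V)) (D : Multiset V) : Prop :=
  (∀ p ∈ L, p.Nodup) ∧ (L.map edges).sum = E ∧ (L.map ends).sum = D

/-- Membership in a family of undirected paths, up to reversal. -/
def MemRev (L : Multiset (List V)) (p : List V) : Prop := p ∈ L ∨ p.reverse ∈ L

theorem edges_append_cons (l : List V) (u b : V) (r : List V) :
    edges (l ++ u :: b :: r) = s(u, b) ::ₘ (edges (l ++ [u]) + edges (b :: r)) := by
  induction l with
  | nil => simp [edges]
  | cons a l ih =>
    cases l with
    | nil => simp [edges, Multiset.cons_swap]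
    | cons c l =>
      simp only [List.cons_append, edges] at ih ⊢
      rw [ih, Multiset.cons_swap, Multiset.cons_add]

theorem edges_concat (l : List V) (u b : V) :
    edges (l ++ [u, b]) = s(u, b) ::ₘ edges (l ++ [u]) := by
  simpa [edges] using edges_append_cons l u b []

theorem edges_reverse (p : List V) : edges p.reverse = edges p := by
  induction p with
  | nil => rfl
  | cons a p ih =>
    cases p with
    | nil => rfl
    | cons b p =>
      have h := edges_concat p.reverse b a
      simp only [List.reverse_cons, List.append_assoc, List.cons_append, List.nil_append] at ih h ⊢
      rw [h, ih, edges, Sym2.eq_swap]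

theorem ends_reverse (p : List V) : ends p.reverse = ends p := by
  simp [ends, add_comm]

theorem mem_ends {p : List V} {v : V} :
    v ∈ ends p ↔ p.head? = some v ∨ p.reverse.head? = some v := by
  simp [ends]

theorem exists_split_of_mem_edges {p : List V} {a b : V} (h : s(a, b) ∈ edges p) :
    (∃ l r, p = l ++ a :: b :: r) ∨ ∃ l r, p.reverse = l ++ a :: b :: r := by
  induction p with
  | nil => simp [edges] at h
  | cons c p ih =>
    cases p with
    | nil => simp [edges] at h
    | cons d p =>
      rw [edges, Multiset.mem_cons] at h
      rcases h with h | h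
      · rcases Sym2.eq_iff.1 h with ⟨rfl, rfl⟩ | ⟨rfl, rfl⟩
        · exact .inl ⟨[], p, rfl⟩
        · exact .inr ⟨p.reverse, [], by simp⟩
      · rcases ih h with ⟨l, r, e⟩ | ⟨l, r, e⟩
        · exact .inl ⟨c :: l, r, by rw [e]; rfl⟩
        · exact .inr ⟨l, r ++ [c], by rw [List.reverse_cons, e]; simp⟩

theorem mem_edges_append (l : List V) (a b : V) (r : List V) :
    s(a, b) ∈ edges (l ++ a :: b :: r) := by
  simp [edges_append_cons]

theorem mem_zip_tail {p : List V} {a b : V} :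
    (a, b) ∈ p.zip p.tail ↔ ∃ l r, p = l ++ a :: b :: r := by
  induction p with
  | nil => simp
  | cons c p ih =>
    cases p with
    | nil => simp [List.cons_eq_append_iff]
    | cons d p =>
      simp only [List.tail_cons, List.zip_cons_cons, List.mem_cons, Prod.mk.injEq] at ih ⊢
      rw [ih]
      constructor
      · rintro (⟨rfl, rfl⟩ | ⟨l, r, e⟩)
        · exact ⟨[], p, rfl⟩
        · exact ⟨c :: l, r, by rw [e]; rfl⟩
      · rintro ⟨l, r, e⟩
        cases l with
        | nil =>
          simp only [List.nil_append, List.cons.injEq] at e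
          exact .inl ⟨e.1.symm, e.2.1.symm⟩
        | cons x l =>
          simp only [List.cons_append, List.cons.injEq] at e
          exact .inr ⟨l, r, e.2⟩

theorem isChain_of_edges {G : SimpleGraph V} {p : List V}
    (h : ∀ e ∈ edges p, e ∈ G.edgeSet) : p.IsChain G.Adj := by
  induction p with
  | nil => simp
  | cons c p ih =>
    cases p with
    | nil => simp
    | cons d p =>
      simp only [edges, Multiset.mem_cons, forall_eq_or_imp, SimpleGraph.mem_edgeSet] at h
      exact List.isChain_cons_cons.2 ⟨h.1, ih h.2⟩

theorem MemRev.reverse {L : Multiset (List V)} {p : List V} (h : MemRev L p) :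
    MemRev L p.reverse := by
  unfold MemRev at *; simpa using h.symm

/-- A path of a family can be split off in either orientation. -/
theorem IsDecomp.split {L : Multiset (List V)} {E : Multiset (Sym2 V)} {D : Multiset V}
    (h : IsDecomp L E D) {p : List V} (hp : MemRev L p) :
    ∃ L', IsDecomp (p ::ₘ L') E D ∧
      ∀ q, MemRev L q → q = p ∨ q = p.reverse ∨ MemRev L' q := by
  rcases hp with hp | hp
  all_goals
    obtain ⟨L', rfl⟩ := Multiset.exists_cons_of_mem hp
    refine ⟨L', ?_, ?_⟩
  · exact h
  · rintro q (hq | hq) <;> rw [Multiset.mem_cons] at hq <;> rcases hq with hq | hq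
    · exact .inl hq
    · exact .inr (.inr (.inl hq))
    · exact .inr (.inl (by simp [← hq]))
    · exact .inr (.inr (.inr hq))
  · simpa [IsDecomp, edges_reverse, ends_reverse] using h
  · rintro q (hq | hq) <;> rw [Multiset.mem_cons] at hq <;> rcases hq with hq | hq
    · exact .inr (.inl hq)
    · exact .inr (.inr (.inl hq))
    · exact .inl (by simpa using hq)
    · exact .inr (.inr (.inr hq))

theorem MemRev.edges_le {L : Multiset (List V)} {p : List V} (h : MemRev L p) :
    edges p ≤ (L.map edges).sum := by
  rcases h with h | h
  · exact Multiset.le_sum_of_mem (Multiset.mem_map_of_mem _ h)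
  · rw [← edges_reverse]
    exact Multiset.le_sum_of_mem (Multiset.mem_map_of_mem _ h)

theorem MemRev.ends_le {L : Multiset (List V)} {p : List V} (h : MemRev L p) :
    ends p ≤ (L.map ends).sum := by
  rcases h with h | h
  · exact Multiset.le_sum_of_mem (Multiset.mem_map_of_mem _ h)
  · rw [← ends_reverse]
    exact Multiset.le_sum_of_mem (Multiset.mem_map_of_mem _ h)

theorem IsDecomp.nodup {L : Multiset (List V)} {E : Multiset (Sym2 V)} {D : Multiset V}
    (h : IsDecomp L E D) {p : List V} (hp : MemRev L p) : p.Nodup := by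
  rcases hp with hp | hp
  · exact h.1 _ hp
  · exact List.nodup_reverse.1 (h.1 _ hp)

theorem IsDecomp.exists_head {L : Multiset (List V)} {E : Multiset (Sym2 V)} {D : Multiset V}
    (h : IsDecomp L E D) {v : V} (hv : v ∈ D) : ∃ p, MemRev L p ∧ p.head? = some v := by
  rw [← h.2.2] at hv
  obtain ⟨p, hp, hv⟩ := Multiset.mem_bind.1 hv
  rcases mem_ends.1 hv with hv | hv
  · exact ⟨p, .inl hp, hv⟩
  · exact ⟨p.reverse, .inr (by simpa using hp), hv⟩

/-- A vertex `v` is an end of a path that either avoids `b` or enters `b`, coming from `v`,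
through a vertex outside `S`. -/
def HasFreshEnd (L : Multiset (List V)) (b : V) (S : Finset V) (v : V) : Prop :=
  ∃ p, MemRev L p ∧ p.head? = some v ∧ (b ∉ p ∨ ∃ l u r, p = l ++ u :: b :: r ∧ u ∉ S)

/-- The rerouting argument: `S` is the set of neighbours of `b` whose edge has been rerouted,
and `x ∈ S` is the one whose edge to `b` is currently missing. -/
theorem exists_isDecomp_of_hasFreshEnd [Fintype V] (b : V) (S : Finset V) (x : V)
    (L : Multiset (List V)) (E : Multiset (Sym2 V)) (D : Multiset V)
    (hL : IsDecomp L E (x ::ₘ D)) (hE : (s(x, b) ::ₘ E).Nodup) (hxS : x ∈ S)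
    (hx : HasFreshEnd L b S x) (hfresh : ∀ v ∉ S, s(v, b) ∈ E → HasFreshEnd L b S v) :
    ∃ L', IsDecomp L' (s(x, b) ::ₘ E) (b ::ₘ D) := by
  classical
  induction hn : Sᶜ.card using Nat.strong_induction_on generalizing S x L E with
  | _ n ih =>
  obtain ⟨p, hp, hhead, hb | ⟨l, u, r, rfl, huS⟩⟩ := hx
  · obtain ⟨L', hL', -⟩ := hL.split hp
    obtain ⟨h1, h2, h3⟩ := hL'
    obtain ⟨t, rfl⟩ : ∃ t, p = x :: t := by
      cases p with
      | nil => simp at hhead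
      | cons y t => exact ⟨t, by simpa using hhead⟩
    refine ⟨(b :: x :: t) ::ₘ L', ?_, ?_, ?_⟩
    · intro q hq
      rcases Multiset.mem_cons.1 hq with rfl | hq
      · exact List.nodup_cons.2 ⟨hb, h1 _ (by simp)⟩
      · exact h1 _ (by simp [hq])
    · rw [← h2]
      simp [edges, Sym2.eq_swap]
    · simp only [Multiset.map_cons, Multiset.sum_cons, ends, List.head?_cons,
        Option.toList_some, List.getLast?_cons_cons, Multiset.coe_singleton,
        Multiset.singleton_add, Multiset.cons_add] at h3 ⊢
      rw [Multiset.cons_inj_right] at h3 ⊢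
      exact h3
  · have hpn := hL.nodup hp
    obtain ⟨L', hL', hmem⟩ := hL.split hp
    obtain ⟨h1, h2, h3⟩ := hL'
    have hub : u ≠ b := by
      rintro rfl
      simp [List.nodup_append] at hpn
    simp only [Multiset.map_cons, Multiset.sum_cons, edges_append_cons, Multiset.cons_add] at h2
    set E₀ := edges (l ++ [u]) + edges (b :: r) + (L'.map edges).sum with hE₀
    subst h2
    rw [Multiset.cons_swap] at hE ⊢
    obtain ⟨t, ht⟩ : ∃ t, l ++ [u] = x :: t := by
      cases l with
      | nil => exact ⟨[], by simpa using hhead⟩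
      | cons y t => exact ⟨t ++ [u], by simpa using hhead⟩
    have hrev : u :: l.reverse = t.reverse ++ [x] := by
      simpa using congrArg List.reverse ht
    have hu0 : s(u, b) ∉ E₀ := fun h =>
      (Multiset.nodup_cons.1 hE).1 (Multiset.mem_cons_of_mem h)
    have hfresh' : ∀ v ∉ S, s(v, b) ∈ s(u, b) ::ₘ E₀ →
        HasFreshEnd ((u :: l.reverse ++ b :: r) ::ₘ L') b (insert u S) v := by
      intro v hvS hvE
      obtain ⟨q, hq, hqh, hqb⟩ := hfresh v hvS hvE
      rcases hmem q hq with rfl | rfl | hq'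
      · exact absurd (by simpa [hqh] using hhead : v = x) (fun h => hvS (h ▸ hxS))
      · rcases hqb with hqb | ⟨l', u', r', he, hu'⟩
        · simp at hqb
        · have hr : r.reverse = l' ++ [u'] := by
            have hbr : b ∉ r.reverse := by
              simp only [List.nodup_append, List.nodup_cons] at hpn
              simpa using hpn.2.1.2.1
            have hbl : b ∉ l' ++ [u'] := by
              have := List.nodup_reverse.2 hpn
              rw [he, List.nodup_append] at this
              grind
            have he' : r.reverse ++ b :: (u :: l.reverse) = (l' ++ [u']) ++ b :: r' := by
              simpa using he
            exact ((List.append_cons_inj_of_notMem hbr (by grind)).1 he').1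
          have huu : u' ≠ u := by
            rintro rfl
            have : u' ∈ r := by simpa using (by rw [hr]; simp : u' ∈ r.reverse)
            grind
          refine ⟨(u :: l.reverse ++ b :: r).reverse, .inr (by simp), ?_, .inr
            ⟨l', u', l ++ [u], ?_, by simp [huu, hu']⟩⟩
          · rw [← hqh]
            simp [hr]
          · simp [hr]
      · refine ⟨q, hq'.imp (Multiset.mem_cons_of_mem) (Multiset.mem_cons_of_mem), hqh,
          hqb.imp_right ?_⟩
        rintro ⟨l', u', r', rfl, hu'⟩
        refine ⟨l', u', r', rfl, ?_⟩
        rw [Finset.mem_insert, not_or]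
        refine ⟨?_, hu'⟩
        rintro rfl
        exact hu0 (Multiset.mem_add.2 (.inr
          (Multiset.mem_of_le hq'.edges_le (mem_edges_append _ _ _ _))))
    refine ih _ ?_ (insert u S) u ((u :: l.reverse ++ b :: r) ::ₘ L') (s(x, b) ::ₘ E₀)
      ⟨?_, ?_, ?_⟩ hE (by simp) (hfresh' u huS (by simp)) ?_ rfl
    · rw [← hn]
      exact Finset.card_lt_card (Finset.compl_ssubset_compl.2 (Finset.ssubset_insert huS))
    · intro q hq
      rcases Multiset.mem_cons.1 hq with rfl | hq
      · refine (List.Perm.nodup_iff ?_).1 hpn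
        rw [show l ++ u :: b :: r = (l ++ [u]) ++ b :: r by simp]
        refine List.Perm.append_right _ ?_
        simpa using (List.reverse_perm (l ++ [u])).symm
      · exact h1 _ (by simp [hq])
    · have hrw : u :: l.reverse ++ b :: r = t.reverse ++ x :: b :: r := by
        rw [hrev]; simp
      rw [Multiset.map_cons, Multiset.sum_cons, hrw, edges_append_cons, ← hrev, hE₀,
        ← edges_reverse (l ++ [u])]
      simp
    · have hrw : l ++ u :: b :: r = x :: t ++ b :: r := by
        rw [← ht]; simp
      rw [hrw] at h3
      simp only [Multiset.map_cons, Multiset.sum_cons, ends, List.head?_cons, List.cons_append,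
        Option.toList_some, Multiset.coe_singleton, Multiset.singleton_add,
        Multiset.cons_add] at h3 ⊢
      rw [Multiset.cons_inj_right] at h3 ⊢
      rw [← h3]
      simp only [← List.cons_append, List.getLast?_append_cons]
    · intro v hv hvE
      rw [Finset.mem_insert, not_or] at hv
      refine hfresh' v hv.2 ?_
      rcases Multiset.mem_cons.1 hvE with h | h
      · rcases Sym2.eq_iff.1 h with ⟨rfl, -⟩ | ⟨rfl, rfl⟩
        · exact absurd hxS hv.2
        · exact absurd hxS hv.2
      · exact Multiset.mem_cons_of_mem h

/-- The edge multiset `E` decomposes into paths with end multiset `D`. -/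
def HasDecomp (E : Multiset (Sym2 V)) (D : Multiset V) : Prop := ∃ L, IsDecomp L E D

/-- If every neighbour of `b` is an end of some path, then a missing edge `xb` can be added,
moving one path end from `x` to `b`. -/
theorem HasDecomp.insert_edge [Fintype V] {E : Multiset (Sym2 V)} {D : Multiset V} {x b : V}
    (h : HasDecomp E (x ::ₘ D)) (hE : (s(x, b) ::ₘ E).Nodup) (hxb : x ≠ b)
    (hD : ∀ v, s(v, b) ∈ E → v ≠ b ∧ v ∈ x ::ₘ D) :
    HasDecomp (s(x, b) ::ₘ E) (b ::ₘ D) := by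
  classical
  obtain ⟨L, hL⟩ := h
  have key : ∀ v, v ≠ b → v ∈ x ::ₘ D → HasFreshEnd L b {x} v := by
    intro v hvb hv
    obtain ⟨q, hq, hqv⟩ := hL.exists_head hv
    refine ⟨q, hq, hqv, ?_⟩
    by_cases hb : b ∈ q
    · right
      obtain ⟨l, r, rfl⟩ := List.append_of_mem hb
      rcases List.eq_nil_or_concat l with rfl | ⟨l, u, rfl⟩
      · simp only [List.nil_append, List.head?_cons, Option.some.injEq] at hqv
        exact absurd hqv.symm hvb
      · have hs : l ++ [u] ++ b :: r = l ++ u :: b :: r := by simp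
        simp only [List.concat_eq_append, hs] at hq ⊢
        refine ⟨l, u, r, rfl, ?_⟩
        rw [Finset.mem_singleton]
        rintro rfl
        refine (Multiset.nodup_cons.1 hE).1 ?_
        rw [← hL.2.1]
        exact Multiset.mem_of_le hq.edges_le (mem_edges_append _ _ _ _)
    · exact .inl hb
  exact exists_isDecomp_of_hasFreshEnd b {x} x L E D hL hE (by simp)
    (key x hxb (by simp)) fun v _ hv => key v (hD v hv).1 (hD v hv).2

theorem HasDecomp.cons_edge {E : Multiset (Sym2 V)} {D : Multiset V} {a b : V}
    (h : HasDecomp E D) (hab : a ≠ b) : HasDecomp (s(a, b) ::ₘ E) (a ::ₘ b ::ₘ D) := by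
  obtain ⟨L, h1, rfl, rfl⟩ := h
  refine ⟨[a, b] ::ₘ L, ?_, by simp [edges], by simp [ends]⟩
  intro q hq
  rcases Multiset.mem_cons.1 hq with rfl | hq
  · simpa using hab
  · exact h1 _ hq

section Odd

variable [DecidableEq V]

/-- The degree of `v` in the graph with edge set `F`. -/
def deg (F : Finset (Sym2 V)) (v : V) : ℕ := (F.filter (v ∈ ·)).card

theorem deg_erase {F : Finset (Sym2 V)} {x y : V} (h : s(x, y) ∈ F) (v : V) :
    deg F v = deg (F.erase s(x, y)) v + if v = x ∨ v = y then 1 else 0 := by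
  conv_lhs => rw [← Finset.insert_erase h]
  unfold deg
  rw [Finset.filter_insert]
  split_ifs with h1 h2 h2
  · rw [Finset.card_insert_of_notMem (by simp)]
  · exact absurd (Sym2.mem_iff.1 h1) h2
  · exact absurd (Sym2.mem_iff.2 h2) h1
  · rfl

theorem deg_ne_zero {F : Finset (Sym2 V)} {x y : V} (h : s(x, y) ∈ F) : deg F x ≠ 0 := by
  rw [deg_erase h]; simp

theorem exists_neighbor {F : Finset (Sym2 V)} {a : V} (h : deg F a ≠ 0) : ∃ x, s(x, a) ∈ F := by
  obtain ⟨e, he⟩ := Finset.card_pos.1 (Nat.pos_of_ne_zero h)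
  rw [Finset.mem_filter] at he
  obtain ⟨x, rfl⟩ := he.2
  exact ⟨x, by rw [Sym2.eq_swap]; exact he.1⟩

theorem cons_erase_val {F : Finset (Sym2 V)} {e : Sym2 V} (h : e ∈ F) :
    e ::ₘ (F.erase e).val = F.val := by
  rw [Finset.erase_val, Multiset.cons_erase h]

variable [Fintype V]

/-- The vertices of odd degree. -/
def odds (F : Finset (Sym2 V)) : Multiset V := (Finset.univ.filter fun v => Odd (deg F v)).val

theorem mem_odds {F : Finset (Sym2 V)} {v : V} : v ∈ odds F ↔ Odd (deg F v) := by
  simp [odds]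

theorem count_odds (F : Finset (Sym2 V)) (v : V) : (odds F).count v = deg F v % 2 := by
  have hn : (odds F).Nodup := Finset.nodup _
  rw [Multiset.count_eq_of_nodup hn, if_congr mem_odds rfl rfl]
  split_ifs with h
  · exact (Nat.odd_iff.1 h).symm
  · exact (Nat.even_iff.1 (Nat.not_odd_iff_even.1 h)).symm

/-- `insert_edge` for the edge sets of loopless graphs. -/
theorem HasDecomp.of_erase {F : Finset (Sym2 V)} {D : Multiset V} {x b : V}
    (hF : ∀ v, s(v, v) ∉ F) (hxb : s(x, b) ∈ F)
    (h : HasDecomp (F.erase s(x, b)).val (x ::ₘ D))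
    (hD : ∀ v, v ≠ x → s(v, b) ∈ F → v ∈ x ::ₘ D) :
    HasDecomp F.val (b ::ₘ D) := by
  rw [← cons_erase_val hxb]
  refine h.insert_edge ?_ ?_ ?_
  · rw [cons_erase_val hxb]; exact F.nodup
  · rintro rfl; exact hF _ hxb
  · intro v hv
    rw [Finset.mem_val, Finset.mem_erase] at hv
    refine ⟨?_, hD v ?_ hv.2⟩
    · rintro rfl; exact hF _ hv.2
    · rintro rfl; exact hv.1 rfl

/-- Up to isolated vertices, a graph with all degrees odd decomposes into paths such that every
vertex is the end of exactly one path. -/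
def OddDecomposable (F : Finset (Sym2 V)) : Prop :=
  (∀ v, deg F v % 2 = 1 ∨ deg F v = 0) → HasDecomp F.val (odds F)

/-- The analogue of `OddDecomposable` for graphs with two nonadjacent even vertices. -/
def EvenPairDecomposable (F : Finset (Sym2 V)) : Prop :=
  ∀ a b, a ≠ b → s(a, b) ∉ F → deg F a % 2 = 0 → deg F b % 2 = 0 →
    (∀ v, v ≠ a → v ≠ b → deg F v % 2 = 1 ∨ deg F v = 0) →
    HasDecomp F.val (odds F) ∨ HasDecomp F.val (a ::ₘ a ::ₘ odds F) ∨
      HasDecomp F.val (b ::ₘ b ::ₘ odds F)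

theorem oddDecomposable_of_erase {F : Finset (Sym2 V)} (hF : ∀ v, s(v, v) ∉ F)
    (ih : ∀ e ∈ F, EvenPairDecomposable (F.erase e)) : OddDecomposable F := by
  intro hodd
  rcases F.eq_empty_or_nonempty with rfl | ⟨e, he⟩
  · refine ⟨0, by simp, by simp, ?_⟩
    simp [odds, deg]
  induction e with
  | _ a b =>
  have hab : a ≠ b := by rintro rfl; exact hF _ he
  have hd := deg_erase he
  have hodds : odds F = a ::ₘ b ::ₘ odds (F.erase s(a, b)) := by
    ext v
    have := hd v
    have := hodd v
    simp only [Multiset.count_cons, count_odds]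
    grind
  have hnbr : ∀ v w, s(v, w) ∈ F → v ≠ a → v ≠ b → v ∈ odds (F.erase s(a, b)) := by
    intro v w hvw hva hvb
    have := hd v
    have := hodd v
    have := deg_ne_zero hvw
    rw [mem_odds, Nat.odd_iff]
    grind
  rcases ih _ he a b hab (by simp) (by grind [deg_ne_zero he])
    (by grind [deg_ne_zero (Sym2.eq_swap ▸ he)]) (by grind) with h | h | h
  · rw [hodds, ← cons_erase_val he]
    exact h.cons_edge hab
  · rw [hodds, Multiset.cons_swap]
    refine h.of_erase hF he fun v hva hv => ?_
    have : v ≠ b := by rintro rfl; exact hF _ hv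
    simp [hnbr v b hv hva this]
  · rw [hodds]
    rw [Sym2.eq_swap] at he h hnbr ⊢
    refine HasDecomp.of_erase hF he h fun v hvb hv => ?_
    have : v ≠ a := by rintro rfl; exact hF _ hv
    simp [hnbr v a hv this hvb]

theorem evenPair_of_neighbor {F : Finset (Sym2 V)} (hF : ∀ v, s(v, v) ∉ F)
    (ih : ∀ F' ⊂ F, OddDecomposable F' ∧ EvenPairDecomposable F')
    {a b x : V} (hab : a ≠ b) (habF : s(a, b) ∉ F) (ha : deg F a % 2 = 0)
    (hb : deg F b % 2 = 0) (hodd : ∀ v, v ≠ a → v ≠ b → deg F v % 2 = 1 ∨ deg F v = 0)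
    (hx : s(x, a) ∈ F) :
    HasDecomp F.val (odds F) ∨ HasDecomp F.val (a ::ₘ a ::ₘ odds F) ∨
      HasDecomp F.val (b ::ₘ b ::ₘ odds F) := by
  have hxa : x ≠ a := by rintro rfl; exact hF _ hx
  have hxb : x ≠ b := by rintro rfl; rw [Sym2.eq_swap] at hx; exact habF hx
  have hx1 : deg F x % 2 = 1 := (hodd x hxa hxb).resolve_right (deg_ne_zero hx)
  have hd := deg_erase hx
  have hss : F.erase s(x, a) ⊂ F := Finset.erase_ssubset hx
  have hnbr : ∀ v w, s(v, w) ∈ F → v ≠ a → v ≠ b → v ∈ odds F := by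
    intro v w hvw hva hvb
    rw [mem_odds, Nat.odd_iff]
    exact (hodd v hva hvb).resolve_right (deg_ne_zero hvw)
  have hodds : a ::ₘ odds F = x ::ₘ odds (F.erase s(x, a)) := by
    ext v
    have := hd v
    simp only [Multiset.count_cons, count_odds]
    grind
  have hx' : s(a, x) ∈ F := by rwa [Sym2.eq_swap] at hx
  by_cases hxbF : s(x, b) ∈ F
  · have hxb' : s(x, b) ∈ F.erase s(x, a) := by
      refine Finset.mem_erase.2 ⟨fun h => hab ?_, hxbF⟩
      exact (Sym2.congr_right.1 h).symm
    have hd2 := deg_erase hxb'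
    set F₂ := (F.erase s(x, a)).erase s(x, b) with hF₂
    have hodds2 : odds F₂ = a ::ₘ b ::ₘ odds F := by
      ext v
      have := hd v
      have := hd2 v
      simp only [Multiset.count_cons, count_odds]
      grind
    have hF₂F : F₂ ⊂ F := (Finset.erase_subset _ _).trans_ssubset hss
    have h := (ih F₂ hF₂F).1 (by
      intro v
      have := hd v
      have := hd2 v
      have := hodd v
      have := hodd x hxa hxb
      have := deg_ne_zero hxb'
      grind)
    rw [hodds2] at h
    have hmem : s(a, x) ∈ F.erase s(x, b) := by
      refine Finset.mem_erase.2 ⟨fun h => hab ?_, hx'⟩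
      rw [Sym2.eq_swap] at h
      exact Sym2.congr_right.1 h
    have hF₂' : F₂ = (F.erase s(x, b)).erase s(a, x) := by
      rw [hF₂, Finset.erase_right_comm, Sym2.eq_swap (a := x) (b := a)]
    rw [hF₂'] at h
    have h1 : HasDecomp (F.erase s(x, b)).val (x ::ₘ b ::ₘ odds F) := by
      refine HasDecomp.of_erase (fun v hv => hF v (Finset.mem_of_mem_erase hv)) hmem h ?_
      intro v hva hv
      by_cases hvb : v = b
      · simp [hvb]
      · simp [hnbr v x (Finset.mem_of_mem_erase hv) hva hvb]
    refine .inr (.inr (HasDecomp.of_erase hF hxbF h1 ?_))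
    intro v hvx hv
    have hvb : v ≠ b := by rintro rfl; exact hF _ hv
    have hva : v ≠ a := by rintro rfl; exact habF hv
    simp [hnbr v b hv hva hvb]
  · have hI := (ih _ hss).2 x b hxb (fun h => hxbF (Finset.mem_of_mem_erase h)) (by grind)
      (by grind) (by grind)
    have hxmem : x ∈ odds F := by rw [mem_odds, Nat.odd_iff]; exact hx1
    obtain ⟨D, hD⟩ := Multiset.exists_cons_of_mem hxmem
    have hD' : odds (F.erase s(x, a)) = a ::ₘ D := by
      rw [hD, Multiset.cons_swap] at hodds
      exact ((Multiset.cons_inj_right _).1 hodds).symm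
    have hnx : ∀ v, v ≠ a → s(v, x) ∈ F → v ∈ D := by
      intro v hva hv
      have hvx : v ≠ x := by rintro rfl; exact hF _ hv
      have hvb : v ≠ b := by
        rintro rfl; rw [Sym2.eq_swap] at hv; exact hxbF hv
      have := hnbr v x hv hva hvb
      rw [hD] at this
      exact (Multiset.mem_cons.1 this).resolve_left hvx
    have hswap : F.erase s(x, a) = F.erase s(a, x) := by rw [Sym2.eq_swap]
    rw [hD'] at hI
    rcases hI with h | h | h
    · rw [hswap] at h
      left
      rw [hD]
      exact HasDecomp.of_erase hF hx' h fun v hva hv =>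
        Multiset.mem_cons_of_mem (hnx v hva hv)
    · right; left
      rw [hD, Multiset.cons_swap a x D]
      rw [Multiset.cons_swap x a D] at h
      rw [Multiset.cons_swap x a D]
      refine HasDecomp.of_erase hF hx h fun v hvx hv => ?_
      have hva : v ≠ a := by rintro rfl; exact hF _ hv
      have hvb : v ≠ b := by
        rintro rfl; rw [Sym2.eq_swap] at hv; exact habF hv
      have := hnbr v a hv hva hvb
      rw [hD] at this
      simp only [Multiset.mem_cons] at this ⊢
      tauto
    · right; right
      rw [hswap] at h
      have h' : HasDecomp (F.erase s(a, x)).val (a ::ₘ b ::ₘ b ::ₘ D) := by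
        rwa [Multiset.cons_swap b a D, Multiset.cons_swap b a] at h
      have := HasDecomp.of_erase hF hx' h' fun v hva hv => by simp [hnx v hva hv]
      rwa [hD, Multiset.cons_swap b x D, Multiset.cons_swap b x]

theorem decomposable (F : Finset (Sym2 V)) (hF : ∀ v, s(v, v) ∉ F) :
    OddDecomposable F ∧ EvenPairDecomposable F := by
  induction F using Finset.strongInduction with
  | H F ih =>
  replace ih : ∀ F' ⊂ F, OddDecomposable F' ∧ EvenPairDecomposable F' :=
    fun F' h => ih F' h fun v hv => hF v (h.subset hv)
  have h0 := oddDecomposable_of_erase hF fun e he => (ih _ (Finset.erase_ssubset he)).2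
  refine ⟨h0, fun a b hab habF ha hb hodd => ?_⟩
  by_cases ha0 : deg F a = 0
  · by_cases hb0 : deg F b = 0
    · exact .inl (h0 fun v => by
        by_cases hva : v = a
        · exact .inr (hva ▸ ha0)
        · by_cases hvb : v = b
          · exact .inr (hvb ▸ hb0)
          · exact hodd v hva hvb)
    · obtain ⟨x, hx⟩ := exists_neighbor hb0
      have := evenPair_of_neighbor hF ih hab.symm (by rwa [Sym2.eq_swap]) hb ha
        (fun v h1 h2 => hodd v h2 h1) hx
      tauto
  · obtain ⟨x, hx⟩ := exists_neighbor ha0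
    exact evenPair_of_neighbor hF ih hab habF ha hb hodd hx

end Odd

theorem IsDecomp.eq_of_head {L : Multiset (List V)} {E : Multiset (Sym2 V)} {D : Multiset V}
    (hL : IsDecomp L E D) (hD : D.Nodup) {p q : List V} {v : V} (hp : MemRev L p)
    (hq : MemRev L q) (hpv : p.head? = some v) (hqv : q.head? = some v) : p = q := by
  obtain ⟨L', hL', hmem⟩ := hL.split hp
  have hD' := hL'.2.2
  rw [Multiset.map_cons, Multiset.sum_cons] at hD'
  rw [← hD', Multiset.nodup_add] at hD
  rcases hmem q hq with rfl | rfl | h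
  · rfl
  · rw [List.head?_reverse] at hqv
    have := hD.1
    rw [ends, hpv, hqv] at this
    simp at this
  · exact absurd (Multiset.mem_of_le h.ends_le (mem_ends.2 (.inl hqv)))
      (Multiset.disjoint_left.1 hD.2.2 (mem_ends.2 (.inl hpv)))

theorem IsDecomp.eq_of_arc {L : Multiset (List V)} {E : Multiset (Sym2 V)} {D : Multiset V}
    (hL : IsDecomp L E D) (hE : E.Nodup) {p q : List V} {a b : V} (hp : MemRev L p)
    (hq : MemRev L q) (hpa : ∃ l r, p = l ++ a :: b :: r)
    (hqa : ∃ l r, q = l ++ a :: b :: r) : p = q := by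
  obtain ⟨L', hL', hmem⟩ := hL.split hp
  have hE' := hL'.2.1
  rw [Multiset.map_cons, Multiset.sum_cons] at hE'
  rw [← hE', Multiset.nodup_add] at hE
  have hpn := hL.nodup hp
  obtain ⟨l, r, rfl⟩ := hpa
  obtain ⟨l', r', hq'⟩ := hqa
  rcases hmem q hq with h | h | h
  · exact h.symm
  · exfalso
    rw [h] at hq'
    have hb : l ++ a :: b :: r = r'.reverse ++ b :: a :: l'.reverse := by
      simpa using congrArg List.reverse hq'
    have hn2 := hb ▸ hpn
    have h1 : l ++ a :: (b :: r) = (r'.reverse ++ [b]) ++ a :: l'.reverse := by simpa using hb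
    have h2 := (List.append_cons_inj_of_notMem (by grind) (by grind)).1 h1
    have : b ∈ l := by rw [h2.1]; simp
    grind
  · subst hq'
    exact absurd (Multiset.mem_of_le h.edges_le (mem_edges_append _ _ _ _))
      (Multiset.disjoint_left.1 hE.2.2 (mem_edges_append _ _ _ _))

theorem hasOPPDC_of_isDecomp {G : SimpleGraph V} {L : Multiset (List V)}
    {E : Multiset (Sym2 V)} {D : Multiset V} (hL : IsDecomp L E D) (hE : E.Nodup)
    (hEG : ∀ e, e ∈ E ↔ e ∈ G.edgeSet) (hD : D.Nodup) (hDV : ∀ v, v ∈ D) : HasOPPDC G := by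
  choose P hP hhead using fun v => hL.exists_head (hDV v)
  have huniq : ∀ {p v}, MemRev L p → p.head? = some v → P v = p := fun hp hv =>
    hL.eq_of_head hD (hP _) hp (hhead _) hv
  have hinj : ∀ {v w}, P v = P w → v = w := by
    intro v w h
    have := hhead v
    rw [h, hhead w] at this
    exact (Option.some.inj this).symm
  refine ⟨P, fun v => ⟨?_, hL.nodup (hP v), ?_, hhead v⟩, fun w => ?_, fun a b hab => ?_⟩
  · intro h
    have := hhead v
    simp [h] at this
  · refine isChain_of_edges fun e he => (hEG e).1 ?_
    rw [← hL.2.1]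
    exact Multiset.mem_of_le (hP v).edges_le he
  · obtain ⟨v, hv⟩ : ∃ v, (P w).reverse.head? = some v := by
      have hw := hhead w
      cases h : (P w).reverse with
      | nil => simp [List.reverse_eq_nil_iff.1 h] at hw
      | cons v t => exact ⟨v, rfl⟩
    have hPv := huniq (hP w).reverse hv
    refine ⟨v, by simp [hPv, hhead], fun v' hv' => hinj ?_⟩
    have := huniq (hP v').reverse (by rw [List.head?_reverse, hv'])
    rw [hPv, this, List.reverse_reverse]
  · have he : s(a, b) ∈ E := (hEG _).2 hab
    obtain ⟨p, hp, hpa⟩ : ∃ p, MemRev L p ∧ ∃ l r, p = l ++ a :: b :: r := by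
      rw [← hL.2.1] at he
      obtain ⟨p, hp, he⟩ := Multiset.mem_bind.1 he
      rcases exists_split_of_mem_edges he with h | h
      · exact ⟨p, .inl hp, h⟩
      · exact ⟨p.reverse, .inr (by simpa using hp), h⟩
    obtain ⟨v, hv⟩ : ∃ v, p.head? = some v := by
      cases p with
      | nil => simp at hpa
      | cons v t => exact ⟨v, rfl⟩
    have hPv := huniq hp hv
    refine ⟨v, ?_, fun v' hv' => hinj ?_⟩
    · simp only [hPv]
      exact mem_zip_tail.2 hpa
    · rw [hPv]
      exact hL.eq_of_arc hE (hP v') hp (mem_zip_tail.1 hv') hpa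

end PathDecomposition

open PathDecomposition in
/-- if every vertex of a finite graph `G ≠ K₃` has odd degree,
then `G` has an OPPDC. -/
theorem odd_degrees_hasOPPDC {V : Type*} [Fintype V] (G : SimpleGraph V)
    [DecidableRel G.Adj]
    (hK3 : ¬ Nonempty (G ≃g (⊤ : SimpleGraph (Fin 3))))
    (hodd : ∀ v : V, Odd (G.degree v)) :
    HasOPPDC G := by
  classical
  have hdeg : ∀ v, deg G.edgeFinset v = G.degree v := by
    intro v
    rw [← G.card_incidenceFinset_eq_degree, G.incidenceFinset_eq_filter, deg]
  obtain ⟨L, hL⟩ := (decomposable G.edgeFinset (by simp)).1 fun v => by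
    rw [hdeg]; exact .inl (Nat.odd_iff.1 (hodd v))
  exact hasOPPDC_of_isDecomp hL G.edgeFinset.nodup (by simp) (Finset.nodup _)
    fun v => mem_odds.2 (by rw [hdeg]; exact hodd v)
end

section
/- Let v be a vertex of degree 3 in G with neighborhood N(v) = {x, y, z}, and suppose xz is not an edge of G. If the graph (G \ v) ∪ {xz} has an oriented perfect path double cover, then G has an oriented perfect path double cover. -/
namespace PathCover

variable {V : Type*}

/-- The multiset of arcs traversed by a list of vertices. -/
def arcs (l : List V) : Multiset (V × V) := (l.zip l.tail : List (V × V))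

lemma arcs_nil : arcs ([] : List V) = 0 := rfl

lemma arcs_singleton (a : V) : arcs [a] = 0 := rfl

lemma arcs_cons_cons (a b : V) (l : List V) : arcs (a :: b :: l) = {(a, b)} + arcs (b :: l) := rfl

lemma arcs_append (s : List V) (a : V) (t : List V) :
    arcs (s ++ a :: t) = arcs (s ++ [a]) + arcs (a :: t) := by
  induction s with
  | nil => simp [arcs_singleton]
  | cons b s ih =>
    cases s with
    | nil => simp [arcs_cons_cons, arcs_singleton]
    | cons c s =>
      simp only [List.cons_append, arcs_cons_cons] at ih ⊢
      rw [ih, add_assoc]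

lemma arcs_append_cons_cons (s : List V) (a b : V) (t : List V) :
    arcs (s ++ a :: b :: t) = arcs (s ++ [a]) + {(a, b)} + arcs (b :: t) := by
  rw [arcs_append, arcs_cons_cons, add_assoc]

lemma arcs_cons_append_cons_cons (c : V) (s : List V) (a b : V) (t : List V) :
    arcs (c :: (s ++ a :: b :: t)) = arcs (c :: (s ++ [a])) + {(a, b)} + arcs (b :: t) :=
  arcs_append_cons_cons (c :: s) a b t

lemma nodup_arcs {l : List V} (h : l.Nodup) : (arcs l).Nodup := by
  refine Multiset.coe_nodup.2 (List.Nodup.of_map Prod.snd ?_)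
  rw [List.map_snd_zip (by simp)]
  exact h.tail

lemma isChain_iff_arcs {R : V → V → Prop} {l : List V} :
    l.IsChain R ↔ ∀ a b, (a, b) ∈ arcs l → R a b := by
  induction l with
  | nil => simp [arcs_nil]
  | cons c l ih =>
    cases l with
    | nil => simp [arcs_singleton]
    | cons d l =>
      rw [List.isChain_cons_cons, ih]
      simp only [arcs_cons_cons, Multiset.mem_add, Multiset.mem_singleton]
      grind

lemma arcs_map {W : Type*} (f : W → V) (l : List W) :
    arcs (l.map f) = (arcs l).map (Prod.map f f) := by
  simp [arcs, List.zip_map, ← List.map_tail]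

lemma exists_eq_append_of_mem_arcs {l : List V} {a b : V} (h : (a, b) ∈ arcs l) :
    ∃ s t, l = s ++ a :: b :: t := by
  induction l with
  | nil => simp [arcs_nil] at h
  | cons c l ih =>
    cases l with
    | nil => simp [arcs_singleton] at h
    | cons d l =>
      simp only [arcs_cons_cons, Multiset.mem_add, Multiset.mem_singleton, Prod.mk.injEq] at h
      rcases h with ⟨rfl, rfl⟩ | h
      · exact ⟨[], l, rfl⟩
      · obtain ⟨s, t, hst⟩ := ih h
        exact ⟨c :: s, t, by rw [hst]; rfl⟩

lemma right_mem_of_mem_arcs {l : List V} {a b : V} (h : (a, b) ∈ arcs l) : b ∈ l := by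
  obtain ⟨s, t, rfl⟩ := exists_eq_append_of_mem_arcs h
  simp

lemma swap_notMem_arcs {l : List V} (hl : l.Nodup) {a b : V} (h : (a, b) ∈ arcs l) :
    (b, a) ∉ arcs l := by
  induction l with
  | nil => simp [arcs_nil]
  | cons c l ih =>
    cases l with
    | nil => simp [arcs_singleton]
    | cons d l =>
      intro h'
      have hc := (List.nodup_cons.1 hl).1
      simp only [arcs_cons_cons, Multiset.mem_add, Multiset.mem_singleton, Prod.mk.injEq] at h h'
      rcases h with ⟨rfl, rfl⟩ | h <;> rcases h' with ⟨h1, h2⟩ | h'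
      · exact hc (by rw [h2]; simp)
      · exact hc (right_mem_of_mem_arcs h')
      · subst h1 h2
        exact hc (right_mem_of_mem_arcs h)
      · exact ih (List.nodup_cons.1 hl).2 h h'

/-- A multiset of paths whose starts and whose ends run through `S` and whose arcs run
through `E`, with multiplicity. -/
structure IsCover (S : Multiset V) (E : Multiset (V × V)) (M : Multiset (List V)) : Prop where
  nodup : ∀ p ∈ M, p.Nodup
  starts : M.map List.head? = S.map some
  ends : M.map List.getLast? = S.map some
  sum_arcs : (M.map arcs).sum = E

variable {S : Multiset V} {E : Multiset (V × V)} {M : Multiset (List V)}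

lemma IsCover.exists_start (h : IsCover S E M) {a : V} (ha : a ∈ S) :
    ∃ l, (a :: l) ∈ M := by
  have : some a ∈ M.map List.head? := h.starts ▸ Multiset.mem_map_of_mem _ ha
  obtain ⟨p, hp, hpa⟩ := Multiset.mem_map.1 this
  obtain ⟨l, rfl⟩ := List.head?_eq_some_iff.1 hpa
  exact ⟨l, hp⟩

lemma IsCover.exists_end (h : IsCover S E M) {a : V} (ha : a ∈ S) :
    ∃ l, (l ++ [a]) ∈ M := by
  have : some a ∈ M.map List.getLast? := h.ends ▸ Multiset.mem_map_of_mem _ ha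
  obtain ⟨p, hp, hpa⟩ := Multiset.mem_map.1 this
  obtain ⟨l, rfl⟩ := List.getLast?_eq_some_iff.1 hpa
  exact ⟨l, hp⟩

lemma IsCover.exists_arc (h : IsCover S E M) {a b : V} (hab : (a, b) ∈ E) :
    ∃ s t, (s ++ a :: b :: t) ∈ M := by
  rw [← h.sum_arcs] at hab
  obtain ⟨p, hp, hpa⟩ := Multiset.mem_bind.1 hab
  obtain ⟨s, t, rfl⟩ := exists_eq_append_of_mem_arcs hpa
  exact ⟨s, t, hp⟩

/-- The arcs of the star at `v` with leaves `x`, `y`, `z`. -/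
def starArcs (v x y z : V) : Multiset (V × V) :=
  {(x, v)} + {(v, x)} + {(y, v)} + {(v, y)} + {(z, v)} + {(v, z)}

section reroute

variable {v x y z : V} {A₁ A₂ B₁ B₂ Q T : List V} {R : Multiset (List V)}

/-- Subdivide `xz` by `v`, and let the path ending at `y` continue to `v`. -/
lemma IsCover.reroute_end
    (h : IsCover S ({(x, z)} + {(z, x)} + E)
      ((A₁ ++ x :: z :: A₂) ::ₘ (B₁ ++ z :: x :: B₂) ::ₘ (Q ++ [y]) ::ₘ R))
    (hv : ∀ p ∈ (A₁ ++ x :: z :: A₂) ::ₘ (B₁ ++ z :: x :: B₂) ::ₘ (Q ++ [y]) ::ₘ R, v ∉ p) :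
    IsCover ({v} + S) (starArcs v x y z + E)
      ([v, y] ::ₘ (A₁ ++ x :: v :: z :: A₂) ::ₘ (B₁ ++ z :: v :: x :: B₂) ::ₘ
        (Q ++ [y, v]) ::ₘ R) := by
  obtain ⟨h1, h2, h3, h4⟩ := h
  refine ⟨?_, ?_, ?_, ?_⟩
  · simp only [Multiset.mem_cons, forall_eq_or_imp] at h1 hv ⊢
    refine ⟨?_, ?_, ?_, ?_, h1.2.2.2⟩ <;> grind
  · rw [Multiset.map_add, ← h2]
    classical
    ext e
    simp [List.head?_append, Multiset.count_cons]
    omega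
  · rw [Multiset.map_add, ← h3]
    classical
    ext e
    simp [List.getLast?_append, List.getLast?_cons, Multiset.count_cons]
    omega
  · classical
    ext e
    have := congrArg (Multiset.count e) h4
    simp only [Multiset.map_cons, Multiset.sum_cons, arcs_append_cons_cons, arcs_cons_cons,
      arcs_singleton, Multiset.count_add, Multiset.count_zero, starArcs] at this ⊢
    omega

/-- Subdivide `xz` by `v`, and let the path starting at `y` start from `v` instead. -/
lemma IsCover.reroute_start
    (h : IsCover S ({(x, z)} + {(z, x)} + E)
      ((A₁ ++ x :: z :: A₂) ::ₘ (B₁ ++ z :: x :: B₂) ::ₘ (y :: Q) ::ₘ R))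
    (hv : ∀ p ∈ (A₁ ++ x :: z :: A₂) ::ₘ (B₁ ++ z :: x :: B₂) ::ₘ (y :: Q) ::ₘ R, v ∉ p) :
    IsCover ({v} + S) (starArcs v x y z + E)
      ([y, v] ::ₘ (A₁ ++ x :: v :: z :: A₂) ::ₘ (B₁ ++ z :: v :: x :: B₂) ::ₘ
        (v :: y :: Q) ::ₘ R) := by
  obtain ⟨h1, h2, h3, h4⟩ := h
  refine ⟨?_, ?_, ?_, ?_⟩
  · simp only [Multiset.mem_cons, forall_eq_or_imp] at h1 hv ⊢
    refine ⟨?_, ?_, ?_, ?_, h1.2.2.2⟩ <;> grind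
  · rw [Multiset.map_add, ← h2]
    classical
    ext e
    simp [List.head?_append, Multiset.count_cons]
    omega
  · rw [Multiset.map_add, ← h3]
    classical
    ext e
    simp [List.getLast?_append, List.getLast?_cons, Multiset.count_cons]
    omega
  · classical
    ext e
    have := congrArg (Multiset.count e) h4
    simp only [Multiset.map_cons, Multiset.sum_cons, arcs_append_cons_cons, arcs_cons_cons,
      arcs_singleton, Multiset.count_add, Multiset.count_zero, starArcs] at this ⊢
    omega

/-- If the path through `(x, z)` ends at `y` and the path through `(z, x)` starts at `y`, split
the former after `x` and reroute through `v`, using the path that starts at `z`. -/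
lemma IsCover.reroute_split
    (h : IsCover S ({(x, z)} + {(z, x)} + E)
      ((A₁ ++ x :: z :: (A₂ ++ [y])) ::ₘ (y :: (B₁ ++ z :: x :: B₂)) ::ₘ (z :: T) ::ₘ R))
    (hv : ∀ p ∈ (A₁ ++ x :: z :: (A₂ ++ [y])) ::ₘ (y :: (B₁ ++ z :: x :: B₂)) ::ₘ
      (z :: T) ::ₘ R, v ∉ p) :
    IsCover ({v} + S) (starArcs v x y z + E)
      ((v :: z :: T) ::ₘ (z :: (A₂ ++ [y, v])) ::ₘ (A₁ ++ [x, v, y]) ::ₘ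
        (y :: (B₁ ++ z :: v :: x :: B₂)) ::ₘ R) := by
  obtain ⟨h1, h2, h3, h4⟩ := h
  refine ⟨?_, ?_, ?_, ?_⟩
  · simp only [Multiset.mem_cons, forall_eq_or_imp] at h1 hv ⊢
    refine ⟨?_, ?_, ?_, ?_, h1.2.2.2⟩ <;> grind
  · rw [Multiset.map_add, ← h2]
    classical
    ext e
    simp [List.head?_append, Multiset.count_cons]
    omega
  · rw [Multiset.map_add, ← h3]
    classical
    ext e
    simp [List.getLast?_append, List.getLast?_cons, Multiset.count_cons]
    omega
  · classical
    ext e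
    have := congrArg (Multiset.count e) h4
    simp only [Multiset.map_cons, Multiset.sum_cons, arcs_append_cons_cons,
      arcs_cons_append_cons_cons, arcs_cons_cons, arcs_singleton, Multiset.count_add,
      Multiset.count_zero, starArcs] at this ⊢
    omega

lemma starArcs_swap : starArcs v z y x = starArcs v x y z := by
  unfold starArcs
  abel

lemma IsCover.exists_reroute_split (hyz : y ≠ z) (hz : z ∈ S)
    (h : IsCover S ({(x, z)} + {(z, x)} + E)
      ((A₁ ++ x :: z :: A₂) ::ₘ (B₁ ++ z :: x :: B₂) ::ₘ R))
    (hv : ∀ p ∈ (A₁ ++ x :: z :: A₂) ::ₘ (B₁ ++ z :: x :: B₂) ::ₘ R, v ∉ p)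
    (hA : Q ++ [y] = A₁ ++ x :: z :: A₂) (hB : y :: T = B₁ ++ z :: x :: B₂) :
    ∃ M, IsCover ({v} + S) (starArcs v x y z + E) M := by
  obtain ⟨A₃, rfl⟩ : ∃ A₃, A₂ = A₃ ++ [y] := by
    rcases List.eq_nil_or_concat A₂ with rfl | ⟨A₃, a, rfl⟩
    · have := congrArg List.getLast? hA
      simp [List.getLast?_append] at this
      exact absurd this hyz
    · have := congrArg List.getLast? hA
      simp [List.getLast?_append, List.getLast?_cons] at this
      exact ⟨A₃, by simp [this]⟩
  obtain ⟨B₃, rfl⟩ : ∃ B₃, B₁ = y :: B₃ := by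
    cases B₁ with
    | nil => simp at hB; exact absurd hB.1 hyz
    | cons b B₃ => simp at hB; exact ⟨B₃, by simp [hB.1]⟩
  obtain ⟨U, hU⟩ := h.exists_start hz
  have hA' := h.nodup _ (Multiset.mem_cons_self _ _)
  rw [Multiset.mem_cons, Multiset.mem_cons] at hU
  rcases hU with hU | hU | hU
  · rw [← hU] at hA'
    cases A₁ with
    | nil => simp at hU; grind
    | cons a A₁ => simp at hU; grind
  · simp at hU
    exact absurd hU.1.symm hyz
  · obtain ⟨R, rfl⟩ := Multiset.exists_cons_of_mem hU
    exact ⟨_, IsCover.reroute_split (by simpa using h) (by simpa using hv)⟩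

end reroute

/-- From a cover using `(x, z)` and `(z, x)`, one gets a cover in which these arcs are replaced by
the star at a new vertex `v` with leaves `x`, `y`, `z`. -/
theorem IsCover.exists_star {v x y z : V} (hxy : x ≠ y) (hyz : y ≠ z)
    (hx : x ∈ S) (hy : y ∈ S) (hz : z ∈ S)
    (h : IsCover S ({(x, z)} + {(z, x)} + E) M) (hv : ∀ p ∈ M, v ∉ p) :
    ∃ M', IsCover ({v} + S) (starArcs v x y z + E) M' := by
  obtain ⟨A₁, A₂, hA⟩ := h.exists_arc (a := x) (b := z) (by simp)
  obtain ⟨B₁, B₂, hB⟩ := h.exists_arc (a := z) (b := x) (by simp)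
  obtain ⟨M, rfl⟩ := Multiset.exists_cons_of_mem hA
  have hAB : B₁ ++ z :: x :: B₂ ≠ A₁ ++ x :: z :: A₂ := by
    intro hAB
    refine swap_notMem_arcs (a := x) (b := z) (h.nodup _ hA) ?_ ?_
    · simp [arcs_append_cons_cons]
    · simp [← hAB, arcs_append_cons_cons]
  obtain ⟨R, rfl⟩ := Multiset.exists_cons_of_mem ((Multiset.mem_cons.1 hB).resolve_left hAB)
  obtain ⟨Q, hQ⟩ := h.exists_end hy
  obtain ⟨T, hT⟩ := h.exists_start hy
  have not_both : ∀ s t : List V, ∀ a b, (s ++ a :: b :: t).Nodup →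
      Q ++ [y] = s ++ a :: b :: t → y :: T = s ++ a :: b :: t → False := by
    intro s t a b hn hQ hT
    rw [← hT] at hn hQ
    cases Q with
    | nil =>
      have := congrArg List.length (hQ.trans hT)
      simp at this
      omega
    | cons q Q => grind
  simp only [Multiset.mem_cons] at hQ hT
  by_cases hQR : Q ++ [y] ∈ R
  · obtain ⟨R, rfl⟩ := Multiset.exists_cons_of_mem hQR
    exact ⟨_, h.reroute_end hv⟩
  by_cases hTR : y :: T ∈ R
  · obtain ⟨R, rfl⟩ := Multiset.exists_cons_of_mem hTR
    exact ⟨_, h.reroute_start hv⟩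
  simp only [hQR, hTR, or_false] at hQ hT
  have hnA := h.nodup _ (Multiset.mem_cons_self _ _)
  have hnB := h.nodup _ (Multiset.mem_cons_of_mem (Multiset.mem_cons_self _ _))
  rcases hQ with hQ | hQ <;> rcases hT with hT | hT
  · exact (not_both _ _ _ _ hnA hQ hT).elim
  · exact h.exists_reroute_split hyz hz hv hQ hT
  · rw [Multiset.cons_swap] at h hv
    rw [add_comm {(x, z)}] at h
    rw [← starArcs_swap]
    exact h.exists_reroute_split hxy.symm hx hv hQ hT
  · exact (not_both _ _ _ _ hnB hQ hT).elim

section conversion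

variable [Fintype V]

lemma exists_isCover {G : SimpleGraph V} (h : HasOPPDC G) :
    ∃ M E, IsCover (Finset.univ : Finset V).val E M ∧ E.Nodup ∧
      ∀ a b, (a, b) ∈ E ↔ G.Adj a b := by
  classical
  obtain ⟨P, h1, h2, h3⟩ := h
  have hmem : ∀ a b, (a, b) ∈ (Finset.univ.val.map P).bind arcs ↔ G.Adj a b := by
    intro a b
    simp only [Multiset.mem_bind, Multiset.mem_map, Finset.mem_val, Finset.mem_univ, true_and,
      exists_exists_eq_and]
    constructor
    · rintro ⟨w, hw⟩
      exact isChain_iff_arcs.1 (h1 w).2.2.1 a b hw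
    · intro hab
      exact (h3 a b hab).exists
  refine ⟨Finset.univ.val.map P, _, ⟨?_, ?_, ?_, rfl⟩, ?_, hmem⟩
  · intro p hp
    obtain ⟨w, -, rfl⟩ := Multiset.mem_map.1 hp
    exact (h1 w).2.1
  · rw [Multiset.map_map]
    exact Multiset.map_congr rfl fun w _ => (h1 w).2.2.2
  · choose f hf using fun w => List.getLast?_isSome.2 (h1 w).1 |> Option.isSome_iff_exists.1
    have hbij : Function.Bijective f := by
      refine ⟨fun a b hab => (h2 (f a)).unique (hf a) (by rw [hf, hab]), fun w => ?_⟩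
      obtain ⟨u, hu, -⟩ := h2 w
      exact ⟨u, Option.some_injective _ ((hf u).symm.trans hu)⟩
    rw [Multiset.map_map]
    conv_rhs => rw [← Multiset.map_univ_val_equiv (Equiv.ofBijective f hbij), Multiset.map_map]
    exact Multiset.map_congr rfl fun w _ => hf w
  · rw [Multiset.nodup_iff_count_le_one]
    rintro ⟨a, b⟩
    by_cases hab : (a, b) ∈ (Finset.univ.val.map P).bind arcs
    · obtain ⟨w, hw, huniq⟩ := h3 a b ((hmem a b).1 hab)
      rw [Multiset.map_map]
      change Multiset.count (a, b) (∑ u, arcs (P u)) ≤ 1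
      rw [Finset.sum_eq_add_sum_sdiff_singleton_of_mem (Finset.mem_univ w), Multiset.count_add,
        Multiset.count_sum', Finset.sum_eq_zero, add_zero]
      · exact Multiset.nodup_iff_count_le_one.1 (nodup_arcs (h1 w).2.1) _
      · intro u hu
        refine Multiset.count_eq_zero.2 fun hu' => ?_
        simp [huniq u hu'] at hu
    · exact (Multiset.count_eq_zero.2 hab).le.trans zero_le_one

lemma IsCover.hasOPPDC {G : SimpleGraph V} (h : IsCover (Finset.univ : Finset V).val E M)
    (hE : E.Nodup) (hG : ∀ a b, (a, b) ∈ E ↔ G.Adj a b) : HasOPPDC G := by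
  classical
  have hs : ∀ w, ∃ p ∈ M, p.head? = some w := fun w => by
    obtain ⟨l, hl⟩ := h.exists_start (Finset.mem_univ_val w)
    exact ⟨_, hl, rfl⟩
  choose P hPM hP using hs
  have hinj : Function.Injective P := fun a b hab =>
    Option.some_injective _ (by rw [← hP, hab, hP])
  obtain rfl : Finset.univ.val.map P = M := by
    refine Multiset.eq_of_le_of_card_le ?_ ?_
    · refine (Multiset.le_iff_subset (Finset.univ.nodup.map hinj)).2 fun p hp => ?_
      obtain ⟨w, -, rfl⟩ := Multiset.mem_map.1 hp
      exact hPM w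
    · have := congrArg Multiset.card h.starts
      simp only [Multiset.card_map] at this ⊢
      exact this.le
  have hends := h.ends
  have hsum : ∑ u, arcs (P u) = E := by rw [← h.sum_arcs, Multiset.map_map]; rfl
  have hmem : ∀ a b, (∃ w, (a, b) ∈ arcs (P w)) ↔ G.Adj a b := by
    intro a b
    rw [← hG, ← hsum, Multiset.mem_sum]
    simp
  rw [Multiset.map_map] at hends
  refine ⟨P, fun w => ⟨?_, h.nodup _ (hPM w), ?_, hP w⟩, fun w => ?_, fun a b hab => ?_⟩
  · intro h0
    simpa [h0] using hP w
  · exact isChain_iff_arcs.2 fun a b hab => (hmem a b).1 ⟨w, hab⟩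
  · have hw : some w ∈ Finset.univ.val.map (List.getLast? ∘ P) := by
      rw [hends]
      simp
    obtain ⟨u, hu, huw⟩ := Multiset.mem_map.1 hw
    refine ⟨u, huw, fun u' hu' => ?_⟩
    have hnd : (Finset.univ.val.map (List.getLast? ∘ P)).Nodup :=
      hends ▸ Finset.univ.nodup.map (Option.some_injective _)
    exact Multiset.inj_on_of_nodup_map hnd u' (Finset.mem_univ _) u (Finset.mem_univ _)
      (hu'.trans huw.symm)
  · obtain ⟨w, hw⟩ := (hmem a b).2 hab
    refine ⟨w, hw, fun u hu => ?_⟩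
    by_contra hne
    have h1 := Multiset.nodup_iff_count_le_one.1 hE (a, b)
    have hle : ∑ i ∈ {u, w}, arcs (P i) ≤ ∑ i, arcs (P i) :=
      Finset.sum_le_sum_of_subset (Finset.subset_univ _)
    rw [Finset.sum_pair hne, hsum] at hle
    have h2 := (Multiset.count_le_of_le (a, b) hle).trans h1
    rw [Multiset.count_add] at h2
    have h3 := Multiset.one_le_count_iff_mem.2 hw
    have h4 : 1 ≤ (arcs (P u)).count (a, b) := Multiset.one_le_count_iff_mem.2 hu
    omega

end conversion

lemma IsCover.map {W : Type*} {f : V → W} (hf : Function.Injective f) (h : IsCover S E M) :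
    IsCover (S.map f) (E.map (Prod.map f f)) (M.map (List.map f)) := by
  refine ⟨?_, ?_, ?_, ?_⟩
  · intro p hp
    obtain ⟨q, hq, rfl⟩ := Multiset.mem_map.1 hp
    exact (h.nodup q hq).map hf
  · have := congrArg (Multiset.map (Option.map f)) h.starts
    simpa [Multiset.map_map, Function.comp_def] using this
  · have := congrArg (Multiset.map (Option.map f)) h.ends
    simpa [Multiset.map_map, Function.comp_def] using this
  · rw [← h.sum_arcs, Multiset.map_map]
    simp only [Function.comp_def, arcs_map]
    exact (Multiset.map_bind M arcs (Prod.map f f)).symm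

end PathCover

/-- if `v` has neighborhood `{x, y, z}` with `xz ∉ E(G)` and
`(G \ v) ∪ {xz}` has an OPPDC, then `G` has an OPPDC. -/
theorem deleteVertex_deg_three_addEdge {V : Type*} [Fintype V] (G : SimpleGraph V)
    (v x y z : V)
    (hN : G.neighborSet v = {x, y, z})
    (hxy : x ≠ y) (hyz : y ≠ z) (hxzne : x ≠ z)
    (hxv : x ≠ v) (hzv : z ≠ v)
    (hxz : ¬ G.Adj x z)
    (h : HasOPPDC ((G.induce {w : V | w ≠ v}) ⊔
      SimpleGraph.fromEdgeSet {s((⟨x, hxv⟩ : {w : V | w ≠ v}), (⟨z, hzv⟩ : {w : V | w ≠ v}))})) :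
    HasOPPDC G := by
  classical
  have hyv : y ≠ v := by
    rintro rfl
    exact G.irrefl ((Set.ext_iff.1 hN y).2 (by simp))
  have hadj : ∀ w, G.Adj v w ↔ w = x ∨ w = y ∨ w = z := fun w => by
    rw [← SimpleGraph.mem_neighborSet, hN]
    simp
  obtain ⟨M, E, hM, hEn, hE⟩ := PathCover.exists_isCover h
  simp only [SimpleGraph.sup_adj, SimpleGraph.comap_adj, SimpleGraph.fromEdgeSet_adj,
    Function.Embedding.subtype_apply, Set.mem_singleton_iff, Sym2.eq_iff, Subtype.ext_iff] at hE
  obtain ⟨E, rfl⟩ := Multiset.exists_cons_of_mem ((hE ⟨x, hxv⟩ ⟨z, hzv⟩).2 (by grind))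
  have hzx := (hE ⟨z, hzv⟩ ⟨x, hxv⟩).2 (by grind)
  obtain ⟨E, rfl⟩ := Multiset.exists_cons_of_mem
    ((Multiset.mem_cons.1 hzx).resolve_left (by simp [hxzne]))
  have hE' : ∀ a b, (a, b) ∈ E ↔ G.Adj a.1 b.1 := by
    intro a b
    have h1 := hE a b
    have h2 := G.adj_comm x z
    simp only [Multiset.nodup_cons, Multiset.mem_cons, Prod.mk.injEq, Subtype.ext_iff] at hEn h1
    grind
  have hM' := hM.map Subtype.val_injective
  simp only [← Multiset.singleton_add, ← add_assoc, Multiset.map_add, Multiset.map_singleton,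
    Prod.map_apply] at hM'
  obtain ⟨M', hcov⟩ := hM'.exists_star (v := v) (y := y) hxy hyz (by simpa using hxv)
    (by simpa using hyv) (by simpa using hzv) (by simp)
  have huniv : {v} + (Finset.univ : Finset {w : V | w ≠ v}).val.map Subtype.val =
      (Finset.univ : Finset V).val := by
    refine (Multiset.Nodup.ext ?_ Finset.univ.nodup).2 fun w => ?_
    · rw [Multiset.singleton_add, Multiset.nodup_cons]
      exact ⟨by simp, Finset.univ.nodup.map Subtype.val_injective⟩
    · by_cases hw : w = v <;> simp [hw]
  rw [huniv] at hcov
  refine hcov.hasOPPDC ?_ fun a b => ?_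
  · simp only [Multiset.nodup_cons] at hEn
    refine Multiset.nodup_add.2 ⟨?_, hEn.2.2.map (Subtype.val_injective.prodMap
      Subtype.val_injective), ?_⟩
    · simp only [PathCover.starArcs, Multiset.nodup_add, Multiset.nodup_singleton,
        Multiset.disjoint_singleton, Multiset.mem_add, Multiset.mem_singleton, Prod.mk.injEq]
      grind
    · rw [Multiset.disjoint_left]
      rintro ⟨a, b⟩ hab hab'
      obtain ⟨⟨⟨a, ha⟩, ⟨b, hb⟩⟩, -, he⟩ := Multiset.mem_map.1 hab'
      simp only [PathCover.starArcs, Multiset.mem_add, Multiset.mem_singleton, Prod.mk.injEq,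
        Prod.map_apply] at *
      grind
  · have hb := hadj b
    have ha := hadj a
    have hcomm := G.adj_comm a b
    have hEab : (a, b) ∈ E.map (Prod.map Subtype.val Subtype.val) ↔
        a ≠ v ∧ b ≠ v ∧ G.Adj a b := by
      rw [Multiset.mem_map]
      constructor
      · rintro ⟨⟨⟨c, hc⟩, ⟨d, hd⟩⟩, hcd, he⟩
        obtain ⟨rfl, rfl⟩ := Prod.mk.inj he
        exact ⟨hc, hd, (hE' _ _).1 hcd⟩
      · rintro ⟨hc, hd, hcd⟩
        exact ⟨(⟨a, hc⟩, ⟨b, hd⟩), (hE' _ _).2 hcd, rfl⟩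
    rw [Multiset.mem_add, hEab]
    simp only [PathCover.starArcs, Multiset.mem_add, Multiset.mem_singleton, Prod.mk.injEq]
    by_cases hav : a = v <;> by_cases hbv : b = v
    all_goals try subst hav
    all_goals try subst hbv
    all_goals grind [G.loopless]
end

section
/- If G is a minimal counterexample (with respect to the number of vertices) to the statement 'every connected graph other than K₃ and K₅ has an OPPDC', then G is 3-edge-connected. -/
namespace PathSystem

/-- The arcs traversed by a list of vertices. -/
def arcs {V : Type*} (p : List V) : Multiset (V × V) := ↑(p.zip p.tail)

/-- The first vertex of a list, as a multiset of size at most one. -/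
def first {V : Type*} (p : List V) : Multiset V := ↑p.head?.toList

/-- The last vertex of a list, as a multiset of size at most one. -/
def last {V : Type*} (p : List V) : Multiset V := ↑p.getLast?.toList

section Lists

variable {V W : Type*}

@[simp] lemma arcs_nil : arcs ([] : List V) = 0 := rfl
@[simp] lemma arcs_singleton (a : V) : arcs [a] = 0 := rfl
@[simp] lemma arcs_cons_cons (a b : V) (p : List V) :
    arcs (a :: b :: p) = (a, b) ::ₘ arcs (b :: p) := rfl
@[simp] lemma first_nil : first ([] : List V) = 0 := rfl
@[simp] lemma first_cons (a : V) (p : List V) : first (a :: p) = {a} := rfl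
@[simp] lemma last_nil : last ([] : List V) = 0 := rfl
@[simp] lemma last_singleton (a : V) : last [a] = {a} := rfl
@[simp] lemma last_cons_cons (a b : V) (p : List V) :
    last (a :: b :: p) = last (b :: p) := by
  simp [last]
@[simp] lemma last_append_cons (p q : List V) (b : V) :
    last (p ++ b :: q) = last (b :: q) := by
  simp [last, List.getLast?_append, List.getLast?_cons]

lemma last_concat (p : List V) (b : V) : last (p ++ [b]) = {b} := by simp

@[simp] lemma first_append_cons_append (p q r : List V) (b : V) :
    first (p ++ b :: (q ++ r)) = first (p ++ [b]) := by
  cases p <;> simp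

lemma first_append_cons (p q : List V) (b : V) : first (p ++ b :: q) = first (p ++ [b]) := by
  cases p <;> simp

/-- Splitting a list at one of its vertices splits its arcs. -/
lemma arcs_append_cons (p q : List V) (a : V) :
    arcs (p ++ a :: q) = arcs (p ++ [a]) + arcs (a :: q) := by
  induction p with
  | nil => simp
  | cons b p ih =>
    cases p with
    | nil => simp
    | cons c p => simpa using ih

lemma mem_first_iff {p : List V} {a : V} : a ∈ first p ↔ ∃ q, p = a :: q := by
  cases p <;> simp [eq_comm]

lemma mem_last_iff {p : List V} {a : V} : a ∈ last p ↔ ∃ q, p = q ++ [a] := by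
  rcases List.eq_nil_or_concat p with rfl | ⟨q, b, rfl⟩
  · simp
  · simp [eq_comm]

lemma mem_arcs_iff {p : List V} {a b : V} :
    (a, b) ∈ arcs p ↔ ∃ q r, p = q ++ a :: b :: r := by
  constructor
  · intro h
    induction p with
    | nil => simp at h
    | cons c p ih =>
      cases p with
      | nil => simp at h
      | cons d p =>
        rw [arcs_cons_cons, Multiset.mem_cons] at h
        rcases h with h | h
        · obtain ⟨rfl, rfl⟩ := Prod.mk.inj h
          exact ⟨[], p, rfl⟩
        · obtain ⟨q, r, h⟩ := ih h
          exact ⟨c :: q, r, by simp [h]⟩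
  · rintro ⟨q, r, rfl⟩
    rw [arcs_append_cons]
    simp

lemma mem_of_mem_arcs {p : List V} {a b : V} (h : (a, b) ∈ arcs p) : a ∈ p ∧ b ∈ p := by
  obtain ⟨q, r, rfl⟩ := mem_arcs_iff.1 h
  simp

lemma mem_first_or_mem_arcs {p : List V} {x : V} (h : x ∈ p) :
    x ∈ first p ∨ ∃ y, (y, x) ∈ arcs p := by
  obtain ⟨q, r, rfl⟩ := List.append_of_mem h
  rcases List.eq_nil_or_concat q with rfl | ⟨q, b, rfl⟩
  · simp
  · exact .inr ⟨b, mem_arcs_iff.2 ⟨q, r, by simp⟩⟩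

lemma nodup_first (p : List V) : (first p).Nodup := by cases p <;> simp

lemma nodup_last (p : List V) : (last p).Nodup := by
  rcases List.eq_nil_or_concat p with rfl | ⟨q, b, rfl⟩ <;> simp

lemma nodup_arcs {p : List V} (h : p.Nodup) : (arcs p).Nodup := by
  rw [arcs, Multiset.coe_nodup]
  refine List.Nodup.of_map Prod.snd ?_
  rw [List.map_snd_zip (by simp)]
  exact h.sublist (List.tail_sublist p)

lemma first_map (f : V → W) (p : List V) : first (p.map f) = (first p).map f := by
  cases p <;> simp

lemma last_map (f : V → W) (p : List V) : last (p.map f) = (last p).map f := by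
  rcases List.eq_nil_or_concat p with rfl | ⟨q, b, rfl⟩ <;> simp

lemma arcs_map (f : V → W) (p : List V) :
    arcs (p.map f) = (arcs p).map (Prod.map f f) := by
  induction p with
  | nil => simp
  | cons a p ih =>
    cases p with
    | nil => simp
    | cons b p => simpa using ih

end Lists

/-- `L` is a family of directed paths with multiset of starts `s`, of ends `t`, and with
multiset of traversed arcs `D`. -/
structure IsPathSystem {V : Type*} (L : Multiset (List V)) (s t : Multiset V)
    (D : Multiset (V × V)) : Prop where
  ne_nil : ∀ p ∈ L, p ≠ []
  nodup : ∀ p ∈ L, p.Nodup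
  bind_first : L.bind first = s
  bind_last : L.bind last = t
  bind_arcs : L.bind arcs = D

open scoped Classical in
/-- The arcs of a relation from one finite set to another. -/
noncomputable def crossing {V : Type*} (S T : Finset V) (R : V → V → Prop) : Finset (V × V) :=
  (S ×ˢ T).filter fun x => R x.1 x.2

/-- The arcs of the restriction of a relation to a finite set. -/
noncomputable def arcsOn {V : Type*} (S : Finset V) (R : V → V → Prop) : Multiset (V × V) :=
  (crossing S S R).val

/-- The restriction of the relation `R` to `S` has an oriented perfect path double cover. -/
def HasCover {V : Type*} (S : Finset V) (R : V → V → Prop) : Prop :=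
  ∃ L, IsPathSystem L S.val S.val (arcsOn S R)

/-- Any two complementary nonempty parts of `S` are joined by an arc of `R`. -/
def ConnectedOn {V : Type*} (S : Finset V) (R : V → V → Prop) : Prop :=
  ∀ T ⊆ S, T.Nonempty → T ≠ S → ∃ a ∈ T, ∃ b ∈ S, b ∉ T ∧ R a b

/-- `R` joins any two distinct elements of `S`. -/
def CompleteOn {V : Type*} (S : Finset V) (R : V → V → Prop) : Prop :=
  ∀ a ∈ S, ∀ b ∈ S, a ≠ b → R a b

section Basic

variable {V W : Type*}

lemma mem_crossing {S T : Finset V} {R : V → V → Prop} {a b : V} :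
    (a, b) ∈ crossing S T R ↔ (a ∈ S ∧ b ∈ T) ∧ R a b := by
  simp [crossing]

lemma mem_arcsOn {S : Finset V} {R : V → V → Prop} {a b : V} :
    (a, b) ∈ arcsOn S R ↔ (a ∈ S ∧ b ∈ S) ∧ R a b := by
  simp [arcsOn, mem_crossing]

lemma nodup_arcsOn (S : Finset V) (R : V → V → Prop) : (arcsOn S R).Nodup :=
  Finset.nodup _

/-- In a double count over a family of sets, an element is counted once iff it lies in
exactly one member. -/
lemma count_bind_eq_one_iff [DecidableEq W] {ι : Type*} [Fintype ι] (f : ι → Multiset W)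
    (hf : ∀ i, (f i).Nodup) (x : W) :
    ((Finset.univ.val : Multiset ι).bind f).count x = 1 ↔ ∃! i, x ∈ f i := by
  classical
  rw [Multiset.count_bind]
  have h : ((Finset.univ.val : Multiset ι).map fun i => (f i).count x).sum
      = (Finset.univ.filter fun i => x ∈ f i).card := by
    rw [Finset.card_filter]
    exact Finset.sum_congr rfl fun i _ => by
      by_cases hx : x ∈ f i
      · simp [hx, Multiset.count_eq_one_of_mem (hf i) hx]
      · simp [hx]
  rw [h, Finset.card_eq_one]
  simp only [Finset.ext_iff, Finset.mem_filter, Finset.mem_univ, true_and,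
    Finset.mem_singleton]
  exact ⟨fun ⟨i, hi⟩ => ⟨i, (hi i).2 rfl, fun j hj => (hi j).1 hj⟩,
    fun ⟨i, hi, hu⟩ => ⟨i, fun j => ⟨fun hj => hu j hj, fun hj => hj ▸ hi⟩⟩⟩

lemma IsPathSystem.map {L : Multiset (List V)} {s t : Multiset V} {D : Multiset (V × V)}
    (h : IsPathSystem L s t D) {f : V → W} (hf : f.Injective) :
    IsPathSystem (L.map (List.map f)) (s.map f) (t.map f) (D.map (Prod.map f f)) where
  ne_nil := by
    simp only [Multiset.mem_map, forall_exists_index, and_imp]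
    rintro _ p hp rfl
    simpa using h.ne_nil p hp
  nodup := by
    simp only [Multiset.mem_map, forall_exists_index, and_imp]
    rintro _ p hp rfl
    exact (h.nodup p hp).map hf
  bind_first := by
    rw [← h.bind_first, Multiset.bind_map, Multiset.map_bind]
    exact Multiset.bind_congr fun p _ => first_map f p
  bind_last := by
    rw [← h.bind_last, Multiset.bind_map, Multiset.map_bind]
    exact Multiset.bind_congr fun p _ => last_map f p
  bind_arcs := by
    rw [← h.bind_arcs, Multiset.bind_map, Multiset.map_bind]
    exact Multiset.bind_congr fun p _ => arcs_map f p

lemma arcsOn_map {S : Finset V} {R : V → V → Prop} {R' : W → W → Prop} (f : V ↪ W)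
    (hR : ∀ a ∈ S, ∀ b ∈ S, R' (f a) (f b) ↔ R a b) :
    (arcsOn S R).map (Prod.map f f) = arcsOn (S.map f) R' := by
  refine (Multiset.Nodup.ext ((nodup_arcsOn _ _).map (f.injective.prodMap f.injective))
    (nodup_arcsOn _ _)).2 ?_
  rintro ⟨a, b⟩
  simp only [Multiset.mem_map, Prod.exists, mem_arcsOn, Prod.map_apply, Prod.mk.injEq,
    Finset.mem_map]
  constructor
  · rintro ⟨c, d, ⟨⟨hc, hd⟩, h⟩, rfl, rfl⟩
    exact ⟨⟨⟨c, hc, rfl⟩, d, hd, rfl⟩, (hR c hc d hd).2 h⟩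
  · rintro ⟨⟨⟨c, hc, rfl⟩, d, hd, rfl⟩, h⟩
    exact ⟨c, d, ⟨⟨hc, hd⟩, (hR c hc d hd).1 h⟩, rfl, rfl⟩

/-- The vertices of the paths of a system are starts or heads of arcs. -/
lemma IsPathSystem.mem {L : Multiset (List V)} {s t : Multiset V} {S : Finset V}
    {R : V → V → Prop} (h : IsPathSystem L s t (arcsOn S R)) (hs : ∀ x ∈ s, x ∈ S)
    {p : List V} (hp : p ∈ L) {x : V} (hx : x ∈ p) : x ∈ S := by
  rcases mem_first_or_mem_arcs hx with hx | ⟨y, hx⟩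
  · exact hs x (h.bind_first ▸ Multiset.mem_bind.2 ⟨p, hp, hx⟩)
  · have : (y, x) ∈ arcsOn S R := h.bind_arcs ▸ Multiset.mem_bind.2 ⟨p, hp, hx⟩
    exact (mem_arcsOn.1 this).1.2

/-- A cover by a family indexed by vertices yields a cover as a multiset of paths. -/
lemma hasCover_of_hasOPPDC [Fintype V] {G : SimpleGraph V} (h : HasOPPDC G) :
    HasCover Finset.univ G.Adj := by
  classical
  obtain ⟨P, hP, hlast, harc⟩ := h
  refine ⟨Finset.univ.val.map P, ?_, ?_, ?_, ?_, ?_⟩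
  · simpa using fun v => (hP v).1
  · simpa using fun v => (hP v).2.1
  · rw [Multiset.bind_map, show (fun v => first (P v)) = fun v => {v} from ?_,
      Multiset.bind_singleton, Multiset.map_id']
    funext v
    simp [first, (hP v).2.2.2]
  · rw [Multiset.bind_map]
    ext w
    rw [Multiset.count_eq_one_of_mem (Finset.nodup _) (by simp),
      count_bind_eq_one_iff _ fun i => nodup_last _]
    simpa [last] using hlast w
  · rw [Multiset.bind_map]
    ext ⟨a, b⟩
    by_cases hab : G.Adj a b
    · rw [Multiset.count_eq_one_of_mem (nodup_arcsOn _ _) (by simpa [mem_arcsOn] using hab),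
        count_bind_eq_one_iff _ fun i => nodup_arcs (hP i).2.1]
      exact harc a b hab
    · rw [Multiset.count_eq_zero_of_notMem, Multiset.count_eq_zero_of_notMem]
      · simpa [mem_arcsOn] using hab
      · rw [Multiset.mem_bind]
        rintro ⟨v, -, hv⟩
        obtain ⟨q, r, hq⟩ := mem_arcs_iff.1 hv
        have hc := (hP v).2.2.1
        rw [hq] at hc
        have := (List.isChain_append.1 hc).2.1
        exact hab (List.isChain_cons_cons.1 this).1

lemma hasOPPDC_of_hasCover [Fintype V] {G : SimpleGraph V}
    (h : HasCover Finset.univ G.Adj) : HasOPPDC G := by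
  classical
  obtain ⟨L, hL⟩ := h
  have hex : ∀ v, ∃ q, v :: q ∈ L := by
    intro v
    have : v ∈ L.bind first := by rw [hL.bind_first]; simp
    obtain ⟨p, hp, hv⟩ := Multiset.mem_bind.1 this
    obtain ⟨q, rfl⟩ := mem_first_iff.1 hv
    exact ⟨q, hp⟩
  choose Q hQ using hex
  have hLmap : L = Finset.univ.val.map fun v => v :: Q v := by
    symm
    refine Multiset.eq_of_le_of_card_le ?_ ?_
    · refine (Multiset.le_iff_subset ((Finset.nodup _).map fun a b hab =>
        (List.cons.inj hab).1)).2 ?_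
      intro p hp
      obtain ⟨v, -, rfl⟩ := Multiset.mem_map.1 hp
      exact hQ v
    · have h1 : (L.bind first).card = L.card := by
        rw [Multiset.card_bind, Multiset.map_congr rfl (g := fun _ => 1)]
        · simp
        · intro p hp
          obtain ⟨a, q, rfl⟩ := List.exists_cons_of_ne_nil (hL.ne_nil p hp)
          simp
      rw [← h1, hL.bind_first]
      simp
  refine ⟨fun v => v :: Q v, fun v => ⟨by simp, hL.nodup _ (hQ v), ?_, rfl⟩, ?_, ?_⟩
  · refine List.isChain_iff_forall_rel_of_append_cons_cons.2 ?_
    intro a b q r hq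
    have : (a, b) ∈ L.bind arcs :=
      Multiset.mem_bind.2 ⟨_, hQ v, mem_arcs_iff.2 ⟨q, r, hq⟩⟩
    rw [hL.bind_arcs] at this
    exact (mem_arcsOn.1 this).2
  · intro w
    have := count_bind_eq_one_iff (fun v => last (v :: Q v)) (fun _ => nodup_last _) w
    rw [← Multiset.bind_map, ← hLmap, hL.bind_last] at this
    simpa [last] using this.1 (Multiset.count_eq_one_of_mem (Finset.nodup _) (by simp))
  · intro a b hab
    have := count_bind_eq_one_iff (fun v => arcs (v :: Q v))
      (fun v => nodup_arcs (hL.nodup _ (hQ v))) (a, b)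
    rw [← Multiset.bind_map, ← hLmap, hL.bind_arcs] at this
    exact this.1 (Multiset.count_eq_one_of_mem (nodup_arcsOn _ _) (by simp [mem_arcsOn, hab]))

lemma connected_of_connectedOn {S : Finset V} {R : V → V → Prop} (hS : S.Nonempty)
    (hc : ConnectedOn S R) {H : SimpleGraph S} (hH : ∀ a b : S, R a b → H.Adj a b) :
    H.Connected := by
  classical
  obtain ⟨r, hr⟩ := hS
  rw [SimpleGraph.connected_iff_exists_forall_reachable]
  refine ⟨⟨r, hr⟩, ?_⟩
  by_contra! hcon
  obtain ⟨w, hw⟩ := hcon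
  obtain ⟨T, hmem, hTS⟩ : ∃ T : Finset V,
      (∀ x (hx : x ∈ S), x ∈ T ↔ H.Reachable ⟨r, hr⟩ ⟨x, hx⟩) ∧ T ⊆ S := by
    refine ⟨(Finset.univ.filter fun x : S => H.Reachable ⟨r, hr⟩ x).map
      (Function.Embedding.subtype _), fun x hx => by simp [hx], fun x hx => ?_⟩
    obtain ⟨y, -, rfl⟩ := Finset.mem_map.1 hx
    exact y.2
  obtain ⟨a, ha, b, hb, hbT, hab⟩ := hc T hTS
    ⟨r, (hmem r hr).2 (SimpleGraph.Reachable.refl _)⟩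
    (by rintro rfl; exact hw ((hmem w w.2).1 w.2))
  exact hbT ((hmem b hb).2 (((hmem a (hTS ha)).1 ha).trans
    (hH ⟨a, hTS ha⟩ ⟨b, hb⟩ hab).reachable))

lemma completeOn_of_iso {S : Finset V} {R : V → V → Prop} {H : SimpleGraph S} {n : ℕ}
    (hH : ∀ a b : S, H.Adj a b → R a b) (e : H ≃g (⊤ : SimpleGraph (Fin n))) :
    S.card = n ∧ CompleteOn S R := by
  constructor
  · simpa using Fintype.card_congr e.toEquiv
  · intro a ha b hb hab
    refine hH ⟨a, ha⟩ ⟨b, hb⟩ (e.map_adj_iff.1 ?_)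
    rw [SimpleGraph.top_adj]
    exact fun h => hab (congrArg Subtype.val (e.injective h))

lemma ConnectedOn.insert [DecidableEq V] {A : Finset V} {R R' : V → V → Prop} {x u : V}
    (hc : ConnectedOn A R) (hx : x ∉ A) (hu : u ∈ A)
    (hR : ∀ a ∈ A, ∀ b ∈ A, R a b → R' a b) (hxu : R' x u) (hux : R' u x) :
    ConnectedOn (insert x A) R' := by
  intro T hT hne hTA
  by_cases hxT : x ∈ T
  · by_cases huT : u ∈ T
    · obtain ⟨a, ha, b, hb, hbT, hab⟩ := hc (T.erase x)
        (by rwa [← Finset.subset_insert_iff])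
        ⟨u, Finset.mem_erase.2 ⟨fun h => hx (h ▸ hu), huT⟩⟩
        (fun h => hTA (by rw [← h, Finset.insert_erase hxT]))
      have ha' := Finset.mem_of_mem_erase ha
      have haA : a ∈ A := (Finset.mem_insert.1 (hT ha')).resolve_left (Finset.ne_of_mem_erase ha)
      exact ⟨a, ha', b, Finset.mem_insert_of_mem hb,
        fun h => hbT (Finset.mem_erase.2 ⟨fun hbx => hx (hbx ▸ hb), h⟩), hR a haA b hb hab⟩
    · exact ⟨x, hxT, u, Finset.mem_insert_of_mem hu, huT, hxu⟩
  · have hTA' : T ⊆ A := (Finset.subset_insert_iff_of_notMem hxT).1 hT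
    by_cases hTeq : T = A
    · exact ⟨u, hTeq ▸ hu, x, by simp, hxT, hux⟩
    · obtain ⟨a, ha, b, hb, hbT, hab⟩ := hc T hTA' hne hTeq
      exact ⟨a, ha, b, Finset.mem_insert_of_mem hb, hbT, hR a (hTA' ha) b hb hab⟩

end Basic

section Minimal

variable {V : Type} [Fintype V]

/-- Every connected graph on fewer vertices than `V` has a cover, unless it is complete on
three or five vertices. -/
def SmallHaveCover (V : Type) [Fintype V] : Prop :=
  ∀ (W : Type) [Fintype W] (H : SimpleGraph W),
    Fintype.card W < Fintype.card V → H.Connected →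
    ¬ Nonempty (H ≃g (⊤ : SimpleGraph (Fin 3))) →
    ¬ Nonempty (H ≃g (⊤ : SimpleGraph (Fin 5))) →
    HasOPPDC H

lemma connectedOn_univ {G : SimpleGraph V} (h : G.Connected) :
    ConnectedOn Finset.univ G.Adj := by
  classical
  intro T _ hT hne
  obtain ⟨a, ha⟩ := hT
  obtain ⟨b, hb⟩ : ∃ b, b ∉ T := by
    by_contra! hc
    exact hne (Finset.eq_univ_iff_forall.2 hc)
  obtain ⟨w⟩ := h.preconnected a b
  obtain ⟨d, -, hd1, hd2⟩ := w.exists_boundary_dart (T : Set V) ha hb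
  exact ⟨d.fst, hd1, d.snd, by simp, hd2, d.adj⟩

lemma SmallHaveCover.hasCover (hmin : SmallHaveCover V) {S : Finset V} {R : V → V → Prop}
    (hsymm : ∀ a b, R a b → R b a) (hirr : ∀ a, ¬ R a a)
    (hcard : S.card < Fintype.card V) (hS : S.Nonempty) (hc : ConnectedOn S R)
    (h3 : ¬ (S.card = 3 ∧ CompleteOn S R)) (h5 : ¬ (S.card = 5 ∧ CompleteOn S R)) :
    HasCover S R := by
  let H : SimpleGraph S :=
    { Adj := fun a b => R a b
      symm := ⟨fun a b h => hsymm _ _ h⟩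
      loopless := ⟨fun a h => hirr _ h⟩ }
  have hH : HasOPPDC H := hmin S H (by simpa using hcard)
    (connected_of_connectedOn hS hc fun _ _ h => h)
    (fun ⟨e⟩ => h3 (completeOn_of_iso (fun _ _ h => h) e))
    (fun ⟨e⟩ => h5 (completeOn_of_iso (fun _ _ h => h) e))
  obtain ⟨L, hL⟩ := hasCover_of_hasOPPDC hH
  have h := hL.map (Subtype.val_injective (p := fun x => x ∈ S))
  have harcs := arcsOn_map (S := (Finset.univ : Finset S)) (R := H.Adj) (R' := R)
    (Function.Embedding.subtype _) (fun a _ b _ => Iff.rfl)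
  have hmap : (Finset.univ : Finset S).map (Function.Embedding.subtype _) = S := by
    ext x; simp
  have hval : (Finset.univ : Finset S).val.map Subtype.val = S.val :=
    congrArg Finset.val hmap
  rw [hmap] at harcs
  rw [hval] at h
  exact ⟨_, harcs ▸ h⟩

end Minimal

section Cutting

variable {V : Type*} [DecidableEq V]

lemma filter_arcs_of_notMem {p : List V} {x : V} (h : x ∉ p) :
    (arcs p).filter (fun e => e.1 ≠ x ∧ e.2 ≠ x) = arcs p ∧
    (arcs p).filter (fun e => e.2 = x) = 0 ∧ (arcs p).filter (fun e => e.1 = x) = 0 := by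
  refine ⟨Multiset.filter_eq_self.2 ?_, Multiset.filter_eq_nil.2 ?_,
    Multiset.filter_eq_nil.2 ?_⟩ <;> rintro ⟨a, b⟩ hab <;> have := mem_of_mem_arcs hab
  · exact ⟨fun hx => h (hx ▸ this.1), fun hx => h (hx ▸ this.2)⟩
  · exact fun hx => h (hx ▸ this.2)
  · exact fun hx => h (hx ▸ this.1)

lemma filter_ne_first {p : List V} {x : V} (h : x ∉ p) :
    (first p).filter (· ≠ x) = first p := by
  refine Multiset.filter_eq_self.2 fun a ha hx => ?_
  obtain ⟨q, rfl⟩ := mem_first_iff.1 ha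
  simp [← hx] at h

lemma filter_ne_last {p : List V} {x : V} (h : x ∉ p) :
    (last p).filter (· ≠ x) = last p := by
  refine Multiset.filter_eq_self.2 fun a ha hx => ?_
  obtain ⟨q, rfl⟩ := mem_last_iff.1 ha
  simp [← hx] at h

/-- Deleting a vertex `x` from a family of paths: `B` consists of the initial fragments, `C`
of the final ones, and `M` of the paths avoiding `x`. -/
lemma exists_fragments (x : V) (L : Multiset (List V)) (hL : ∀ p ∈ L, p.Nodup ∧ p ≠ []) :
    ∃ B C M : Multiset (List V),
      (∀ p ∈ B + C + M, p.Nodup ∧ p ≠ []) ∧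
      B.bind first + M.bind first = (L.bind first).filter (· ≠ x) ∧
      C.bind last + M.bind last = (L.bind last).filter (· ≠ x) ∧
      B.bind arcs + C.bind arcs + M.bind arcs =
        (L.bind arcs).filter (fun e => e.1 ≠ x ∧ e.2 ≠ x) ∧
      (B.bind last).map (fun a => (a, x)) = (L.bind arcs).filter (fun e => e.2 = x) ∧
      (C.bind first).map (fun a => (x, a)) = (L.bind arcs).filter (fun e => e.1 = x) := by
  induction L using Multiset.induction_on with
  | empty => exact ⟨0, 0, 0, by simp⟩
  | cons p L ih =>
    obtain ⟨B, C, M, h0, h1, h2, h3, h4, h5⟩ :=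
      ih fun q hq => hL q (Multiset.mem_cons_of_mem hq)
    obtain ⟨hnd, hne⟩ := hL p (Multiset.mem_cons_self _ _)
    simp only [Multiset.cons_bind, Multiset.filter_add, ← h1, ← h2, ← h3, ← h4, ← h5]
    by_cases hx : x ∈ p
    · obtain ⟨q, r, rfl⟩ := List.append_of_mem hx
      have hxq : x ∉ q := by
        intro h; exact (List.nodup_append.1 hnd).2.2 x h x (by simp) rfl
      have hxr : x ∉ r := (List.nodup_cons.1 (List.nodup_append.1 hnd).2.1).1
      have hq := (List.nodup_append.1 hnd).1
      have hr := (List.nodup_cons.1 (List.nodup_append.1 hnd).2.1).2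
      have e1 : (first (q ++ x :: r)).filter (· ≠ x) = first q := by
        cases q with
        | nil => simp
        | cons a q => simpa using filter_ne_first hxq
      have e2 : (last (q ++ x :: r)).filter (· ≠ x) = last r := by
        cases r with
        | nil => simp
        | cons a r => simpa using filter_ne_last hxr
      have eq1 : arcs (q ++ [x]) = arcs q + (last q).map fun a => (a, x) := by
        rcases List.eq_nil_or_concat q with rfl | ⟨q, b, rfl⟩
        · simp
        · rw [List.concat_eq_append, List.append_assoc, List.singleton_append,
            arcs_append_cons]
          simp
      have er1 : arcs (x :: r) = (first r).map (fun a => (x, a)) + arcs r := by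
        cases r <;> simp
      obtain ⟨f1, f2, f3⟩ := filter_arcs_of_notMem hxq
      obtain ⟨g1, g2, g3⟩ := filter_arcs_of_notMem hxr
      have hfx : ∀ a ∈ first r, a ≠ x := by
        intro a ha hax
        obtain ⟨r, rfl⟩ := mem_first_iff.1 ha
        simp [hax] at hxr
      have hlx : ∀ a ∈ last q, a ≠ x := by
        intro a ha hax
        obtain ⟨r, rfl⟩ := mem_last_iff.1 ha
        simp [hax] at hxq
      have e3 : (arcs (q ++ x :: r)).filter (fun e => e.1 ≠ x ∧ e.2 ≠ x)
          = arcs q + arcs r := by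
        rw [arcs_append_cons, eq1, er1]
        simp [Multiset.filter_add, f1, g1, Multiset.filter_map]
      have e4 : (arcs (q ++ x :: r)).filter (fun e => e.2 = x)
          = (last q).map fun a => (a, x) := by
        rw [arcs_append_cons, eq1, er1]
        simpa [Multiset.filter_add, f2, g2, Multiset.filter_map, Multiset.filter_eq_nil]
          using hfx
      have e5 : (arcs (q ++ x :: r)).filter (fun e => e.1 = x)
          = (first r).map fun a => (x, a) := by
        rw [arcs_append_cons, eq1, er1]
        simpa [Multiset.filter_add, f3, g3, Multiset.filter_map, Multiset.filter_eq_nil]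
          using hlx
      rw [e1, e2, e3, e4, e5]
      refine ⟨if q = [] then B else q ::ₘ B, if r = [] then C else r ::ₘ C, M, ?_, ?_⟩
      · intro p hp
        simp only [Multiset.mem_add] at hp h0
        rcases hp with (hp | hp) | hp
        · split_ifs at hp with h
          · exact h0 p (.inl (.inl hp))
          · rcases Multiset.mem_cons.1 hp with rfl | hp
            · exact ⟨hq, h⟩
            · exact h0 p (.inl (.inl hp))
        · split_ifs at hp with h
          · exact h0 p (.inl (.inr hp))
          · rcases Multiset.mem_cons.1 hp with rfl | hp
            · exact ⟨hr, h⟩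
            · exact h0 p (.inl (.inr hp))
        · exact h0 p (.inr hp)
      · split_ifs with h h' h' <;> simp only [h, h', first_nil, last_nil,
          arcs_nil, Multiset.cons_bind, Multiset.map_add, Multiset.map_zero, and_true] <;>
          and_intros <;> first | trivial | abel
    · obtain ⟨f1, f2, f3⟩ := filter_arcs_of_notMem hx
      refine ⟨B, C, p ::ₘ M, ?_, ?_⟩
      · intro r hr
        simp only [Multiset.add_cons, Multiset.mem_cons] at hr
        rcases hr with rfl | hr
        · exact ⟨hnd, hne⟩
        · exact h0 r hr
      · rw [filter_ne_first hx, filter_ne_last hx, f1, f2, f3]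
        simp only [Multiset.cons_bind, zero_add, and_true]
        and_intros <;> first | trivial | abel

end Cutting

/-- A path double cover of the restriction of `R` to `A` with one additional start and one
additional end at `u`; distinct members are designated to end and to start there. -/
def HasOpenCover {V : Type*} (A : Finset V) (R : V → V → Prop) (u : V) : Prop :=
  ∃ (p r : List V) (M : Multiset (List V)),
    IsPathSystem ((p ++ [u]) ::ₘ (u :: r) ::ₘ M) (u ::ₘ A.val) (u ::ₘ A.val) (arcsOn A R)

/-- A path double cover of the restriction of `R` to `A` with additional starts and additional
ends at `u` and `v`; distinct members are designated to end and to start there. -/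
def HasOpenCover₂ {V : Type*} (A : Finset V) (R : V → V → Prop) (u v : V) : Prop :=
  ∃ (p q r s : List V) (M : Multiset (List V)),
    IsPathSystem ((p ++ [u]) ::ₘ (q ++ [v]) ::ₘ (u :: r) ::ₘ (v :: s) ::ₘ M)
      (u ::ₘ v ::ₘ A.val) (u ::ₘ v ::ₘ A.val) (arcsOn A R)

section OpenCovers

variable {V : Type*}

lemma nodup_join {p q : List V} {a b : V} {S T : Finset V} (hST : Disjoint S T)
    (hp : (p ++ [a]).Nodup) (hq : (b :: q).Nodup) (hpS : ∀ x ∈ p ++ [a], x ∈ S)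
    (hqT : ∀ x ∈ b :: q, x ∈ T) : (p ++ a :: b :: q).Nodup := by
  have h : (p ++ [a] ++ b :: q).Nodup := List.nodup_append.2
    ⟨hp, hq, fun x hx y hy hxy =>
      Finset.disjoint_left.1 hST (hpS x hx) (hxy ▸ hqT y hy)⟩
  simpa using h

lemma crossing_comm {A B : Finset V} {R : V → V → Prop} (hR : ∀ a b, R a b → R b a) :
    (crossing A B R).val.map Prod.swap = (crossing B A R).val := by
  refine (Multiset.Nodup.ext ((Finset.nodup _).map Prod.swap_injective)
    (Finset.nodup _)).2 ?_
  rintro ⟨a, b⟩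
  simp only [Multiset.mem_map, Finset.mem_val, Prod.exists, mem_crossing, Prod.swap_prod_mk,
    Prod.mk.injEq]
  constructor
  · rintro ⟨c, d, ⟨⟨h1, h2⟩, h3⟩, rfl, rfl⟩
    exact ⟨⟨h2, h1⟩, hR _ _ h3⟩
  · rintro ⟨⟨h1, h2⟩, h3⟩
    exact ⟨b, a, ⟨⟨h2, h1⟩, hR _ _ h3⟩, rfl, rfl⟩

lemma arcsOn_disjUnion {A B : Finset V} (h : Disjoint A B) {R : V → V → Prop}
    (hR : ∀ a b, R a b → R b a) :
    arcsOn (A.disjUnion B h) R = arcsOn A R + arcsOn B R +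
      ((crossing A B R).val + (crossing A B R).val.map Prod.swap) := by
  classical
  rw [crossing_comm hR]
  ext ⟨a, b⟩
  have h1 : a ∈ A → a ∉ B := fun ha hb => Finset.disjoint_left.1 h ha hb
  have h2 : b ∈ A → b ∉ B := fun ha hb => Finset.disjoint_left.1 h ha hb
  simp only [arcsOn, Multiset.count_add, Multiset.count_eq_of_nodup (Finset.nodup _),
    Finset.mem_val, mem_crossing, Finset.mem_disjUnion]
  by_cases hR : R a b <;> by_cases ha : a ∈ A <;> by_cases hb : b ∈ A <;>
    by_cases ha' : a ∈ B <;> by_cases hb' : b ∈ B <;> simp_all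

lemma HasOpenCover.join {A B : Finset V} (h : Disjoint A B) {R : V → V → Prop}
    (hR : ∀ a b, R a b → R b a) {u v : V} (hcut : crossing A B R = {(u, v)})
    (hA : HasOpenCover A R u) (hB : HasOpenCover B R v) :
    HasCover (A.disjUnion B h) R := by
  classical
  have huv : (u, v) ∈ crossing A B R := by simp [hcut]
  obtain ⟨⟨hu, hv⟩, -⟩ := mem_crossing.1 huv
  obtain ⟨p, r, M, hM⟩ := hA
  obtain ⟨p', r', M', hM'⟩ := hB
  have hmem := fun p hp x hx => hM.mem (by simpa using hu) (p := p) hp (x := x) hx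
  have hmem' := fun p hp x hx => hM'.mem (by simpa using hv) (p := p) hp (x := x) hx
  obtain ⟨h1, h2, h3, h4, h5⟩ := hM
  obtain ⟨h1', h2', h3', h4', h5'⟩ := hM'
  simp only [Multiset.mem_cons, forall_eq_or_imp] at h1 h2 h1' h2' hmem hmem'
  simp only [last_append_cons, last_singleton, first_cons,
    Multiset.singleton_bind, Multiset.add_bind, ← Multiset.singleton_add] at h3 h4 h5 h3' h4' h5'
  have val_eq : (A.disjUnion B h).val = A.val + B.val := rfl
  refine ⟨(p ++ u :: v :: r') ::ₘ (p' ++ v :: u :: r) ::ₘ (M + M'), ?_, ?_, ?_, ?_, ?_⟩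
  · simp only [Multiset.mem_cons, Multiset.mem_add]
    rintro _ (rfl | rfl | hp | hp)
    · simp
    · simp
    · exact h1.2.2 _ hp
    · exact h1'.2.2 _ hp
  · simp only [Multiset.mem_cons, Multiset.mem_add]
    rintro _ (rfl | rfl | hp | hp)
    · exact nodup_join h h2.1 h2'.2.1 hmem.1 hmem'.2.1
    · exact nodup_join h.symm h2'.1 h2.2.1 hmem'.1 hmem.2.1
    · exact h2.2.2 _ hp
    · exact h2'.2.2 _ hp
  · have := congrArg₂ (· + ·) h3 h3'
    refine add_left_cancel (a := {u} + {v}) ?_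
    simp only [Multiset.cons_bind, Multiset.add_bind, first_append_cons, val_eq]
    convert this using 1 <;> abel
  · have := congrArg₂ (· + ·) h4 h4'
    refine add_left_cancel (a := {u} + {v}) ?_
    simp only [Multiset.cons_bind, Multiset.add_bind, last_append_cons, last_cons_cons, val_eq]
    convert this using 1 <;> abel
  · have := congrArg₂ (· + ·) h5 h5'
    rw [arcsOn_disjUnion h hR, hcut, ← this]
    simp only [Multiset.add_bind, arcs_append_cons _ (_ :: _),
      arcs_cons_cons, Finset.singleton_val, Multiset.map_singleton, Prod.swap_prod_mk,
      Multiset.singleton_bind, Multiset.add_bind, ← Multiset.singleton_add]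
    abel

lemma HasOpenCover₂.join {A B : Finset V} (h : Disjoint A B) {R : V → V → Prop}
    (hR : ∀ a b, R a b → R b a) {u v u' v' : V}
    (hcut : (crossing A B R).val = {(u, v), (u', v')})
    (hA : HasOpenCover₂ A R u u') (hB : HasOpenCover₂ B R v v') :
    HasCover (A.disjUnion B h) R := by
  classical
  have huv : (u, v) ∈ crossing A B R := by simp [← Finset.mem_val, hcut]
  have huv' : (u', v') ∈ crossing A B R := by simp [← Finset.mem_val, hcut]
  obtain ⟨⟨hu, hv⟩, -⟩ := mem_crossing.1 huv
  obtain ⟨⟨hu', hv'⟩, -⟩ := mem_crossing.1 huv'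
  obtain ⟨p, q, r, s, M, hM⟩ := hA
  obtain ⟨p', q', r', s', M', hM'⟩ := hB
  have hmem := fun p hp x hx => hM.mem (by simp [hu, hu']) (p := p) hp (x := x) hx
  have hmem' := fun p hp x hx => hM'.mem (by simp [hv, hv']) (p := p) hp (x := x) hx
  obtain ⟨h1, h2, h3, h4, h5⟩ := hM
  obtain ⟨h1', h2', h3', h4', h5'⟩ := hM'
  simp only [Multiset.mem_cons, forall_eq_or_imp] at h1 h2 h1' h2' hmem hmem'
  simp only [last_append_cons, last_singleton, first_cons,
    Multiset.singleton_bind, Multiset.add_bind, ← Multiset.singleton_add] at h3 h4 h5 h3' h4' h5'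
  have val_eq : (A.disjUnion B h).val = A.val + B.val := rfl
  refine ⟨(p ++ u :: v :: r') ::ₘ (p' ++ v :: u :: r) ::ₘ (q ++ u' :: v' :: s') ::ₘ
    (q' ++ v' :: u' :: s) ::ₘ (M + M'), ?_, ?_, ?_, ?_, ?_⟩
  · simp only [Multiset.mem_cons, Multiset.mem_add]
    rintro _ (rfl | rfl | rfl | rfl | hp | hp)
    iterate 4 simp
    · exact h1.2.2.2.2 _ hp
    · exact h1'.2.2.2.2 _ hp
  · simp only [Multiset.mem_cons, Multiset.mem_add]
    rintro _ (rfl | rfl | rfl | rfl | hp | hp)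
    · exact nodup_join h h2.1 h2'.2.2.1 hmem.1 hmem'.2.2.1
    · exact nodup_join h.symm h2'.1 h2.2.2.1 hmem'.1 hmem.2.2.1
    · exact nodup_join h h2.2.1 h2'.2.2.2.1 hmem.2.1 hmem'.2.2.2.1
    · exact nodup_join h.symm h2'.2.1 h2.2.2.2.1 hmem'.2.1 hmem.2.2.2.1
    · exact h2.2.2.2.2 _ hp
    · exact h2'.2.2.2.2 _ hp
  · have := congrArg₂ (· + ·) h3 h3'
    refine add_left_cancel (a := {u} + {v} + {u'} + {v'}) ?_
    simp only [Multiset.cons_bind, Multiset.add_bind, first_append_cons, val_eq]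
    convert this using 1 <;> abel
  · have := congrArg₂ (· + ·) h4 h4'
    refine add_left_cancel (a := {u} + {v} + {u'} + {v'}) ?_
    simp only [Multiset.cons_bind, Multiset.add_bind, last_append_cons, last_cons_cons, val_eq]
    convert this using 1 <;> abel
  · have := congrArg₂ (· + ·) h5 h5'
    rw [arcsOn_disjUnion h hR, hcut, ← this]
    simp only [Multiset.add_bind, arcs_append_cons _ (_ :: _),
      arcs_cons_cons, Multiset.insert_eq_cons, Multiset.map_add, Multiset.map_singleton,
      Prod.swap_prod_mk, Multiset.singleton_bind, Multiset.add_bind, ← Multiset.singleton_add]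
    abel

lemma HasCover.hasOpenCover {A : Finset V} {R : V → V → Prop} {u : V} (hu : u ∈ A)
    (h : HasCover A R) : HasOpenCover A R u := by
  obtain ⟨L, h1, h2, h3, h4, h5⟩ := h
  have : u ∈ L.bind last := by rw [h4]; exact hu
  obtain ⟨p, hp, hup⟩ := Multiset.mem_bind.1 this
  obtain ⟨q, rfl⟩ := mem_last_iff.1 hup
  obtain ⟨M, rfl⟩ := Multiset.exists_cons_of_mem hp
  simp only [Multiset.mem_cons, forall_eq_or_imp] at h1 h2
  refine ⟨q, [], M, ?_, ?_, ?_, ?_, ?_⟩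
  · simpa using h1.2
  · simpa using h2
  · rw [← h3]
    simp only [first_cons, Multiset.singleton_bind, Multiset.add_bind, ← Multiset.singleton_add]
    abel
  · rw [← h4]
    simp only [last_singleton, Multiset.singleton_bind, Multiset.add_bind, ← Multiset.singleton_add]
    abel
  · simpa using h5

lemma HasCover.hasOpenCover₂ {A : Finset V} {R : V → V → Prop} {u w : V} (hu : u ∈ A)
    (hw : w ∈ A) (huw : R u w) (h : HasCover A R) : HasOpenCover₂ A R u u := by
  obtain ⟨L, h1, h2, h3, h4, h5⟩ := h
  have hl : u ∈ L.bind last := by rw [h4]; exact hu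
  obtain ⟨p, hp, hup⟩ := Multiset.mem_bind.1 hl
  obtain ⟨q, rfl⟩ := mem_last_iff.1 hup
  obtain ⟨M, rfl⟩ := Multiset.exists_cons_of_mem hp
  simp only [Multiset.mem_cons, forall_eq_or_imp] at h1 h2
  rcases List.eq_nil_or_concat q with rfl | ⟨q, b, rfl⟩
  · have harc : (u, w) ∈ M.bind arcs := by
      have : (u, w) ∈ arcsOn A R := mem_arcsOn.2 ⟨⟨hu, hw⟩, huw⟩
      simpa [← h5] using this
    obtain ⟨p, hp, hup⟩ := Multiset.mem_bind.1 harc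
    obtain ⟨q, r, rfl⟩ := mem_arcs_iff.1 hup
    obtain ⟨M, rfl⟩ := Multiset.exists_cons_of_mem hp
    simp only [Multiset.mem_cons, forall_eq_or_imp] at h1 h2
    have hnd := List.nodup_append.1 h2.2.1
    refine ⟨q, [], w :: r, [], M, ?_, ?_, ?_, ?_, ?_⟩
    · simpa using h1.2.2
    · simp only [Multiset.mem_cons, forall_eq_or_imp]
      refine ⟨?_, by simp, hnd.2.1, by simp, h2.2.2⟩
      exact h2.2.1.sublist (by simp)
    · rw [← h3]
      simp only [first_append_cons _ (_ :: _), first_cons, List.nil_append,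
        Multiset.singleton_bind, Multiset.add_bind, ← Multiset.singleton_add]
      abel
    · rw [← h4]
      simp only [last_append_cons, last_singleton, List.nil_append,
        last_cons_cons, Multiset.singleton_bind, Multiset.add_bind, ← Multiset.singleton_add]
      abel
    · rw [← h5]
      simp only [arcs_append_cons _ (_ :: _), arcs_cons_cons,
        List.nil_append, arcs_singleton, Multiset.singleton_bind, Multiset.add_bind, ← Multiset.singleton_add]
      abel
  · have hf : u ∈ (M.bind first) := by
      have h : u ∈ A.val := hu
      rw [← h3] at h
      simp only [Multiset.cons_bind, Multiset.mem_add] at h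
      refine h.resolve_left fun h => ?_
      obtain ⟨r, hr⟩ := mem_first_iff.1 h
      rw [hr] at h2
      cases q with
      | nil =>
        simp at hr
        simp [← hr.2] at h2
      | cons c q =>
        simp at hr
        simp [← hr.2] at h2
    obtain ⟨p, hp, hup⟩ := Multiset.mem_bind.1 hf
    obtain ⟨r, rfl⟩ := mem_first_iff.1 hup
    obtain ⟨M, rfl⟩ := Multiset.exists_cons_of_mem hp
    refine ⟨q ++ [b], [], r, [], M, ?_, ?_, ?_, ?_, ?_⟩
    · simp only [Multiset.mem_cons, forall_eq_or_imp] at h1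
      simpa using h1.2.2
    · simp only [Multiset.mem_cons, forall_eq_or_imp] at h2 ⊢
      exact ⟨by simpa using h2.1, by simp, h2.2.1, by simp, h2.2.2⟩
    · rw [← h3]
      simp only [first_cons, List.nil_append, List.concat_eq_append,
        Multiset.singleton_bind, Multiset.add_bind, ← Multiset.singleton_add]
      abel
    · rw [← h4]
      simp only [last_singleton, List.nil_append, List.concat_eq_append,
        Multiset.singleton_bind, Multiset.add_bind, ← Multiset.singleton_add]
      abel
    · simpa using h5

/-- A family of nonempty lists with exactly two ends consists of two lists. -/
lemma eq_pair_of_bind_last {B : Multiset (List V)} {u v : V} (hB : ∀ p ∈ B, p ≠ [])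
    (h : B.bind last = {u, v}) : ∃ p q, B = {p ++ [u], q ++ [v]} := by
  have hu : u ∈ B.bind last := by simp [h]
  obtain ⟨p, hp, hup⟩ := Multiset.mem_bind.1 hu
  obtain ⟨p, rfl⟩ := mem_last_iff.1 hup
  obtain ⟨B, rfl⟩ := Multiset.exists_cons_of_mem hp
  have h' : B.bind last = {v} := by simpa using h
  have hv : v ∈ B.bind last := by simp [h']
  obtain ⟨q, hq, hvq⟩ := Multiset.mem_bind.1 hv
  obtain ⟨q, rfl⟩ := mem_last_iff.1 hvq
  obtain ⟨B, rfl⟩ := Multiset.exists_cons_of_mem hq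
  have h'' : B.bind last = 0 :=
    (Multiset.cons_inj_right v).1 (by simpa using h')
  refine ⟨p, q, ?_⟩
  suffices B = 0 by subst this; rfl
  refine Multiset.eq_zero_of_forall_notMem fun r hr => ?_
  obtain ⟨c, a, rfl⟩ := (List.eq_nil_or_concat r).resolve_left (hB r (by simp [hr]))
  have : a ∈ B.bind last := Multiset.mem_bind.2 ⟨_, hr, by simp⟩
  simp [h''] at this

/-- A family of nonempty lists with exactly two starts consists of two lists. -/
lemma eq_pair_of_bind_first {B : Multiset (List V)} {u v : V} (hB : ∀ p ∈ B, p ≠ [])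
    (h : B.bind first = {u, v}) : ∃ p q, B = {u :: p, v :: q} := by
  have hu : u ∈ B.bind first := by simp [h]
  obtain ⟨p, hp, hup⟩ := Multiset.mem_bind.1 hu
  obtain ⟨p, rfl⟩ := mem_first_iff.1 hup
  obtain ⟨B, rfl⟩ := Multiset.exists_cons_of_mem hp
  have h' : B.bind first = {v} := by simpa using h
  have hv : v ∈ B.bind first := by simp [h']
  obtain ⟨q, hq, hvq⟩ := Multiset.mem_bind.1 hv
  obtain ⟨q, rfl⟩ := mem_first_iff.1 hvq
  obtain ⟨B, rfl⟩ := Multiset.exists_cons_of_mem hq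
  have h'' : B.bind first = 0 :=
    (Multiset.cons_inj_right v).1 (by simpa using h')
  refine ⟨p, q, ?_⟩
  suffices B = 0 by subst this; rfl
  refine Multiset.eq_zero_of_forall_notMem fun r hr => ?_
  obtain ⟨a, c, rfl⟩ := List.exists_cons_of_ne_nil (hB r (by simp [hr]))
  have : a ∈ B.bind first := Multiset.mem_bind.2 ⟨_, hr, by simp⟩
  simp [h''] at this

/-- Deleting a vertex with exactly two neighbours leaves an open cover. -/
lemma HasCover.hasOpenCover₂_of_insert [DecidableEq V] {A : Finset V} {R R' : V → V → Prop}
    {x u v : V} (hx : x ∉ A) (huv : u ≠ v) (hu : u ∈ A) (hv : v ∈ A)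
    (h : HasCover (insert x A) R') (hR : ∀ a ∈ A, ∀ b ∈ A, R' a b ↔ R a b)
    (hx1 : ∀ a, R' a x ↔ a = u ∨ a = v) (hx2 : ∀ a, R' x a ↔ a = u ∨ a = v) :
    HasOpenCover₂ A R u v := by
  obtain ⟨L, h1, h2, h3, h4, h5⟩ := h
  obtain ⟨B, C, M, e0, e1, e2, e3, e4, e5⟩ :=
    exists_fragments x L fun p hp => ⟨h2 p hp, h1 p hp⟩
  rw [h5] at e3 e4 e5
  have hA : (insert x A).val.filter (· ≠ x) = A.val := by
    rw [Finset.insert_val_of_notMem hx, Multiset.filter_cons_of_neg _ (by simp)]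
    exact Multiset.filter_eq_self.2 fun a ha hax => hx (hax ▸ ha)
  have hne : ({u, v} : Multiset V).Nodup := by simpa using huv
  have f4 : (arcsOn (insert x A) R').filter (fun e => e.2 = x)
      = ({u, v} : Multiset V).map fun a => (a, x) := by
    refine (Multiset.Nodup.ext ((nodup_arcsOn _ _).filter _)
      (hne.map (Prod.mk_left_injective x))).2 ?_
    rintro ⟨a, b⟩
    simp only [Multiset.mem_filter, mem_arcsOn, Multiset.mem_map, Multiset.insert_eq_cons,
      Multiset.mem_cons, Multiset.mem_singleton, Prod.mk.injEq, Finset.mem_insert]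
    constructor
    · rintro ⟨⟨-, h⟩, rfl⟩
      exact ⟨a, (hx1 a).1 h, rfl, rfl⟩
    · rintro ⟨a, ha, rfl, rfl⟩
      refine ⟨⟨⟨.inr ?_, .inl rfl⟩, (hx1 a).2 ha⟩, rfl⟩
      rcases ha with rfl | rfl <;> assumption
  have f5 : (arcsOn (insert x A) R').filter (fun e => e.1 = x)
      = ({u, v} : Multiset V).map fun a => (x, a) := by
    refine (Multiset.Nodup.ext ((nodup_arcsOn _ _).filter _)
      (hne.map (Prod.mk_right_injective x))).2 ?_
    rintro ⟨b, a⟩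
    simp only [Multiset.mem_filter, mem_arcsOn, Multiset.mem_map, Multiset.insert_eq_cons,
      Multiset.mem_cons, Multiset.mem_singleton, Prod.mk.injEq, Finset.mem_insert]
    constructor
    · rintro ⟨⟨-, h⟩, rfl⟩
      exact ⟨a, (hx2 a).1 h, rfl, rfl⟩
    · rintro ⟨a, ha, rfl, rfl⟩
      refine ⟨⟨⟨.inl rfl, .inr ?_⟩, (hx2 a).2 ha⟩, rfl⟩
      rcases ha with rfl | rfl <;> assumption
  have f3 : (arcsOn (insert x A) R').filter (fun e => e.1 ≠ x ∧ e.2 ≠ x) = arcsOn A R := by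
    refine (Multiset.Nodup.ext ((nodup_arcsOn _ _).filter _) (nodup_arcsOn _ _)).2 ?_
    rintro ⟨a, b⟩
    simp only [Multiset.mem_filter, mem_arcsOn, Finset.mem_insert]
    constructor
    · rintro ⟨⟨⟨ha, hb⟩, h⟩, ha', hb'⟩
      have ha := ha.resolve_left ha'
      have hb := hb.resolve_left hb'
      exact ⟨⟨ha, hb⟩, (hR a ha b hb).1 h⟩
    · rintro ⟨⟨ha, hb⟩, h⟩
      exact ⟨⟨⟨.inr ha, .inr hb⟩, (hR a ha b hb).2 h⟩, fun h => hx (h ▸ ha),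
        fun h => hx (h ▸ hb)⟩
  rw [f4] at e4
  rw [f5] at e5
  have g4 := Multiset.map_injective (Prod.mk_left_injective x) e4
  have g5 := Multiset.map_injective (Prod.mk_right_injective x) e5
  rw [h3, hA] at e1
  rw [h4, hA] at e2
  rw [f3] at e3
  simp only [Multiset.mem_add] at e0
  obtain ⟨p, q, rfl⟩ := eq_pair_of_bind_last (fun p hp => (e0 p (.inl (.inl hp))).2) g4
  obtain ⟨r, s, rfl⟩ := eq_pair_of_bind_first (fun p hp => (e0 p (.inl (.inr hp))).2) g5
  refine ⟨p, q, r, s, M, ?_, ?_, ?_, ?_, ?_⟩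
  · intro p hp
    refine (e0 p ?_).2
    simpa [or_assoc] using hp
  · intro p hp
    refine (e0 p ?_).1
    simpa [or_assoc] using hp
  · rw [← e1]
    simp only [Multiset.insert_eq_cons, Multiset.singleton_bind,
      first_cons, Multiset.singleton_bind, Multiset.add_bind, ← Multiset.singleton_add]
    abel
  · rw [← e2]
    simp only [Multiset.insert_eq_cons, Multiset.singleton_bind,
      last_append_cons, last_singleton, Multiset.singleton_bind, Multiset.add_bind, ← Multiset.singleton_add]
    abel
  · rw [← e3]
    simp only [Multiset.insert_eq_cons, Multiset.cons_bind, Multiset.singleton_bind]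
    abel

end OpenCovers

section DegreeTwo

variable {V : Type*}

/-- A path system for `S`, `T`, `E` extended by a vertex `u` joined to `v` and `w`. -/
def HasExtension (u v w : V) (S T : Multiset V) (E : Multiset (V × V)) : Prop :=
  ∃ L, IsPathSystem L (u ::ₘ S) (u ::ₘ T) (E + {(v, u), (u, v), (w, u), (u, w)})

lemma HasExtension.symm {u v w : V} {S T : Multiset V} {E : Multiset (V × V)}
    (h : HasExtension u v w S T E) : HasExtension u w v S T E := by
  obtain ⟨L, hL⟩ := h
  refine ⟨L, ?_⟩
  have : ({(v, u), (u, v), (w, u), (u, w)} : Multiset (V × V))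
      = {(w, u), (u, w), (v, u), (u, v)} := by
    simp only [Multiset.insert_eq_cons, ← Multiset.singleton_add]
    abel
  rwa [← this]

lemma IsPathSystem.replace {u v w : V} {S T : Multiset V} {E : Multiset (V × V)}
    {O M : Multiset (List V)} (h : IsPathSystem (O + M) S T E) (N : Multiset (List V))
    (hN : ∀ p ∈ N, p ≠ [] ∧ p.Nodup) (hf : N.bind first = {u} + O.bind first)
    (hl : N.bind last = {u} + O.bind last)
    (ha : N.bind arcs = O.bind arcs + ({(v, u)} + ({(u, v)} + ({(w, u)} + {(u, w)})))) :
    HasExtension u v w S T E := by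
  obtain ⟨h1, h2, h3, h4, h5⟩ := h
  simp only [Multiset.add_bind, Multiset.mem_add] at h1 h2 h3 h4 h5
  refine ⟨N + M, ?_, ?_, ?_, ?_, ?_⟩
  · rintro p hp
    rcases Multiset.mem_add.1 hp with hp | hp
    exacts [(hN p hp).1, h1 p (.inr hp)]
  · rintro p hp
    rcases Multiset.mem_add.1 hp with hp | hp
    exacts [(hN p hp).2, h2 p (.inr hp)]
  · rw [Multiset.add_bind, hf, ← h3, ← Multiset.singleton_add, add_assoc]
  · rw [Multiset.add_bind, hl, ← h4, ← Multiset.singleton_add, add_assoc]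
  · rw [Multiset.add_bind, ha, ← h5]
    simp only [Multiset.insert_eq_cons, ← Multiset.singleton_add]
    abel

lemma IsPathSystem.extend_or_exists_path {u v w : V} {S T : Multiset V}
    {E : Multiset (V × V)} {L : Multiset (List V)} (h : IsPathSystem L S T E)
    (hu : ∀ p ∈ L, u ∉ p) (huv : u ≠ v) (huw : u ≠ w) (hvw : v ≠ w) (hv : v ∈ T)
    (hw : w ∈ T) (hw' : w ∈ S) :
    HasExtension u v w S T E ∨ ∃ W, w :: W ++ [v] ∈ L := by
  have hv' : v ∈ L.bind last := by rwa [h.bind_last]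
  obtain ⟨p, hp, hvp⟩ := Multiset.mem_bind.1 hv'
  obtain ⟨e, rfl⟩ := mem_last_iff.1 hvp
  obtain ⟨M, rfl⟩ := Multiset.exists_cons_of_mem hp
  have hnd := h.nodup
  simp only [Multiset.mem_cons, forall_eq_or_imp] at hu hnd
  by_cases hwe : w ∈ e
  · obtain ⟨Z, W, rfl⟩ := List.append_of_mem hwe
    have hs : w ∈ first (Z ++ w :: W ++ [v]) + M.bind first := by
      rw [← Multiset.cons_bind, h.bind_first]; exact hw'
    rcases Multiset.mem_add.1 hs with hs | hs
    · right
      refine ⟨W, ?_⟩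
      cases Z with
      | nil => simp
      | cons z Z =>
        simp only [List.cons_append, first_cons, Multiset.mem_singleton] at hs
        simp [hs] at hnd
    · left
      obtain ⟨p, hp, hwp⟩ := Multiset.mem_bind.1 hs
      obtain ⟨s, rfl⟩ := mem_first_iff.1 hwp
      obtain ⟨M, rfl⟩ := Multiset.exists_cons_of_mem hp
      simp only [Multiset.mem_cons, forall_eq_or_imp] at hu hnd
      have h' : IsPathSystem ({Z ++ w :: W ++ [v], w :: s} + M) S T E := by
        simpa only [Multiset.insert_eq_cons, Multiset.cons_add, Multiset.singleton_add] using h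
      refine h'.replace {Z ++ [w, u, v], w :: W ++ [v, u], u :: w :: s} ?_ ?_ ?_ ?_
      · simp only [Multiset.insert_eq_cons, Multiset.mem_cons, forall_eq_or_imp,
          Multiset.mem_singleton, forall_eq]
        simp [List.nodup_append] at hu hnd ⊢
        grind
      · simp only [Multiset.insert_eq_cons, Multiset.cons_bind, Multiset.singleton_bind,
          List.append_assoc, List.cons_append, first_append_cons _ (_ :: _),
          first_append_cons _ (_ ++ _), first_cons]
        abel
      · simp only [Multiset.insert_eq_cons, Multiset.cons_bind, Multiset.singleton_bind]
        rw [last_append_cons _ (_ :: _), last_append_cons (w :: W) (_ :: _), last_append_cons (Z ++ _)]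
        simp only [last_cons_cons, last_singleton]
        abel
      · simp only [Multiset.insert_eq_cons, Multiset.cons_bind, Multiset.singleton_bind]
        simp only [List.append_assoc, List.cons_append]
        rw [arcs_append_cons Z (W ++ [v]), ← List.cons_append (a := w) (bs := [v, u]),
          ← List.cons_append (a := w) (bs := [v]), arcs_append_cons (w :: W) [u],
          arcs_append_cons Z [u, v]]
        simp only [arcs_cons_cons, arcs_singleton, ← Multiset.singleton_add]
        abel
  · left
    have hs : w ∈ last (e ++ [v]) + M.bind last := by
      rw [← Multiset.cons_bind, h.bind_last]; exact hw
    have hs := (Multiset.mem_add.1 hs).resolve_left (by simpa using hvw.symm)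
    obtain ⟨p, hp, hwp⟩ := Multiset.mem_bind.1 hs
    obtain ⟨s, rfl⟩ := mem_last_iff.1 hwp
    obtain ⟨M, rfl⟩ := Multiset.exists_cons_of_mem hp
    simp only [Multiset.mem_cons, forall_eq_or_imp] at hu hnd
    have h' : IsPathSystem ({e ++ [v], s ++ [w]} + M) S T E := by
      simpa only [Multiset.insert_eq_cons, Multiset.cons_add, Multiset.singleton_add] using h
    refine h'.replace {e ++ [v, u, w], s ++ [w, u], [u, v]} ?_ ?_ ?_ ?_
    · simp only [Multiset.insert_eq_cons, Multiset.mem_cons, forall_eq_or_imp,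
        Multiset.mem_singleton, forall_eq]
      simp [List.nodup_append] at hu hnd ⊢
      grind
    · simp only [Multiset.insert_eq_cons, Multiset.cons_bind, Multiset.singleton_bind,
        first_append_cons _ (_ :: _), first_cons]
      abel
    · simp only [Multiset.insert_eq_cons, Multiset.cons_bind, Multiset.singleton_bind,
        last_append_cons, last_cons_cons, last_singleton]
      abel
    · simp only [Multiset.insert_eq_cons, Multiset.cons_bind, Multiset.singleton_bind]
      simp only [arcs_append_cons _ (_ :: _), arcs_cons_cons, arcs_singleton,
        ← Multiset.singleton_add]
      abel

lemma IsPathSystem.extend_of_mem {u v w : V} {S T : Multiset V} {E : Multiset (V × V)}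
    {W W' p : List V} {M : Multiset (List V)}
    (h : IsPathSystem ((w :: W ++ [v]) ::ₘ (v :: W' ++ [w]) ::ₘ M) S T E)
    (hu : ∀ p ∈ (w :: W ++ [v]) ::ₘ (v :: W' ++ [w]) ::ₘ M, u ∉ p) (hp : p ∈ M)
    (hv : v ∈ p) : HasExtension u v w S T E := by
  obtain ⟨X, Y, rfl⟩ := List.append_of_mem hv
  obtain ⟨M, rfl⟩ := Multiset.exists_cons_of_mem hp
  have hnd := h.nodup
  simp only [Multiset.mem_cons, forall_eq_or_imp] at hu hnd
  have h' : IsPathSystem ({w :: W ++ [v], v :: W' ++ [w], X ++ v :: Y} + M) S T E := by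
    simpa only [Multiset.insert_eq_cons, Multiset.cons_add, Multiset.singleton_add] using h
  by_cases hX : w ∈ X
  · have hY : w ∉ Y := fun hY => (List.nodup_append.1 hnd.2.2.1).2.2 w hX w (by simp [hY]) rfl
    refine h'.replace {X ++ [v, u], w :: u :: v :: Y, u :: w :: W ++ [v], v :: W' ++ [w]}
      ?_ ?_ ?_ ?_
    · simp only [Multiset.insert_eq_cons, Multiset.mem_cons, forall_eq_or_imp,
        Multiset.mem_singleton, forall_eq]
      simp [List.nodup_append] at hu hnd ⊢
      grind
    · simp only [Multiset.insert_eq_cons, Multiset.cons_bind, Multiset.singleton_bind,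
        List.cons_append, first_append_cons _ (_ :: _), first_append_cons _ Y, first_cons]
      abel
    · simp only [Multiset.insert_eq_cons, Multiset.cons_bind, Multiset.singleton_bind,
        last_append_cons, last_cons_cons, last_singleton]
      abel
    · simp only [Multiset.insert_eq_cons, Multiset.cons_bind, Multiset.singleton_bind]
      simp only [List.cons_append, arcs_append_cons _ Y, arcs_append_cons _ (_ :: _),
        arcs_cons_cons, arcs_singleton, ← Multiset.singleton_add]
      abel
  · refine h'.replace {X ++ [v, u, w], u :: v :: Y, v :: W' ++ [w, u], w :: W ++ [v]}
      ?_ ?_ ?_ ?_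
    · simp only [Multiset.insert_eq_cons, Multiset.mem_cons, forall_eq_or_imp,
        Multiset.mem_singleton, forall_eq]
      simp [List.nodup_append] at hu hnd ⊢
      grind
    · simp only [Multiset.insert_eq_cons, Multiset.cons_bind, Multiset.singleton_bind,
        List.cons_append, first_append_cons _ (_ :: _), first_append_cons _ Y, first_cons]
      abel
    · simp only [Multiset.insert_eq_cons, Multiset.cons_bind, Multiset.singleton_bind,
        last_append_cons, last_cons_cons, last_singleton]
      abel
    · simp only [Multiset.insert_eq_cons, Multiset.cons_bind, Multiset.singleton_bind]
      simp only [arcs_append_cons _ Y, arcs_append_cons _ (_ :: _), arcs_cons_cons,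
        arcs_singleton, ← Multiset.singleton_add]
      abel

lemma IsPathSystem.extend_of_cons {u v w z : V} {S T : Multiset V} {E : Multiset (V × V)}
    {W W' : List V} {M : Multiset (List V)}
    (h : IsPathSystem ((w :: W ++ [v]) ::ₘ (v :: z :: W' ++ [w]) ::ₘ M) S T E)
    (hu : ∀ p ∈ (w :: W ++ [v]) ::ₘ (v :: z :: W' ++ [w]) ::ₘ M, u ∉ p)
    (hM : ∀ p ∈ M, v ∉ p) (hz : z ∈ S) : HasExtension u v w S T E := by
  have hnd := h.nodup
  simp only [Multiset.mem_cons, forall_eq_or_imp] at hu hnd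
  have hz' : z ∈ M.bind first := by
    rw [← h.bind_first] at hz
    simp only [Multiset.cons_bind, List.cons_append, first_cons, Multiset.mem_add,
      Multiset.mem_singleton] at hz
    rcases hz with rfl | rfl | hz
    · simp at hnd
    · simp at hnd
    · exact hz
  obtain ⟨p, hp, hzp⟩ := Multiset.mem_bind.1 hz'
  obtain ⟨s, rfl⟩ := mem_first_iff.1 hzp
  obtain ⟨M, rfl⟩ := Multiset.exists_cons_of_mem hp
  simp only [Multiset.mem_cons, forall_eq_or_imp] at hu hnd hM
  have h' : IsPathSystem ({w :: W ++ [v], v :: z :: W' ++ [w], z :: s} + M) S T E := by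
    simpa only [Multiset.insert_eq_cons, Multiset.cons_add, Multiset.singleton_add] using h
  refine h'.replace {z :: W' ++ [w, u, v], v :: z :: s, w :: W ++ [v, u], [u, w]} ?_ ?_ ?_ ?_
  · simp only [Multiset.insert_eq_cons, Multiset.mem_cons, forall_eq_or_imp,
      Multiset.mem_singleton, forall_eq]
    simp [List.nodup_append] at hu hnd hM ⊢
    grind
  · simp only [Multiset.insert_eq_cons, Multiset.cons_bind, Multiset.singleton_bind,
      List.cons_append, first_cons]
    abel
  · simp only [Multiset.insert_eq_cons, Multiset.cons_bind, Multiset.singleton_bind,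
      last_append_cons, last_cons_cons, last_singleton]
    abel
  · simp only [Multiset.insert_eq_cons, Multiset.cons_bind, Multiset.singleton_bind]
    rw [show arcs (v :: z :: W' ++ [w]) = (v, z) ::ₘ arcs (z :: W' ++ [w]) by simp]
    simp only [arcs_append_cons _ (_ :: _), arcs_cons_cons, arcs_singleton,
      ← Multiset.singleton_add]
    abel

/-- Adding a vertex `u` of degree two, with neighbours `v` and `w`. -/
lemma HasCover.insert_or_eq_pair [DecidableEq V] {B : Finset V} {R : V → V → Prop}
    {u v w : V} (hR : ∀ a b, R a b → R b a) (hu : u ∉ B) (hvw : v ≠ w)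
    (hcut : (crossing {u} B R).val = {(u, v), (u, w)}) (hirr : ¬ R u u)
    (hc : ConnectedOn B R) (h : HasCover B R) :
    HasCover (insert u B) R ∨ (B = {v, w} ∧ R v w) := by
  have hv : (u, v) ∈ crossing {u} B R := by simp [← Finset.mem_val, hcut]
  have hw : (u, w) ∈ crossing {u} B R := by simp [← Finset.mem_val, hcut]
  obtain ⟨⟨-, hv⟩, -⟩ := mem_crossing.1 hv
  obtain ⟨⟨-, hw⟩, -⟩ := mem_crossing.1 hw
  have huv : u ≠ v := fun h => hu (h ▸ hv)
  have huw : u ≠ w := fun h => hu (h ▸ hw)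
  obtain ⟨L, hL⟩ := h
  have hmem := fun p hp x hx => hL.mem (fun _ h => h) (p := p) hp (x := x) hx
  have huL : ∀ p ∈ L, u ∉ p := fun p hp h => hu (hmem p hp u h)
  suffices HasExtension u v w B.val B.val (arcsOn B R) ∨ (B = {v, w} ∧ R v w) by
    refine this.imp_left ?_
    rintro ⟨L', hL'⟩
    refine ⟨L', ?_⟩
    have hd : Disjoint {u} B := Finset.disjoint_singleton_left.2 hu
    have he : insert u B = ({u} : Finset V).disjUnion B hd := by
      ext x; simp
    have h0 : arcsOn {u} R = 0 := by
      refine Multiset.eq_zero_of_forall_notMem ?_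
      rintro ⟨a, b⟩ hab
      simp only [mem_arcsOn, Finset.mem_singleton] at hab
      obtain ⟨⟨rfl, rfl⟩, hab⟩ := hab
      exact hirr hab
    rw [Finset.insert_val_of_notMem hu]
    convert hL' using 1
    rw [he, arcsOn_disjUnion hd hR, hcut, h0, zero_add]
    simp only [Multiset.insert_eq_cons, ← Multiset.singleton_add, Multiset.map_add,
      Multiset.map_singleton, Prod.swap_prod_mk]
    abel
  rcases hL.extend_or_exists_path huL huv huw hvw hv hw hw with h | ⟨W, hW⟩
  · exact .inl h
  rcases hL.extend_or_exists_path huL huw huv hvw.symm hw hv hv with h | ⟨W', hW'⟩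
  · exact .inl h.symm
  obtain ⟨M, rfl⟩ := Multiset.exists_cons_of_mem hW
  have hW' : v :: W' ++ [w] ∈ M := by
    refine (Multiset.mem_cons.1 hW').resolve_left fun h => hvw ?_
    simp at h
    exact h.1
  obtain ⟨M, rfl⟩ := Multiset.exists_cons_of_mem hW'
  have hL' := hL
  have huL' := huL
  rw [Multiset.cons_swap] at hL' huL'
  by_cases hMv : ∃ p ∈ M, v ∈ p
  · obtain ⟨p, hp, hvp⟩ := hMv
    exact .inl (hL.extend_of_mem huL hp hvp)
  by_cases hMw : ∃ p ∈ M, w ∈ p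
  · obtain ⟨p, hp, hwp⟩ := hMw
    exact .inl (hL'.extend_of_mem huL' hp hwp).symm
  push Not at hMv hMw
  simp only [Multiset.mem_cons, forall_eq_or_imp] at hmem
  cases W' with
  | cons z W' => exact .inl (hL.extend_of_cons huL hMv (hmem.2.1 z (by simp)))
  | nil =>
    cases W with
    | cons z W => exact .inl (hL'.extend_of_cons huL' hMw (hmem.1 z (by simp))).symm
    | nil =>
      right
      have harc : ∀ a b, a ∈ B → b ∈ B → R a b → (a = v ∨ a = w) → (b = v ∨ b = w) := by
        intro a b ha hb hab ha'
        have := mem_arcsOn.2 ⟨⟨ha, hb⟩, hab⟩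
        rw [← hL.bind_arcs] at this
        simp only [Multiset.cons_bind, List.cons_append, List.nil_append, arcs_cons_cons,
          arcs_singleton, Multiset.mem_add, Multiset.mem_cons, Prod.mk.injEq,
          Multiset.notMem_zero, or_false] at this
        rcases this with ⟨-, h⟩ | ⟨-, h⟩ | h
        · exact .inl h
        · exact .inr h
        · obtain ⟨p, hp, hap⟩ := Multiset.mem_bind.1 h
          have := (mem_of_mem_arcs hap).1
          rcases ha' with rfl | rfl
          exacts [absurd this (hMv p hp), absurd this (hMw p hp)]
      constructor
      · by_contra hne
        obtain ⟨a, ha, b, hb, hbT, hab⟩ := hc {v, w}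
          (by simp [Finset.insert_subset_iff, hv, hw]) (by simp) (Ne.symm hne)
        have ha' : a = v ∨ a = w := by simpa using ha
        have haB : a ∈ B := by rcases ha' with rfl | rfl <;> assumption
        exact hbT (by simpa using harc a b haB hb hab ha')
      · have : (v, w) ∈ arcsOn B R := by simp [← hL.bind_arcs]
        exact (mem_arcsOn.1 this).2

end DegreeTwo

section SmallCases

variable {V : Type*}

lemma isPathSystem_of_fin {n : ℕ} {L : Multiset (List (Fin n))} {s : Multiset (Fin n)}
    {r : Fin n → Fin n → Prop} [DecidableRel r]
    (h : (∀ p ∈ L, p ≠ [] ∧ p.Nodup) ∧ L.bind first = s ∧ L.bind last = s ∧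
      L.bind arcs = (Finset.univ.filter fun x : Fin n × Fin n => r x.1 x.2).val)
    {A : Finset V} {R : V → V → Prop} {f : Fin n ↪ V} (hf : Finset.univ.map f = A)
    (hR : ∀ a b, R (f a) (f b) ↔ r a b) :
    IsPathSystem (L.map (List.map f)) (s.map f) (s.map f) (arcsOn A R) := by
  have h' : IsPathSystem L s s (arcsOn Finset.univ r) := by
    refine ⟨fun p hp => (h.1 p hp).1, fun p hp => (h.1 p hp).2, h.2.1, h.2.2.1, ?_⟩
    rw [h.2.2.2]
    refine (Multiset.Nodup.ext (Finset.nodup _) (nodup_arcsOn _ _)).2 ?_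
    rintro ⟨a, b⟩
    simp [mem_arcsOn]
  rw [← hf, ← arcsOn_map f fun a _ b _ => hR a b]
  exact h'.map f.injective

lemma exists_embedding {A : Finset V} {l : List V} {n : ℕ} (hl : l.Nodup)
    (hn : l.length = n) (hA : ∀ x, x ∈ A ↔ x ∈ l) :
    ∃ f : Fin n ↪ V, Finset.univ.map f = A ∧ ∀ i : Fin n, l[(i : ℕ)]? = some (f i) := by
  subst hn
  refine ⟨⟨l.get, List.nodup_iff_injective_get.1 hl⟩, ?_, by simp⟩
  ext x
  simp [hA, List.mem_iff_get]

lemma exists_embedding_of_mem [DecidableEq V] {A : Finset V} {n : ℕ} {u : V} (hu : u ∈ A)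
    (hn : A.card = n + 1) :
    ∃ f : Fin (n + 1) ↪ V, Finset.univ.map f = A ∧ f 0 = u := by
  obtain ⟨f, hf, h⟩ := exists_embedding (A := A) (l := u :: (A.erase u).toList) (n := n + 1)
    (by simp [Finset.nodup_toList]) (by simp [Finset.card_erase_of_mem hu, hn])
    (fun x => by by_cases hx : x = u <;> simp [hx, hu])
  exact ⟨f, hf, by simpa using (h 0).symm⟩

lemma CompleteOn.rel_iff {n : ℕ} {A : Finset V} {R : V → V → Prop} (hirr : ∀ a, ¬ R a a)
    (hc : CompleteOn A R) {f : Fin n ↪ V} (hf : Finset.univ.map f = A) (a b : Fin n) :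
    R (f a) (f b) ↔ a ≠ b := by
  constructor
  · rintro h rfl
    exact hirr _ h
  · intro h
    exact hc _ (by simp [← hf]) _ (by simp [← hf]) (f.injective.ne h)

variable [DecidableEq V]

lemma hasOpenCover_of_completeOn_three {A : Finset V} {R : V → V → Prop} {u : V}
    (hirr : ∀ a, ¬ R a a) (hc : CompleteOn A R) (hA : A.card = 3) (hu : u ∈ A) :
    HasOpenCover A R u := by
  obtain ⟨f, hf, rfl⟩ := exists_embedding_of_mem hu hA
  have h := isPathSystem_of_fin (L := {[2, 0], [0, 2, 1], [0, 1, 2], [1, 0]})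
    (s := 0 ::ₘ Finset.univ.val) (r := (· ≠ ·)) (by decide +kernel) hf (hc.rel_iff hirr hf)
  rw [Multiset.map_cons, ← Finset.map_val, hf] at h
  simp only [Multiset.insert_eq_cons, Multiset.map_cons] at h
  exact ⟨[f 2], [f 2, f 1], _, h⟩

lemma hasOpenCover₂_of_completeOn_three {A : Finset V} {R : V → V → Prop} {u : V}
    (hirr : ∀ a, ¬ R a a) (hc : CompleteOn A R) (hA : A.card = 3) (hu : u ∈ A) :
    HasOpenCover₂ A R u u := by
  obtain ⟨f, hf, rfl⟩ := exists_embedding_of_mem hu hA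
  have h := isPathSystem_of_fin (L := {[2, 1, 0], [0], [0, 2], [0, 1], [1, 2, 0]})
    (s := 0 ::ₘ 0 ::ₘ Finset.univ.val) (r := (· ≠ ·)) (by decide +kernel) hf
    (hc.rel_iff hirr hf)
  rw [Multiset.map_cons, Multiset.map_cons, ← Finset.map_val, hf] at h
  simp only [Multiset.insert_eq_cons, Multiset.map_cons] at h
  exact ⟨[f 2, f 1], [], [f 2], [f 1], _, h⟩

lemma hasOpenCover_of_completeOn_five {A : Finset V} {R : V → V → Prop} {u : V}
    (hirr : ∀ a, ¬ R a a) (hc : CompleteOn A R) (hA : A.card = 5) (hu : u ∈ A) :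
    HasOpenCover A R u := by
  obtain ⟨f, hf, rfl⟩ := exists_embedding_of_mem hu hA
  have h := isPathSystem_of_fin
    (L := {[1, 4, 2, 3, 0], [0, 4, 3, 1, 2], [2, 0, 1, 3, 4], [0, 3], [3, 2, 4, 1, 0],
      [4, 0, 2, 1]})
    (s := 0 ::ₘ Finset.univ.val) (r := (· ≠ ·)) (by decide +kernel) hf (hc.rel_iff hirr hf)
  rw [Multiset.map_cons, ← Finset.map_val, hf] at h
  simp only [Multiset.insert_eq_cons, Multiset.map_cons] at h
  exact ⟨[f 1, f 4, f 2, f 3], [f 4, f 3, f 1, f 2], _, h⟩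

lemma hasOpenCover₂_of_completeOn_five {A : Finset V} {R : V → V → Prop} {u : V}
    (hirr : ∀ a, ¬ R a a) (hc : CompleteOn A R) (hA : A.card = 5) (hu : u ∈ A) :
    HasOpenCover₂ A R u u := by
  obtain ⟨f, hf, rfl⟩ := exists_embedding_of_mem hu hA
  have h := isPathSystem_of_fin
    (L := {[3, 2, 4, 0], [1, 0], [0, 3, 1, 2], [0, 2, 1, 4, 3], [2, 0, 4, 1], [0, 1, 3, 4],
      [4, 2, 3, 0]})
    (s := 0 ::ₘ 0 ::ₘ Finset.univ.val) (r := (· ≠ ·)) (by decide +kernel) hf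
    (hc.rel_iff hirr hf)
  rw [Multiset.map_cons, Multiset.map_cons, ← Finset.map_val, hf] at h
  simp only [Multiset.insert_eq_cons, Multiset.map_cons] at h
  exact ⟨[f 3, f 2, f 4], [f 1], [f 3, f 1, f 2], [f 2, f 1, f 4, f 3], _, h⟩

lemma hasOpenCover₂_pair {R : V → V → Prop} {u v : V} (hsymm : ∀ a b, R a b → R b a)
    (hirr : ∀ a, ¬ R a a) (huv : u ≠ v) (h : R u v) : HasOpenCover₂ {u, v} R u v := by
  obtain ⟨f, hf, hfi⟩ := exists_embedding (A := {u, v}) (l := [u, v]) (n := 2) (by simpa using huv)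
    rfl (by simp)
  obtain rfl : u = f 0 := by simpa using hfi 0
  obtain rfl : v = f 1 := by simpa using hfi 1
  have hc : CompleteOn {f 0, f 1} R := by
    intro a ha b hb hab
    simp only [Finset.mem_insert, Finset.mem_singleton] at ha hb
    rcases ha with rfl | rfl <;> rcases hb with rfl | rfl
    exacts [absurd rfl hab, h, hsymm _ _ h, absurd rfl hab]
  have h := isPathSystem_of_fin (L := {[1, 0], [0, 1], [0], [1]})
    (s := 0 ::ₘ 1 ::ₘ Finset.univ.val) (r := (· ≠ ·)) (by decide +kernel) hf
    (hc.rel_iff hirr hf)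
  rw [Multiset.map_cons, Multiset.map_cons, ← Finset.map_val, hf] at h
  exact ⟨[f 1], [f 0], [], [], 0, h⟩

/-- The clique on `B` extended by a vertex `u` adjacent to `v` and `w` only, presented on
`Fin (n + 3)`. -/
lemma exists_embedding_insert {B : Finset V} {R : V → V → Prop} {u v w : V} {n : ℕ}
    (hsymm : ∀ a b, R a b → R b a) (hirr : ∀ a, ¬ R a a) (hc : CompleteOn B R)
    (hB : B.card = n + 2) (hu : u ∉ B) (hv : v ∈ B) (hw : w ∈ B) (hvw : v ≠ w)
    (hadj : ∀ x ∈ B, R u x ↔ x = v ∨ x = w) :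
    ∃ f : Fin (n + 3) ↪ V, Finset.univ.map f = insert u B ∧ ∀ a b, R (f a) (f b) ↔
      a ≠ b ∧ (a = 0 → b = 1 ∨ b = 2) ∧ (b = 0 → a = 1 ∨ a = 2) := by
  have huv : u ≠ v := fun h => hu (h ▸ hv)
  have huw : u ≠ w := fun h => hu (h ▸ hw)
  have hw' : w ∈ B.erase v := by simp [hw, hvw.symm]
  obtain ⟨f, hf, hfi⟩ := exists_embedding (A := insert u B)
    (l := u :: v :: w :: ((B.erase v).erase w).toList) (n := n + 3)
    (by simp [Finset.nodup_toList, huv, huw, hvw, hu])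
    (by simp [Finset.card_erase_of_mem hw', Finset.card_erase_of_mem hv, hB])
    (fun x => by
      by_cases hx : x = u <;> by_cases hx' : x = v <;> by_cases hx'' : x = w <;>
        simp [hx, hx', hx'', hv, hw])
  obtain rfl : u = f 0 := by simpa using hfi 0
  obtain rfl : v = f 1 := by simpa using hfi 1
  obtain rfl : w = f 2 := by
    have h2 := hfi 2
    rw [Fin.val_two] at h2
    simpa using h2
  have hmem : ∀ a : Fin (n + 3), a ≠ 0 → f a ∈ B := by
    intro a ha
    have : f a ∈ insert (f 0) B := by simp [← hf]
    exact (Finset.mem_insert.1 this).resolve_left (f.injective.ne ha)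
  refine ⟨f, hf, fun a b => ?_⟩
  by_cases hab : a = b
  · simp [hab, hirr]
  by_cases ha : a = 0
  · subst ha
    simp [hab, hadj _ (hmem b (Ne.symm hab)), f.injective.eq_iff, Ne.symm hab]
  by_cases hb : b = 0
  · subst hb
    have : R (f a) (f 0) ↔ R (f 0) (f a) := ⟨hsymm _ _, hsymm _ _⟩
    simp [this, hab, hadj _ (hmem a hab), f.injective.eq_iff]
  · simp [ha, hb, hab, hc _ (hmem a ha) _ (hmem b hb) (f.injective.ne hab)]

lemma hasCover_insert_of_completeOn_three {B : Finset V} {R : V → V → Prop} {u v w : V}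
    (hsymm : ∀ a b, R a b → R b a) (hirr : ∀ a, ¬ R a a) (hc : CompleteOn B R)
    (hB : B.card = 3) (hu : u ∉ B) (hv : v ∈ B) (hw : w ∈ B) (hvw : v ≠ w)
    (hadj : ∀ x ∈ B, R u x ↔ x = v ∨ x = w) : HasCover (insert u B) R := by
  obtain ⟨f, hf, hR⟩ := exists_embedding_insert hsymm hirr hc hB hu hv hw hvw hadj
  have h := isPathSystem_of_fin (L := {[0, 2, 3, 1], [3, 2, 1, 0], [1, 2], [2, 0, 1, 3]})
    (s := Finset.univ.val)
    (r := fun a b => a ≠ b ∧ (a = 0 → b = 1 ∨ b = 2) ∧ (b = 0 → a = 1 ∨ a = 2))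
    (by decide +kernel) hf hR
  rw [← Finset.map_val, hf] at h
  exact ⟨_, h⟩

lemma hasCover_insert_of_completeOn_five {B : Finset V} {R : V → V → Prop} {u v w : V}
    (hsymm : ∀ a b, R a b → R b a) (hirr : ∀ a, ¬ R a a) (hc : CompleteOn B R)
    (hB : B.card = 5) (hu : u ∉ B) (hv : v ∈ B) (hw : w ∈ B) (hvw : v ≠ w)
    (hadj : ∀ x ∈ B, R u x ↔ x = v ∨ x = w) : HasCover (insert u B) R := by
  obtain ⟨f, hf, hR⟩ := exists_embedding_insert hsymm hirr hc hB hu hv hw hvw hadj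
  have h := isPathSystem_of_fin
    (L := {[1, 0, 2, 4, 3], [3, 4, 1, 5, 2], [5, 1, 3, 2, 0], [2, 1, 4, 5], [4, 2, 5, 3, 1],
      [0, 1, 2, 3, 5, 4]})
    (s := Finset.univ.val)
    (r := fun a b => a ≠ b ∧ (a = 0 → b = 1 ∨ b = 2) ∧ (b = 0 → a = 1 ∨ a = 2))
    (by decide +kernel) hf hR
  rw [← Finset.map_val, hf] at h
  exact ⟨_, h⟩

end SmallCases

section Assembly

variable {V : Type} [Fintype V]

lemma SmallHaveCover.hasOpenCover (hmin : SmallHaveCover V) {A : Finset V}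
    {R : V → V → Prop} {u : V} (hsymm : ∀ a b, R a b → R b a) (hirr : ∀ a, ¬ R a a)
    (hcard : A.card < Fintype.card V) (hc : ConnectedOn A R) (hu : u ∈ A) :
    HasOpenCover A R u := by
  classical
  by_cases h3 : A.card = 3 ∧ CompleteOn A R
  · exact hasOpenCover_of_completeOn_three hirr h3.2 h3.1 hu
  by_cases h5 : A.card = 5 ∧ CompleteOn A R
  · exact hasOpenCover_of_completeOn_five hirr h5.2 h5.1 hu
  exact (hmin.hasCover hsymm hirr hcard ⟨u, hu⟩ hc h3 h5).hasOpenCover hu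

lemma SmallHaveCover.hasOpenCover₂_self (hmin : SmallHaveCover V) {A : Finset V}
    {R : V → V → Prop} {u : V} (hsymm : ∀ a b, R a b → R b a) (hirr : ∀ a, ¬ R a a)
    (hcard : A.card < Fintype.card V) (hc : ConnectedOn A R) (hu : u ∈ A)
    (hA : 2 ≤ A.card) : HasOpenCover₂ A R u u := by
  classical
  by_cases h3 : A.card = 3 ∧ CompleteOn A R
  · exact hasOpenCover₂_of_completeOn_three hirr h3.2 h3.1 hu
  by_cases h5 : A.card = 5 ∧ CompleteOn A R
  · exact hasOpenCover₂_of_completeOn_five hirr h5.2 h5.1 hu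
  obtain ⟨a, ha, w, hw, -, haw⟩ := hc {u} (by simpa using hu) (by simp) (by
    rintro rfl
    simp at hA)
  rw [Finset.mem_singleton] at ha
  subst ha
  exact (hmin.hasCover hsymm hirr hcard ⟨a, hu⟩ hc h3 h5).hasOpenCover₂ hu hw haw

lemma SmallHaveCover.hasOpenCover₂_of_ne (hmin : SmallHaveCover V) {A : Finset V}
    {R : V → V → Prop} {u v x : V} (hsymm : ∀ a b, R a b → R b a) (hirr : ∀ a, ¬ R a a)
    (hcard : A.card + 1 < Fintype.card V) (hc : ConnectedOn A R) (hu : u ∈ A) (hv : v ∈ A)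
    (hx : x ∉ A) (huv : u ≠ v) : HasOpenCover₂ A R u v := by
  classical
  have hxu : x ≠ u := fun h => hx (h ▸ hu)
  have hxv : x ≠ v := fun h => hx (h ▸ hv)
  let R' : V → V → Prop := fun a b =>
    (a ∈ A ∧ b ∈ A ∧ R a b) ∨ (a = x ∧ (b = u ∨ b = v)) ∨ (b = x ∧ (a = u ∨ a = v))
  have hR : ∀ a ∈ A, ∀ b ∈ A, R' a b ↔ R a b := by
    intro a ha b hb
    have hax : a ≠ x := fun h => hx (h ▸ ha)
    have hbx : b ≠ x := fun h => hx (h ▸ hb)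
    simp [R', ha, hb, hax, hbx]
  have hx1 : ∀ a, R' a x ↔ a = u ∨ a = v := by
    intro a
    simp [R', hx, hxu, hxv]
  have hx2 : ∀ a, R' x a ↔ a = u ∨ a = v := by
    intro a
    simp [R', hx, hxu, hxv]
  have hcard' : (insert x A).card = A.card + 1 := Finset.card_insert_of_notMem hx
  by_cases h3 : (insert x A).card = 3 ∧ CompleteOn (insert x A) R'
  · have hA : {u, v} = A := Finset.eq_of_subset_of_card_le
      (by simp [Finset.insert_subset_iff, hu, hv]) (by rw [Finset.card_pair huv]; omega)
    rw [← hA]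
    refine hasOpenCover₂_pair hsymm hirr huv ((hR u hu v hv).1 ?_)
    exact h3.2 u (by simp [hu]) v (by simp [hv]) huv
  by_cases h5 : (insert x A).card = 5 ∧ CompleteOn (insert x A) R'
  · obtain ⟨z, hz, hz'⟩ := Finset.exists_mem_notMem_of_card_lt_card (s := {u, v}) (t := A)
      (by rw [Finset.card_pair huv]; omega)
    have hxz : x ≠ z := fun h => hx (h ▸ hz)
    refine absurd ((hx2 z).1 (h5.2 x (by simp) z (by simp [hz]) hxz)) ?_
    simpa using hz'
  have hcov : HasCover (insert x A) R' := by
    refine hmin.hasCover ?_ ?_ (by omega) (by simp) ?_ h3 h5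
    · rintro a b (⟨ha, hb, h⟩ | h | h)
      exacts [.inl ⟨hb, ha, hsymm _ _ h⟩, .inr (.inr h), .inr (.inl h)]
    · rintro a (⟨-, -, h⟩ | ⟨rfl, h⟩ | ⟨rfl, h⟩)
      · exact hirr a h
      · exact h.elim hxu hxv
      · exact h.elim hxu hxv
    · exact hc.insert hx hu (fun a ha b hb => (hR a ha b hb).2) ((hx2 u).2 (.inl rfl))
        ((hx1 u).2 (.inl rfl))
  exact hcov.hasOpenCover₂_of_insert hx huv hu hv hR hx1 hx2

lemma SmallHaveCover.hasOpenCover₂ (hmin : SmallHaveCover V) {A : Finset V}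
    {R : V → V → Prop} {u v : V} (hsymm : ∀ a b, R a b → R b a) (hirr : ∀ a, ¬ R a a)
    (hcard : A.card + 1 < Fintype.card V) (hc : ConnectedOn A R) (hu : u ∈ A) (hv : v ∈ A)
    (hA : 2 ≤ A.card) : HasOpenCover₂ A R u v := by
  classical
  by_cases huv : u = v
  · subst huv
    exact hmin.hasOpenCover₂_self hsymm hirr (by omega) hc hu hA
  · obtain ⟨x, -, hx⟩ := Finset.exists_mem_notMem_of_card_lt_card (s := A) (t := Finset.univ)
      (by rw [Finset.card_univ]; omega)
    exact hmin.hasOpenCover₂_of_ne hsymm hirr hcard hc hu hv hx huv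

lemma SmallHaveCover.hasCover_insert [DecidableEq V] (hmin : SmallHaveCover V)
    {B : Finset V} {R : V → V → Prop} {u v w : V} (hsymm : ∀ a b, R a b → R b a)
    (hirr : ∀ a, ¬ R a a) (hcard : B.card < Fintype.card V) (hc : ConnectedOn B R)
    (hu : u ∉ B) (hvw : v ≠ w) (hcut : (crossing {u} B R).val = {(u, v), (u, w)})
    (hK3 : ¬ ((insert u B).card = 3 ∧ CompleteOn (insert u B) R)) :
    HasCover (insert u B) R := by
  have hmem : ∀ x, (x ∈ B ∧ R u x) ↔ (x = v ∨ x = w) := by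
    intro x
    have : (u, x) ∈ crossing {u} B R ↔ (u, x) ∈ ({(u, v), (u, w)} : Multiset (V × V)) := by
      rw [← hcut, Finset.mem_val]
    simpa [mem_crossing] using this
  have hv : v ∈ B := ((hmem v).2 (.inl rfl)).1
  have hw : w ∈ B := ((hmem w).2 (.inr rfl)).1
  have hadj : ∀ x ∈ B, R u x ↔ x = v ∨ x = w := by
    intro x hx
    simpa [hx] using hmem x
  by_cases h3 : B.card = 3 ∧ CompleteOn B R
  · exact hasCover_insert_of_completeOn_three hsymm hirr h3.2 h3.1 hu hv hw hvw hadj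
  by_cases h5 : B.card = 5 ∧ CompleteOn B R
  · exact hasCover_insert_of_completeOn_five hsymm hirr h5.2 h5.1 hu hv hw hvw hadj
  rcases (hmin.hasCover hsymm hirr hcard ⟨v, hv⟩ hc h3 h5).insert_or_eq_pair hsymm hu hvw hcut
    (hirr u) hc with h | ⟨rfl, h⟩
  · exact h
  · refine absurd ⟨?_, ?_⟩ hK3
    · rw [Finset.card_insert_of_notMem hu, Finset.card_pair hvw]
    · have huv := (hadj v hv).2 (.inl rfl)
      have huw := (hadj w hw).2 (.inr rfl)
      intro a ha b hb hab
      simp only [Finset.mem_insert, Finset.mem_singleton] at ha hb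
      rcases ha with rfl | rfl | rfl <;> rcases hb with rfl | rfl | rfl <;>
        first
        | exact absurd rfl hab
        | assumption
        | (apply hsymm; assumption)

lemma SmallHaveCover.hasCover_of_cut (hmin : SmallHaveCover V) {A B : Finset V}
    {R : V → V → Prop} (hsymm : ∀ a b, R a b → R b a) (hirr : ∀ a, ¬ R a a)
    (h : Disjoint A B) (hAB : A.disjUnion B h = Finset.univ) (hA : ConnectedOn A R)
    (hB : ConnectedOn B R) (hpos : (crossing A B R).Nonempty)
    (hcut : (crossing A B R).card ≤ 2)
    (hK3 : ¬ (Fintype.card V = 3 ∧ CompleteOn Finset.univ R)) :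
    HasCover Finset.univ R := by
  classical
  have hcard : A.card + B.card = Fintype.card V := by
    rw [← Finset.card_disjUnion A B h, hAB, Finset.card_univ]
  obtain ⟨⟨a, b⟩, hab⟩ := hpos
  obtain ⟨⟨ha, hb⟩, -⟩ := mem_crossing.1 hab
  have hA0 : 0 < A.card := Finset.card_pos.2 ⟨a, ha⟩
  have hB0 : 0 < B.card := Finset.card_pos.2 ⟨b, hb⟩
  have h0 : 0 < (crossing A B R).card := Finset.card_pos.2 ⟨_, hab⟩
  rw [← hAB]
  rcases (by omega : (crossing A B R).card = 1 ∨ (crossing A B R).card = 2) with h1 | h2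
  · obtain ⟨⟨u, v⟩, huv⟩ := Finset.card_eq_one.1 h1
    have hmem : (u, v) ∈ crossing A B R := by simp [huv]
    obtain ⟨⟨hu, hv⟩, -⟩ := mem_crossing.1 hmem
    exact HasOpenCover.join h hsymm huv (hmin.hasOpenCover hsymm hirr (by omega) hA hu)
      (hmin.hasOpenCover hsymm hirr (by omega) hB hv)
  · obtain ⟨⟨u, v⟩, ⟨u', v'⟩, hne, huv⟩ := Finset.card_eq_two.1 h2
    have hval : (crossing A B R).val = {(u, v), (u', v')} := by
      rw [huv, Finset.insert_val_of_notMem (by simpa using hne)]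
      rfl
    have hmem : (u, v) ∈ crossing A B R := by simp [huv]
    have hmem' : (u', v') ∈ crossing A B R := by simp [huv]
    obtain ⟨⟨hu, hv⟩, -⟩ := mem_crossing.1 hmem
    obtain ⟨⟨hu', hv'⟩, -⟩ := mem_crossing.1 hmem'
    by_cases hA1 : A.card = 1
    · obtain ⟨x, rfl⟩ := Finset.card_eq_one.1 hA1
      rw [Finset.mem_singleton] at hu hu'
      subst hu hu'
      have hins : ({u'} : Finset V).disjUnion B h = insert u' B := by
        ext y; simp
      rw [hins]
      rw [hins] at hAB
      refine hmin.hasCover_insert hsymm hirr (by omega) hB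
        (Finset.disjoint_singleton_left.1 h) (fun hvv => hne (by rw [hvv])) hval ?_
      rwa [hAB, Finset.card_univ]
    by_cases hB1 : B.card = 1
    · obtain ⟨x, rfl⟩ := Finset.card_eq_one.1 hB1
      rw [Finset.mem_singleton] at hv hv'
      subst hv hv'
      have hins : A.disjUnion {v'} h = insert v' A := by
        ext y; simp
      rw [hins]
      rw [hins] at hAB
      refine hmin.hasCover_insert (v := u) (w := u') hsymm hirr (by omega) hA
        (Finset.disjoint_singleton_right.1 h) (fun huu => hne (by rw [huu])) ?_ ?_
      · rw [← crossing_comm hsymm, hval]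
        rfl
      · rwa [hAB, Finset.card_univ]
    exact HasOpenCover₂.join h hsymm hval
      (hmin.hasOpenCover₂ hsymm hirr (by omega) hA hu hu' (by omega))
      (hmin.hasOpenCover₂ hsymm hirr (by omega) hB hv hv' (by omega))

/-- The sides of a minimum edge cut are connected. -/
lemma connectedOn_of_min_cut [DecidableEq V] {A : Finset V} {R : V → V → Prop}
    (hsymm : ∀ a b, R a b → R b a) (hc : ConnectedOn Finset.univ R)
    (hmin : ∀ T : Finset V, T.Nonempty → T ≠ Finset.univ →
      (crossing A Aᶜ R).card ≤ (crossing T Tᶜ R).card) : ConnectedOn A R := by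
  intro T hTA hT hne
  by_contra! hno
  obtain ⟨y, hyA, hyT⟩ := Finset.exists_of_ssubset (Finset.ssubset_iff_subset_ne.2 ⟨hTA, hne⟩)
  have hTuniv : T ≠ Finset.univ := fun h => hyT (h ▸ Finset.mem_univ y)
  obtain ⟨t, ht⟩ := hT
  obtain ⟨a, ha, b, -, hb, hab⟩ := hc (A \ T) (Finset.subset_univ _)
    ⟨y, Finset.mem_sdiff.2 ⟨hyA, hyT⟩⟩
    (fun h => (Finset.mem_sdiff.1 (h ▸ Finset.mem_univ t : t ∈ A \ T)).2 ht)
  obtain ⟨haA, haT⟩ := Finset.mem_sdiff.1 ha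
  have hbT : b ∉ T := fun h => hno b h a haA haT (hsymm _ _ hab)
  have hbA : b ∉ A := fun h => hb (Finset.mem_sdiff.2 ⟨h, hbT⟩)
  refine (hmin T ⟨t, ht⟩ hTuniv).not_gt (Finset.card_lt_card ?_)
  refine (Finset.ssubset_iff_of_subset ?_).2 ⟨(a, b), ?_, ?_⟩
  · rintro ⟨c, d⟩ hcd
    simp only [mem_crossing, Finset.mem_compl] at hcd ⊢
    exact ⟨⟨hTA hcd.1.1, fun h => hno c hcd.1.1 d h hcd.1.2 hcd.2⟩, hcd.2⟩
  · simp [mem_crossing, haA, hbA, hab]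
  · simp [mem_crossing, haT]

lemma SmallHaveCover.hasCover_of_small_cut [DecidableEq V] (hmin : SmallHaveCover V)
    {A : Finset V} {R : V → V → Prop} (hsymm : ∀ a b, R a b → R b a) (hirr : ∀ a, ¬ R a a)
    (hc : ConnectedOn Finset.univ R) (hA : A.Nonempty) (hA' : A ≠ Finset.univ)
    (hcut : (crossing A Aᶜ R).card ≤ 2)
    (hK3 : ¬ (Fintype.card V = 3 ∧ CompleteOn Finset.univ R)) :
    HasCover Finset.univ R := by
  obtain ⟨C, hC, hCmin⟩ := Finset.exists_min_image
    ((Finset.univ : Finset (Finset V)).filter fun T => T.Nonempty ∧ T ≠ Finset.univ)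
    (fun T => (crossing T Tᶜ R).card) ⟨A, by simp [hA, hA']⟩
  simp only [Finset.mem_filter, Finset.mem_univ, true_and] at hC hCmin
  have hC2 : (crossing C Cᶜ R).card ≤ 2 := (hCmin A ⟨hA, hA'⟩).trans hcut
  have hcompl : (crossing Cᶜ Cᶜᶜ R).card = (crossing C Cᶜ R).card := by
    have := congrArg Multiset.card (crossing_comm (A := C) (B := Cᶜ) hsymm)
    rw [compl_compl]
    simpa using this.symm
  refine hmin.hasCover_of_cut (A := C) (B := Cᶜ) hsymm hirr disjoint_compl_right ?_ ?_ ?_ ?_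
    hC2 hK3
  · ext x
    simp
  · exact connectedOn_of_min_cut hsymm hc fun T hT hT' => hCmin T ⟨hT, hT'⟩
  · refine connectedOn_of_min_cut hsymm hc fun T hT hT' => ?_
    rw [hcompl]
    exact hCmin T ⟨hT, hT'⟩
  · obtain ⟨a, ha, b, -, hb, hab⟩ := hc C (Finset.subset_univ _) hC.1 hC.2
    exact ⟨(a, b), by simp [mem_crossing, ha, hb, hab]⟩

/-- A disconnecting edge set contains an edge cut. -/
lemma exists_cut_of_not_connected [DecidableEq V] [Nonempty V] {G : SimpleGraph V}
    {F : Set (Sym2 V)} (h : ¬ (G.deleteEdges F).Connected) :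
    ∃ A : Finset V, A.Nonempty ∧ A ≠ Finset.univ ∧
      (crossing A Aᶜ G.Adj).card ≤ F.ncard := by
  classical
  have h' : ¬ (G.deleteEdges F).Preconnected := fun hp => h ⟨hp⟩
  unfold SimpleGraph.Preconnected at h'
  push Not at h'
  obtain ⟨u, v, huv⟩ := h'
  set A : Finset V := Finset.univ.filter ((G.deleteEdges F).Reachable u) with hAdef
  have hmem : ∀ x, x ∈ A ↔ (G.deleteEdges F).Reachable u x := by simp [hAdef]
  refine ⟨A, ⟨u, (hmem u).2 .rfl⟩, fun hA => huv ((hmem v).1 (hA ▸ Finset.mem_univ v)), ?_⟩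
  rw [← Set.ncard_coe_finset]
  refine Set.ncard_le_ncard_of_injOn (fun e => s(e.1, e.2)) ?_ ?_ (Set.toFinite F)
  · rintro ⟨a, b⟩ hab
    simp only [Finset.mem_coe, mem_crossing, Finset.mem_compl, hmem] at hab
    by_contra hF
    refine hab.1.2 (hab.1.1.trans (SimpleGraph.Adj.reachable ?_))
    exact SimpleGraph.deleteEdges_adj.2 ⟨hab.2, hF⟩
  · rintro ⟨a, b⟩ hab ⟨c, d⟩ hcd heq
    simp only [Finset.mem_coe, mem_crossing, Finset.mem_compl] at hab hcd
    rcases Sym2.eq_iff.1 heq with ⟨rfl, rfl⟩ | ⟨rfl, rfl⟩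
    · rfl
    · exact absurd hcd.1.1 hab.1.2

lemma nonempty_iso_of_completeOn {G : SimpleGraph V} {n : ℕ} (hn : Fintype.card V = n)
    (hc : CompleteOn Finset.univ G.Adj) : Nonempty (G ≃g (⊤ : SimpleGraph (Fin n))) := by
  refine ⟨⟨Fintype.equivFinOfCardEq hn, fun {a b} => ?_⟩⟩
  simp only [SimpleGraph.top_adj, ne_eq, EmbeddingLike.apply_eq_iff_eq]
  exact ⟨fun h => hc a (Finset.mem_univ _) b (Finset.mem_univ _) h, fun h => h.ne⟩

end Assembly

end PathSystem

/-- a minimal counterexample (w.r.t. number of vertices) to the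
OPPDC conjecture is 3-edge-connected: deleting any set of at most 2 edges
leaves the graph connected. -/
theorem minimal_counterexample_three_edge_connected {V : Type} [Fintype V]
    (G : SimpleGraph V)
    (hconn : G.Connected)
    (hK3 : ¬ Nonempty (G ≃g (⊤ : SimpleGraph (Fin 3))))
    (hK5 : ¬ Nonempty (G ≃g (⊤ : SimpleGraph (Fin 5))))
    (hno : ¬ HasOPPDC G)
    (hmin : ∀ (W : Type) [Fintype W] (H : SimpleGraph W),
      Fintype.card W < Fintype.card V → H.Connected →
      ¬ Nonempty (H ≃g (⊤ : SimpleGraph (Fin 3))) →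
      ¬ Nonempty (H ≃g (⊤ : SimpleGraph (Fin 5))) →
      HasOPPDC H) :
    ∀ F : Set (Sym2 V), F ⊆ G.edgeSet → F.ncard ≤ 2 →
      (G.deleteEdges F).Connected := by
  classical
  intro F _ hF
  by_contra hcon
  have := hconn.nonempty
  obtain ⟨A, hA, hA', hcut⟩ := PathSystem.exists_cut_of_not_connected hcon
  refine hno (PathSystem.hasOPPDC_of_hasCover ?_)
  exact PathSystem.SmallHaveCover.hasCover_of_small_cut hmin (fun _ _ h => h.symm)
    (fun _ h => h.ne rfl) (PathSystem.connectedOn_univ hconn) hA hA' (hcut.trans hF)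
    fun h => hK3 (PathSystem.nonempty_iso_of_completeOn h.1 h.2)
end

section
/- If a 2-connected graph G has an ear-decomposition G₀ = C₀ ⊂ G₁ ⊂ … ⊂ G_k = G in which the initial cycle C₀ has length at least 4 and every ear Pᵢ = Gᵢ \ Gᵢ₋₁ is a path of length at least 2, then G has an oriented perfect path double cover. -/
/-- The cycle graph on `ZMod n`: `v` adjacent to `v + 1`. -/
def cycleGraph (n : ℕ) : SimpleGraph (ZMod n) :=
  SimpleGraph.fromRel (fun a b => b = a + 1)

/-- The consecutive pairs of a list. -/
def arcs {V : Type*} (l : List V) : Multiset (V × V) := (l.zip l.tail : List (V × V))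

/-- The two-vertex lists `[q, p]`, for the consecutive pairs `(p, q)` of a list. -/
def backSteps {V : Type*} (l : List V) : Multiset (List V) :=
  (arcs l).map fun p => [p.2, p.1]

/-- The multiset `D` of paths on the vertices `S` uses every arc of `E` once, and every vertex
of `S` once as a start and once as an end. -/
structure IsCover {V : Type*} (S : Multiset V) (E : Multiset (V × V)) (D : Multiset (List V)) :
    Prop where
  nodup : ∀ l ∈ D, l.Nodup
  mem : ∀ l ∈ D, ∀ x ∈ l, x ∈ S
  heads : D.map List.head? = S.map some
  lasts : D.map List.getLast? = S.map some
  arcs_eq : D.bind arcs = E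

section Arcs

variable {V : Type*}

@[simp] theorem arcs_nil : arcs ([] : List V) = 0 := rfl

@[simp] theorem arcs_singleton (a : V) : arcs [a] = 0 := rfl

@[simp] theorem arcs_cons_cons (a b : V) (l : List V) :
    arcs (a :: b :: l) = (a, b) ::ₘ arcs (b :: l) := rfl

theorem arcs_append_cons (l m : List V) (a : V) :
    arcs (l ++ a :: m) = arcs (l ++ [a]) + arcs (a :: m) := by
  induction l with
  | nil => simp
  | cons b l ih =>
    cases l with
    | nil => simp
    | cons c l => simpa using ih

theorem arcs_append_pair (l : List V) (a b : V) :
    arcs (l ++ [a, b]) = arcs (l ++ [a]) + {(a, b)} := by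
  rw [arcs_append_cons]; rfl

theorem arcs_reverse (l : List V) : arcs l.reverse = (arcs l).map Prod.swap := by
  induction l with
  | nil => rfl
  | cons a l ih =>
    cases l with
    | nil => rfl
    | cons b l =>
      rw [arcs_cons_cons, Multiset.map_cons, ← ih]
      simp only [List.reverse_cons, List.append_assoc, List.cons_append, List.nil_append]
      rw [arcs_append_pair, add_comm, Multiset.singleton_add, Prod.swap_prod_mk]

theorem mem_arcs {l : List V} {p : V × V} (h : p ∈ arcs l) : p.1 ∈ l ∧ p.2 ∈ l := by
  have h' : (p.1, p.2) ∈ l.zip l.tail := h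
  exact ⟨(List.of_mem_zip h').1, List.mem_of_mem_tail (List.of_mem_zip h').2⟩

theorem exists_of_mem_arcs {l : List V} {p : V × V} (h : p ∈ arcs l) :
    ∃ s t, l = s ++ p.1 :: p.2 :: t := by
  induction l with
  | nil => simp at h
  | cons a l ih =>
    cases l with
    | nil => simp at h
    | cons b l =>
      rw [arcs_cons_cons, Multiset.mem_cons] at h
      rcases h with rfl | h
      · exact ⟨[], l, rfl⟩
      · obtain ⟨s, t, e⟩ := ih h
        exact ⟨a :: s, t, by rw [e]; rfl⟩

theorem mem_arcs_of_eq (s t : List V) (a b : V) : (a, b) ∈ arcs (s ++ a :: b :: t) := by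
  rw [arcs_append_cons]; simp

theorem isChain_of_arcs {r : V → V → Prop} {l : List V} (h : ∀ p ∈ arcs l, r p.1 p.2) :
    l.IsChain r := by
  induction l with
  | nil => simp
  | cons a l ih =>
    cases l with
    | nil => simp
    | cons b l =>
      simp only [arcs_cons_cons, Multiset.mem_cons, forall_eq_or_imp] at h
      exact List.isChain_cons_cons.2 ⟨h.1, ih h.2⟩

theorem nodup_arcs {l : List V} (h : l.Nodup) : (arcs l).Nodup := by
  induction l with
  | nil => simp
  | cons a l ih =>
    cases l with
    | nil => simp
    | cons b l =>
      rw [arcs_cons_cons, Multiset.nodup_cons]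
      exact ⟨fun h' => (List.nodup_cons.1 h).1 (mem_arcs h').1, ih (List.nodup_cons.1 h).2⟩

theorem swap_notMem_arcs {l : List V} (h : l.Nodup) {p : V × V} (hp : p ∈ arcs l) :
    p.swap ∉ arcs l := by
  intro hq
  obtain ⟨s, t, rfl⟩ := exists_of_mem_arcs hp
  rw [arcs_append_cons, Multiset.mem_add, arcs_cons_cons, Multiset.mem_cons] at hq
  simp only [List.nodup_append, List.nodup_cons, List.mem_cons, not_or] at h
  rcases hq with hq | hq | hq
  · have := (mem_arcs hq).1
    simp only [Prod.fst_swap, List.mem_append, List.mem_singleton] at this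
    grind
  · have := congrArg Prod.fst hq
    simp only [Prod.fst_swap] at this
    grind
  · have := (mem_arcs hq).2
    simp only [Prod.snd_swap, List.mem_cons] at this
    grind

theorem notMem_arcs_head {a v : V} {l : List V} (h : (a :: l).Nodup) : (v, a) ∉ arcs (a :: l) := by
  intro hv
  obtain ⟨s, t, e⟩ := exists_of_mem_arcs hv
  cases s <;> grind

theorem eq_of_mem_arcs {a u w : V} {l : List V} (h : l.Nodup) (hu : (u, a) ∈ arcs l)
    (hw : (w, a) ∈ arcs l) : u = w := by
  induction l with
  | nil => simp at hu
  | cons b l ih =>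
    cases l with
    | nil => simp at hu
    | cons c l =>
      have hl := (List.nodup_cons.1 h).2
      have hc := fun v => notMem_arcs_head (v := v) hl
      simp only [arcs_cons_cons, Multiset.mem_cons, Prod.mk.injEq] at hu hw
      rcases hu with hu | hu <;> rcases hw with hw | hw
      · exact hu.1.trans hw.1.symm
      · exact absurd (hu.2 ▸ hw) (hc w)
      · exact absurd (hw.2 ▸ hu) (hc u)
      · exact ih hl hu hw

theorem nodup_arcs_add_swap {E : Multiset (V × V)} (h : E.Nodup)
    (h' : ∀ p ∈ E, p.swap ∉ E) : (E + E.map Prod.swap).Nodup := by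
  refine Multiset.nodup_add.2 ⟨h, h.map Prod.swap_injective, ?_⟩
  rw [Multiset.disjoint_left]
  intro p hp hq
  obtain ⟨q, hq, rfl⟩ := Multiset.mem_map.1 hq
  exact h' q (by simpa using hq) hp

@[simp] theorem backSteps_nil : backSteps ([] : List V) = 0 := rfl

@[simp] theorem backSteps_singleton (a : V) : backSteps [a] = 0 := rfl

@[simp] theorem backSteps_cons_cons (a b : V) (l : List V) :
    backSteps (a :: b :: l) = [b, a] ::ₘ backSteps (b :: l) := by
  simp [backSteps]

theorem mem_arcs_map_range (f : ℕ → V) (n : ℕ) (u v : V) :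
    (u, v) ∈ arcs ((List.range (n + 1)).map f) ↔ ∃ i < n, f i = u ∧ f (i + 1) = v := by
  induction n with
  | zero => simp
  | succ n ih =>
    have e : arcs ((List.range (n + 1 + 1)).map f) =
        arcs ((List.range (n + 1)).map f) + {(f n, f (n + 1))} := by
      rw [List.range_succ, List.range_succ]
      simp only [List.map_append, List.map_cons, List.map_nil, List.append_assoc,
        List.cons_append, List.nil_append]
      exact arcs_append_pair _ _ _
    rw [e, Multiset.mem_add, ih, Multiset.mem_singleton]
    simp only [Prod.mk.injEq, Nat.lt_succ_iff_lt_or_eq, or_and_right, exists_or, exists_eq_left]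
    grind

theorem bind_arcs_backSteps (l : List V) : (backSteps l).bind arcs = (arcs l).map Prod.swap := by
  simp only [backSteps, Multiset.bind_map, arcs_cons_cons, arcs_singleton, Multiset.cons_zero]
  exact Multiset.bind_singleton _ _

theorem heads_backSteps (a : V) (l : List V) :
    (backSteps (a :: l)).map List.head? = (l : Multiset V).map some := by
  induction l generalizing a with
  | nil => simp
  | cons b l ih => simp [ih b, ← Multiset.cons_coe]

theorem lasts_backSteps (a : V) (l : List V) :
    (backSteps (l ++ [a])).map List.getLast? = (l : Multiset V).map some := by
  simp only [backSteps, Multiset.map_map, Function.comp_def]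
  induction l with
  | nil => simp
  | cons b l ih =>
    cases l with
    | nil => simp
    | cons c l =>
      simp only [List.cons_append, arcs_cons_cons, Multiset.map_cons] at ih ⊢
      rw [ih]; simp

theorem mem_backSteps {l m : List V} (h : m ∈ backSteps l) :
    ∃ p ∈ arcs l, m = [p.2, p.1] := by
  obtain ⟨p, hp, rfl⟩ := Multiset.mem_map.1 h
  exact ⟨p, hp, rfl⟩

theorem nodup_of_mem_backSteps {l m : List V} (hl : l.Nodup) (h : m ∈ backSteps l) :
    m.Nodup := by
  obtain ⟨p, hp, rfl⟩ := mem_backSteps h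
  have : p.2 ≠ p.1 := by
    intro e
    refine swap_notMem_arcs hl hp ?_
    rwa [show p.swap = p from Prod.ext e e.symm]
  simpa using this

theorem subset_of_mem_backSteps {l m : List V} (h : m ∈ backSteps l) : ∀ x ∈ m, x ∈ l := by
  obtain ⟨p, hp, rfl⟩ := mem_backSteps h
  simp [(mem_arcs hp).1, (mem_arcs hp).2]

end Arcs

namespace IsCover

variable {V : Type*} {S : Multiset V} {E : Multiset (V × V)} {D : Multiset (List V)}

theorem reverse (h : IsCover S E D) : IsCover S (E.map Prod.swap) (D.map List.reverse) where
  nodup l hl := by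
    obtain ⟨m, hm, rfl⟩ := Multiset.mem_map.1 hl
    exact List.nodup_reverse.2 (h.nodup m hm)
  mem l hl := by
    obtain ⟨m, hm, rfl⟩ := Multiset.mem_map.1 hl
    simpa using h.mem m hm
  heads := by simpa [Multiset.map_map, Function.comp_def] using h.lasts
  lasts := by simpa [Multiset.map_map, Function.comp_def] using h.heads
  arcs_eq := by
    rw [← h.arcs_eq, Multiset.bind_map, Multiset.map_bind]
    simp only [arcs_reverse]

theorem exists_head (h : IsCover S E D) {a : V} (ha : a ∈ S) :
    ∃ l, a :: l ∈ D := by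
  have : some a ∈ D.map List.head? := h.heads ▸ Multiset.mem_map_of_mem _ ha
  obtain ⟨l, hl, e⟩ := Multiset.mem_map.1 this
  obtain ⟨t, rfl⟩ := List.head?_eq_some_iff.1 e
  exact ⟨t, hl⟩

theorem exists_last (h : IsCover S E D) {a : V} (ha : a ∈ S) :
    ∃ l, l ++ [a] ∈ D := by
  have : some a ∈ D.map List.getLast? := h.lasts ▸ Multiset.mem_map_of_mem _ ha
  obtain ⟨l, hl, e⟩ := Multiset.mem_map.1 this
  obtain ⟨t, rfl⟩ := List.getLast?_eq_some_iff.1 e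
  exact ⟨t, hl⟩

/-- A vertex with two neighbours lies on three paths, hence on one avoiding two given ones. -/
theorem exists_mem_ne_ne (h : IsCover S E D) {a u w : V} (ha : a ∈ S) (huw : u ≠ w)
    (hu : (u, a) ∈ E) (hw : (w, a) ∈ E) (P Q : List V) :
    ∃ W ∈ D, a ∈ W ∧ W ≠ P ∧ W ≠ Q := by
  obtain ⟨l, hl⟩ := h.exists_head ha
  rw [← h.arcs_eq, Multiset.mem_bind] at hu hw
  obtain ⟨m, hm, hum⟩ := hu
  obtain ⟨n, hn, hwn⟩ := hw
  have hlm : ∀ m ∈ D, ∀ v, (v, a) ∈ arcs m → a :: l ≠ m := by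
    rintro m hm v hv rfl
    exact notMem_arcs_head (h.nodup _ hm) hv
  have hmn : m ≠ n := by
    rintro rfl
    exact huw (eq_of_mem_arcs (h.nodup _ hm) hum hwn)
  have h₁ := hlm m hm u hum
  have h₂ := hlm n hn w hwn
  by_contra hc
  have hc' : ∀ W ∈ D, a ∈ W → W = P ∨ W = Q := by
    intro W hW haW
    by_contra h'
    exact hc ⟨W, hW, haW, not_or.1 h'⟩
  have c₁ := hc' _ hl (by simp)
  have c₂ := hc' m hm (mem_arcs hum).2
  have c₃ := hc' n hn (mem_arcs hwn).2
  grind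

/-- Attaching an ear from `a` to `b` to a cover with a path through `a` that avoids `b` before
`a` and is not the path ending at `b`. -/
theorem attach (h : IsCover S E D) {a b : V} {β γ δ I : List V}
    (hW : β ++ a :: γ ∈ D) (hQ : δ ++ [b] ∈ D) (hne : β ++ a :: γ ≠ δ ++ [b]) (hb : b ∉ β)
    (hab : a ≠ b) (hI : I ≠ []) (hnd : I.Nodup) (hdis : ∀ x ∈ I, x ∉ S) :
    ∃ D', IsCover (S + (I : Multiset V))
      (E + (arcs (a :: (I ++ [b])) + (arcs (a :: (I ++ [b]))).map Prod.swap)) D' := by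
  obtain ⟨D₁, rfl⟩ := Multiset.exists_cons_of_mem hW
  obtain ⟨D₀, rfl⟩ := Multiset.exists_cons_of_mem
    ((Multiset.mem_cons.1 hQ).resolve_left hne.symm)
  obtain ⟨x, r, hx⟩ := List.exists_cons_of_ne_nil hI
  obtain ⟨r', y, hy⟩ := (List.eq_nil_or_concat I).resolve_left hI
  rw [List.concat_eq_append] at hy
  have hdW := h.nodup _ hW
  have hdQ := h.nodup _ hQ
  have hmW := h.mem _ hW
  have hmQ := h.mem _ hQ
  have hxI : x ∈ I := by simp [hx]
  have hyI : y ∈ I := by simp [hy]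
  refine ⟨(β ++ a :: (I ++ [b])) ::ₘ (x :: a :: γ) ::ₘ (δ ++ [b, y]) ::ₘ (backSteps I + D₀),
    ?_, ?_, ?_, ?_, ?_⟩
  · simp only [Multiset.mem_cons, Multiset.mem_add]
    rintro l (rfl | rfl | rfl | hl | hl)
    · simp only [List.nodup_append, List.nodup_cons, List.mem_append, List.mem_cons] at *
      grind
    · simp only [List.nodup_append, List.nodup_cons, List.mem_append, List.mem_cons] at *
      grind
    · simp only [List.nodup_append, List.nodup_cons, List.mem_append, List.mem_cons] at *
      grind
    · exact nodup_of_mem_backSteps hnd hl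
    · exact h.nodup _ (by simp [hl])
  · simp only [Multiset.mem_cons, Multiset.mem_add, Multiset.mem_coe]
    rintro l (rfl | rfl | rfl | hl | hl) z hz
    · simp only [List.mem_append, List.mem_cons] at *
      grind
    · simp only [List.mem_append, List.mem_cons] at *
      grind
    · simp only [List.mem_append, List.mem_cons] at *
      grind
    · exact Or.inr (subset_of_mem_backSteps hl z hz)
    · exact Or.inl (h.mem _ (by simp [hl]) z hz)
  · have hh := h.heads
    have e₁ : (β ++ a :: (I ++ [b])).head? = (β ++ a :: γ).head? := by cases β <;> rfl
    have e₂ : (δ ++ [b, y]).head? = (δ ++ [b]).head? := by cases δ <;> rfl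
    have e₃ := hx ▸ heads_backSteps x r
    simp only [Multiset.map_cons, Multiset.map_add, e₁, e₂, e₃, ← hh, List.head?_cons]
    rw [hx, ← Multiset.cons_coe, Multiset.map_cons]
    simp only [← Multiset.singleton_add]
    abel
  · have hh := h.lasts
    have e₁ : (β ++ a :: (I ++ [b])).getLast? = (δ ++ [b]).getLast? := by
      rw [← List.cons_append, ← List.append_assoc]; simp only [List.getLast?_concat]
    have e₂ : (δ ++ [b, y]).getLast? = some y := by simp
    have e₃ := hy ▸ lasts_backSteps y r'
    have e₄ : (x :: a :: γ).getLast? = (β ++ a :: γ).getLast? := by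
      rw [List.getLast?_append_cons, List.getLast?_cons_cons]
    simp only [Multiset.map_cons, Multiset.map_add, e₁, e₂, e₃, e₄, ← hh]
    rw [hy, ← Multiset.coe_add, Multiset.map_add, Multiset.coe_singleton,
      Multiset.map_singleton]
    simp only [← Multiset.singleton_add]
    abel
  · have e₁ : arcs (a :: (I ++ [b])) = {(a, x)} + arcs I + {(y, b)} := by
      have : arcs (I ++ [b]) = arcs I + {(y, b)} := by
        rw [hy, List.append_assoc]; exact arcs_append_pair _ _ _
      rw [add_assoc, ← this, hx]; rfl
    rw [← h.arcs_eq]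
    simp only [Multiset.cons_bind, Multiset.add_bind, bind_arcs_backSteps, arcs_append_pair,
      arcs_cons_cons]
    rw [arcs_append_cons β, arcs_append_cons β γ, e₁]
    simp only [Multiset.map_add, Multiset.map_singleton, Prod.swap_prod_mk,
      ← Multiset.singleton_add]
    abel

theorem attach_ear (h : IsCover S E D) {a b u w : V} {I : List V} (ha : a ∈ S) (hb : b ∈ S)
    (huw : u ≠ w) (hu : (u, a) ∈ E) (hw : (w, a) ∈ E)
    (hab : a ≠ b) (hI : I ≠ []) (hnd : I.Nodup) (hdis : ∀ x ∈ I, x ∉ S) :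
    ∃ D', IsCover (S + (I : Multiset V))
      (E + (arcs (a :: (I ++ [b])) + (arcs (a :: (I ++ [b]))).map Prod.swap)) D' := by
  obtain ⟨ε, hP⟩ := h.exists_head hb
  obtain ⟨δ, hQ⟩ := h.exists_last hb
  obtain ⟨W, hW, haW, hWP, hWQ⟩ := h.exists_mem_ne_ne ha huw hu hw (b :: ε) (δ ++ [b])
  obtain ⟨β, γ, rfl⟩ := List.append_of_mem haW
  by_cases hβ : b ∈ β
  · have hγ : b ∉ γ := by
      have := h.nodup _ hW
      simp only [List.nodup_append, List.nodup_cons, List.mem_cons] at this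
      grind
    have hW' := Multiset.mem_map_of_mem List.reverse hW
    have hP' := Multiset.mem_map_of_mem List.reverse hP
    have hne := fun e => hWP (List.reverse_injective e)
    simp only [List.reverse_append, List.reverse_cons, List.append_assoc, List.cons_append,
      List.nil_append] at hW' hP' hne
    obtain ⟨D', hD'⟩ := h.reverse.attach hW' hP' hne (by simpa using hγ) hab hI hnd hdis
    refine ⟨D'.map List.reverse, ?_⟩
    convert hD'.reverse using 1
    simp only [Multiset.map_add, Multiset.map_map, Prod.swap_swap_eq, Multiset.map_id]
    abel
  · exact h.attach hW hQ hWQ hβ hab hI hnd hdis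

theorem hasOPPDC [Fintype V] {G : SimpleGraph V} (h : IsCover Finset.univ.val E D)
    (hE : E.Nodup) (hadj : ∀ p, p ∈ E ↔ G.Adj p.1 p.2) : HasOPPDC G := by
  choose t ht using fun v => h.exists_head (Finset.mem_univ_val v)
  have hinj : ∀ l ∈ D, ∀ m ∈ D, l.head? = m.head? → l = m :=
    Multiset.inj_on_of_nodup_map
      (h.heads ▸ Finset.univ.nodup.map (Option.some_injective V))
  have hinj' : ∀ l ∈ D, ∀ m ∈ D, l.getLast? = m.getLast? → l = m :=
    Multiset.inj_on_of_nodup_map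
      (h.lasts ▸ Finset.univ.nodup.map (Option.some_injective V))
  have hsurj : ∀ l ∈ D, ∃ v, v :: t v = l := by
    intro l hl
    have hm : l.head? ∈ Finset.univ.val.map some := h.heads ▸ Multiset.mem_map_of_mem _ hl
    obtain ⟨v, -, hv⟩ := Multiset.mem_map.1 hm
    exact ⟨v, hinj _ (ht v) _ hl (by simpa using hv)⟩
  refine ⟨fun v => v :: t v, fun v => ⟨by simp, h.nodup _ (ht v), ?_, rfl⟩, ?_, ?_⟩
  · refine isChain_of_arcs fun p hp => (hadj p).1 ?_
    rw [← h.arcs_eq]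
    exact Multiset.mem_bind.2 ⟨_, ht v, hp⟩
  · intro w
    obtain ⟨l, hl⟩ := h.exists_last (Finset.mem_univ_val w)
    obtain ⟨v, hv⟩ := hsurj _ hl
    refine ⟨v, by simp [hv], fun v' hv' => ?_⟩
    have := hinj' _ (ht v') _ hl (by rw [hv']; simp)
    rw [← hv] at this
    exact (List.cons.inj this).1
  · intro a b hab
    have hm : (a, b) ∈ D.bind arcs := h.arcs_eq ▸ (hadj (a, b)).2 hab
    obtain ⟨l, hl, hml⟩ := Multiset.mem_bind.1 hm
    obtain ⟨v, rfl⟩ := hsurj _ hl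
    refine ⟨v, hml, fun v' hv' => ?_⟩
    by_contra hne
    obtain ⟨D₁, hD₁⟩ := Multiset.exists_cons_of_mem hl
    have hv₁ : v' :: t v' ∈ D₁ := by
      have := hD₁ ▸ ht v'
      exact (Multiset.mem_cons.1 this).resolve_left (by simp [hne])
    rw [← h.arcs_eq, hD₁, Multiset.cons_bind, Multiset.nodup_add] at hE
    exact Multiset.disjoint_left.1 hE.2.2 hml (Multiset.mem_bind.2 ⟨_, hv₁, hv'⟩)

/-- A cycle of length at least four has a cover. -/
theorem exists_of_cycle {c : List V} {a : V} (hnd : (a :: c).Nodup) (hlen : 3 ≤ c.length) :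
    ∃ D, IsCover ((a :: c : List V) : Multiset V)
      (arcs (a :: (c ++ [a])) + (arcs (a :: (c ++ [a]))).map Prod.swap) D := by
  obtain ⟨b, c, rfl⟩ := List.exists_cons_of_length_pos (by omega : 0 < c.length)
  obtain ⟨d, c, rfl⟩ := List.exists_cons_of_length_pos (by grind : 0 < c.length)
  obtain ⟨r, z, rfl⟩ := (List.eq_nil_or_concat c).resolve_left (by rintro rfl; simp at hlen)
  rw [List.concat_eq_append] at hnd ⊢
  refine ⟨[a, b] ::ₘ (b :: d :: (r ++ [z, a])) ::ₘ [d, b, a, z] ::ₘ backSteps (d :: (r ++ [z])),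
    ?_, ?_, ?_, ?_, ?_⟩
  · simp only [Multiset.mem_cons]
    rintro l (rfl | rfl | rfl | hl)
    · grind
    · simp only [List.nodup_append, List.nodup_cons, List.mem_append, List.mem_cons] at *
      grind
    · grind
    · exact nodup_of_mem_backSteps (by grind) hl
  · simp only [Multiset.mem_cons, Multiset.mem_coe]
    rintro l (rfl | rfl | rfl | hl) x hx
    · grind
    · grind
    · grind
    · have := subset_of_mem_backSteps hl x hx
      grind
  · simp only [Multiset.map_cons, heads_backSteps, List.head?_cons, ← Multiset.cons_coe]
  · rw [Multiset.map_cons, Multiset.map_cons, Multiset.map_cons,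
      show d :: (r ++ [z]) = (d :: r) ++ [z] from rfl, lasts_backSteps]
    have e : (b :: d :: (r ++ [z, a])).getLast? = some a := by
      rw [show b :: d :: (r ++ [z, a]) = (b :: d :: (r ++ [z])) ++ [a] by simp]
      exact List.getLast?_concat
    have e' : ((a :: b :: d :: (r ++ [z]) : List V) : Multiset V) =
        a ::ₘ b ::ₘ ((d :: r : List V) + {z}) := by
      rw [← Multiset.coe_singleton, Multiset.coe_add]; rfl
    rw [e, List.cons_append, e']
    simp only [Multiset.map_add, Multiset.map_singleton,
      ← Multiset.singleton_add, List.getLast?_cons_cons, List.getLast?_singleton]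
    abel
  · have e : arcs (d :: (r ++ [z, a])) = arcs (d :: (r ++ [z])) + {(z, a)} :=
      arcs_append_pair (d :: r) z a
    simp only [Multiset.cons_bind, bind_arcs_backSteps, arcs_cons_cons, List.cons_append,
      List.append_assoc, List.nil_append, arcs_singleton, e]
    simp only [Multiset.map_add, Multiset.map_singleton, Prod.swap_prod_mk,
      ← Multiset.singleton_add]
    abel

end IsCover

/-- A subgraph with a cover of its vertices and arcs in which every vertex has at least two
neighbours. -/
def HasCover {V : Type*} {G : SimpleGraph V} (H : G.Subgraph) : Prop :=
  (∃ S E D, IsCover S E D ∧ S.Nodup ∧ E.Nodup ∧ (∀ v, v ∈ S ↔ v ∈ H.verts) ∧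
    ∀ p, p ∈ E ↔ H.Adj p.1 p.2) ∧
  ∀ v ∈ H.verts, ∃ u w, u ≠ w ∧ H.Adj u v ∧ H.Adj w v

namespace HasCover

variable {V : Type*} {G : SimpleGraph V} {H K : G.Subgraph}

theorem hasOPPDC [Fintype V] (h : HasCover (⊤ : G.Subgraph)) : HasOPPDC G := by
  obtain ⟨⟨S, E, D, hD, hS, hE, hSm, hEm⟩, -⟩ := h
  obtain rfl : S = Finset.univ.val :=
    (Multiset.Nodup.ext hS Finset.univ.nodup).2 (by simp [hSm])
  exact hD.hasOPPDC hE (by simpa using hEm)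

theorem ear (h : HasCover H) {a b : V} {I : List V} (hnd : (a :: (I ++ [b])).Nodup)
    (hI : I ≠ []) (ha : a ∈ H.verts) (hb : b ∈ H.verts) (hdis : ∀ x ∈ I, x ∉ H.verts)
    (hverts : ∀ v, v ∈ K.verts ↔ v ∈ H.verts ∨ v ∈ I)
    (hadj : ∀ u v, K.Adj u v ↔
      H.Adj u v ∨ (u, v) ∈ arcs (a :: (I ++ [b])) ∨ (v, u) ∈ arcs (a :: (I ++ [b]))) :
    HasCover K := by
  obtain ⟨⟨S, E, D, hD, hS, hE, hSm, hEm⟩, hdeg⟩ := h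
  obtain ⟨u, w, huw, hu, hw⟩ := hdeg a ha
  have hnd' := hnd
  simp only [List.nodup_cons, List.nodup_append, List.mem_append, List.mem_singleton,
    not_or] at hnd'
  have hdS : ∀ x ∈ I, x ∉ S := fun x hx hxS => hdis x hx ((hSm x).1 hxS)
  obtain ⟨D', hD'⟩ := hD.attach_ear ((hSm a).2 ha) ((hSm b).2 hb) huw ((hEm (u, a)).2 hu)
    ((hEm (w, a)).2 hw) hnd'.1.2 hI hnd'.2.1 hdS
  have hint : ∀ p ∈ arcs (a :: (I ++ [b])), p.1 ∈ I ∨ p.2 ∈ I := by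
    rintro p hp
    obtain ⟨s, t, e⟩ := exists_of_mem_arcs hp
    obtain ⟨x, r, rfl⟩ := List.exists_cons_of_ne_nil hI
    have hm := mem_arcs hp
    by_contra! hc
    rcases s with _ | ⟨c, s⟩
    · grind
    · grind
  refine ⟨⟨_, _, D', hD', ?_, ?_, ?_, ?_⟩, ?_⟩
  · refine Multiset.nodup_add.2 ⟨hS, by simpa using hnd'.2.1, ?_⟩
    rw [Multiset.disjoint_left]
    exact fun hx hxI => hdS _ hxI hx
  · refine Multiset.nodup_add.2 ⟨hE, nodup_arcs_add_swap (nodup_arcs hnd)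
      fun p => swap_notMem_arcs hnd, ?_⟩
    rw [Multiset.disjoint_left]
    intro p hp hq
    have hH := (hEm p).1 hp
    have h₁ := H.edge_vert hH
    have h₂ := H.edge_vert hH.symm
    rw [Multiset.mem_add, Multiset.mem_map] at hq
    rcases hq with hq | ⟨q, hq, rfl⟩
    · rcases hint p hq with h' | h'
      · exact hdis _ h' h₁
      · exact hdis _ h' h₂
    · rcases hint q hq with h' | h'
      · exact hdis _ h' h₂
      · exact hdis _ h' h₁
  · simp [hverts, hSm]
  · rintro ⟨u, v⟩
    simp [hadj, hEm]
  · intro v hv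
    rcases (hverts v).1 hv with hv | hv
    · obtain ⟨u, w, huw, hu, hw⟩ := hdeg v hv
      exact ⟨u, w, huw, (hadj _ _).2 (Or.inl hu), (hadj _ _).2 (Or.inl hw)⟩
    · obtain ⟨s, t, rfl⟩ := List.append_of_mem hv
      obtain ⟨s', u, hs⟩ := (List.eq_nil_or_concat (a :: s)).resolve_left (by simp)
      obtain ⟨w, t', ht⟩ := List.exists_cons_of_ne_nil (show t ++ [b] ≠ [] by simp)
      have e : a :: (s ++ v :: t ++ [b]) = s' ++ u :: v :: w :: t' := by
        rw [List.append_assoc, ← List.cons_append, hs, List.cons_append, ht]; simp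
      rw [e] at hadj hnd
      refine ⟨u, w, ?_, (hadj _ _).2 (Or.inr (Or.inl (mem_arcs_of_eq _ _ _ _))),
        (hadj _ _).2 (Or.inr (Or.inr ?_))⟩
      · rintro rfl
        grind
      · have := mem_arcs_of_eq (s' ++ [u]) t' v w
        simpa using this

theorem cycle {c : List V} {a : V} (hnd : (a :: c).Nodup) (hlen : 3 ≤ c.length)
    (hverts : ∀ v, v ∈ H.verts ↔ v ∈ a :: c)
    (hadj : ∀ u v, H.Adj u v ↔
      (u, v) ∈ arcs (a :: (c ++ [a])) ∨ (v, u) ∈ arcs (a :: (c ++ [a]))) :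
    HasCover H := by
  obtain ⟨D, hD⟩ := IsCover.exists_of_cycle hnd hlen
  obtain ⟨r, z, hc⟩ := (List.eq_nil_or_concat c).resolve_left (by rintro rfl; simp at hlen)
  rw [List.concat_eq_append] at hc
  have e : arcs (a :: (c ++ [a])) = arcs (a :: c) + {(z, a)} := by
    rw [hc, List.append_assoc]
    exact arcs_append_pair (a :: r) z a
  have hza : (a, z) ∉ arcs (a :: c) := by
    intro h
    obtain ⟨s, t, e⟩ := exists_of_mem_arcs h
    rcases s with _ | ⟨y, s⟩
    · rcases r with _ | ⟨y, r⟩ <;> grind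
    · grind
  have hne : z ≠ a := by grind
  refine ⟨⟨_, _, D, hD, by simpa using hnd, ?_, ?_, ?_⟩, ?_⟩
  · refine nodup_arcs_add_swap ?_ ?_
    · rw [e, Multiset.nodup_add]
      refine ⟨nodup_arcs hnd, Multiset.nodup_singleton _, ?_⟩
      rw [Multiset.disjoint_singleton]
      exact notMem_arcs_head hnd
    · rintro p hp hq
      rw [e, Multiset.mem_add, Multiset.mem_singleton] at hp hq
      rcases hp with hp | rfl <;> rcases hq with hq | hq
      · exact swap_notMem_arcs hnd hp hq
      · rw [Prod.swap_eq_iff_eq_swap.1 hq] at hp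
        exact hza hp
      · exact hza hq
      · exact hne (congrArg Prod.fst hq).symm
  · simp [hverts]
  · rintro ⟨u, v⟩
    simp [hadj]
  · intro v hv
    rw [hverts, List.mem_cons] at hv
    rcases hv with rfl | hv
    · obtain ⟨b, t, rfl⟩ := List.exists_cons_of_length_pos (by omega : 0 < c.length)
      refine ⟨z, b, ?_, (hadj _ _).2 (Or.inl ?_), (hadj _ _).2 (Or.inr ?_)⟩
      · rintro rfl
        exact hza (by simp)
      · rw [e]; simp
      · simp
    · obtain ⟨s, t, rfl⟩ := List.append_of_mem hv
      obtain ⟨s', u, hs⟩ := (List.eq_nil_or_concat (a :: s)).resolve_left (by simp)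
      obtain ⟨w, t', ht⟩ := List.exists_cons_of_ne_nil (show t ++ [a] ≠ [] by simp)
      have e' : a :: (s ++ v :: t ++ [a]) = s' ++ u :: v :: w :: t' := by
        rw [List.append_assoc, ← List.cons_append, hs, List.cons_append, ht]; simp
      rw [e'] at hadj
      refine ⟨u, w, ?_, (hadj _ _).2 (Or.inl (mem_arcs_of_eq _ _ _ _)),
        (hadj _ _).2 (Or.inr ?_)⟩
      · rintro rfl
        have hu : u ∈ a :: s := by simp [hs]
        rcases t with _ | ⟨y, t⟩
        · rcases s with _ | ⟨y, s⟩
          · simp at hlen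
          · rcases s' with _ | ⟨x, s'⟩ <;> grind
        · grind
      · have := mem_arcs_of_eq (s' ++ [u]) t' v w
        simpa using this

theorem of_iso_cycleGraph {n : ℕ} (hn : 4 ≤ n) (φ : H.coe ≃g cycleGraph n) : HasCover H := by
  obtain ⟨m, rfl⟩ : ∃ m, n = m + 1 := ⟨n - 1, by omega⟩
  set f : ℕ → V := fun i => (φ.symm (i : ZMod (m + 1))).1 with hf
  have hsurj : ∀ x : ZMod (m + 1), ∃ i < m + 1, (i : ZMod (m + 1)) = x :=
    fun x => ⟨x.val, ZMod.val_lt x, ZMod.natCast_zmod_val x⟩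
  have hinj : ∀ i < m + 1, ∀ j < m + 1, f i = f j → i = j := by
    intro i hi j hj h
    have h' := φ.symm.injective (Subtype.ext h)
    rwa [ZMod.natCast_eq_natCast_iff', Nat.mod_eq_of_lt hi, Nat.mod_eq_of_lt hj] at h'
  have hlast : f (m + 1) = f 0 := by
    simp only [hf, ZMod.natCast_self, Nat.cast_zero]
  have hrange : (List.range (m + 1)).map f = f 0 :: (List.range m).map (fun i => f (i + 1)) := by
    rw [List.range_succ_eq_map, List.map_cons, List.map_map]; rfl
  have hrange' : f 0 :: ((List.range m).map (fun i => f (i + 1)) ++ [f 0]) =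
      (List.range (m + 1 + 1)).map f := by
    rw [← List.cons_append, ← hrange, List.range_succ (n := m + 1), List.map_append]
    simp [hlast]
  have hstep : ∀ u v, (∃ i < m + 1, f i = u ∧ f (i + 1) = v) ↔
      ∃ x : ZMod (m + 1), (φ.symm x).1 = u ∧ (φ.symm (x + 1)).1 = v := by
    intro u v
    constructor
    · rintro ⟨i, -, rfl, rfl⟩
      exact ⟨i, rfl, by simp [hf]⟩
    · rintro ⟨x, rfl, rfl⟩
      obtain ⟨i, hi, rfl⟩ := hsurj x
      exact ⟨i, hi, rfl, by simp [hf]⟩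
  refine HasCover.cycle (a := f 0) (c := (List.range m).map fun i => f (i + 1)) ?_ ?_ ?_ ?_
  · rw [← hrange]
    refine List.Nodup.map_on ?_ List.nodup_range
    intro i hi j hj
    exact hinj i (List.mem_range.1 hi) j (List.mem_range.1 hj)
  · simpa using Nat.le_of_succ_le_succ hn
  · intro v
    rw [← hrange, List.mem_map]
    constructor
    · intro hv
      obtain ⟨i, hi, e⟩ := hsurj (φ ⟨v, hv⟩)
      exact ⟨i, List.mem_range.2 hi, by simp [hf, e]⟩
    · rintro ⟨i, -, rfl⟩
      exact (φ.symm _).2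
  · intro u v
    rw [hrange', mem_arcs_map_range, mem_arcs_map_range, hstep, hstep]
    have hone : ∀ x : ZMod (m + 1), x ≠ x + 1 := by
      have : Fact (1 < m + 1) := ⟨by omega⟩
      intro x hx
      exact one_ne_zero (left_eq_add.1 hx)
    have hadj : ∀ x y, H.Adj (φ.symm x).1 (φ.symm y).1 ↔ y = x + 1 ∨ x = y + 1 := by
      intro x y
      rw [← SimpleGraph.Subgraph.coe_adj, φ.symm.map_adj_iff, cycleGraph,
        SimpleGraph.fromRel_adj, and_iff_right_iff_imp]
      rintro (rfl | rfl)
      · exact hone x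
      · exact (hone y).symm
    constructor
    · intro h
      have hu := H.edge_vert h
      have hv := H.edge_vert h.symm
      have h' := hadj (φ ⟨u, hu⟩) (φ ⟨v, hv⟩)
      simp only [RelIso.symm_apply_apply, h, true_iff] at h'
      rcases h' with h' | h'
      · exact Or.inl ⟨φ ⟨u, hu⟩, by simp, by simp [← h']⟩
      · exact Or.inr ⟨φ ⟨v, hv⟩, by simp, by simp [← h']⟩
    · rintro (⟨x, rfl, rfl⟩ | ⟨x, rfl, rfl⟩)
      · exact (hadj _ _).2 (Or.inl rfl)
      · exact (hadj _ _).2 (Or.inr rfl)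

end HasCover

/-- if a 2-connected graph `G` has an ear-decomposition
`G₀ = C₀ ⊂ G₁ ⊂ ⋯ ⊂ G_k = G` whose initial cycle has length at least 4 and
each of whose ears is a path of length at least 2, then `G` has an OPPDC. -/
theorem ear_decomposition_hasOPPDC {V : Type*} [Fintype V] (G : SimpleGraph V)
    (h2conn : ∀ v : V, (G.induce {w : V | w ≠ v}).Connected)
    (hGconn : G.Connected)
    (k : ℕ) (Gs : Fin (k + 1) → G.Subgraph)
    (hmono : Monotone Gs)
    (hlast : Gs (Fin.last k) = ⊤)
    -- the initial subgraph is a cycle of length at least 4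
    (hC0 : ∃ n : ℕ, 4 ≤ n ∧ Nonempty ((Gs 0).coe ≃g cycleGraph n))
    -- each step adds an ear: a path of length at least 2 meeting the previous
    -- subgraph exactly in its two endpoints
    (hear : ∀ i : Fin k, ∃ l : List V,
      l.Nodup ∧ l.Chain' G.Adj ∧ 3 ≤ l.length ∧
      (∀ a b : V, l.head? = some a → l.getLast? = some b →
        a ∈ (Gs i.castSucc).verts ∧ b ∈ (Gs i.castSucc).verts) ∧
      (∀ x ∈ l, x ∈ (Gs i.castSucc).verts →
        l.head? = some x ∨ l.getLast? = some x) ∧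
      (Gs i.succ).verts = (Gs i.castSucc).verts ∪ {x | x ∈ l} ∧
      (Gs i.succ).edgeSet =
        (Gs i.castSucc).edgeSet ∪ {e | ∃ p ∈ l.zip l.tail, e = s(p.1, p.2)}) :
    HasOPPDC G := by
  have key : ∀ i : Fin (k + 1), HasCover (Gs i) := by
    intro i
    induction i using Fin.induction with
    | zero =>
      obtain ⟨n, hn, ⟨φ⟩⟩ := hC0
      exact HasCover.of_iso_cycleGraph hn φ
    | succ i ih =>
      obtain ⟨l, hnd, -, hlen, hends, hint, hverts, hedges⟩ := hear i
      obtain ⟨a, l, rfl⟩ := List.exists_cons_of_length_pos (by omega : 0 < l.length)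
      obtain ⟨I, b, rfl⟩ := (List.eq_nil_or_concat l).resolve_left (by rintro rfl; simp at hlen)
      rw [List.concat_eq_append] at hnd hlen hends hint hverts hedges
      have hI : I ≠ [] := by rintro rfl; simp at hlen
      have hlast' : (a :: (I ++ [b])).getLast? = some b := by
        rw [← List.cons_append, List.getLast?_concat]
      obtain ⟨ha, hb⟩ := hends a b rfl hlast'
      refine ih.ear hnd hI ha hb ?_ ?_ ?_
      · intro x hx hxv
        rcases hint x (by simp [hx]) hxv with h | h
        · simp only [List.head?_cons, Option.some.injEq] at h
          grind
        · rw [hlast', Option.some.injEq] at h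
          simp only [List.nodup_cons, List.nodup_append, List.mem_singleton] at hnd
          grind
      · intro v
        rw [hverts]
        simp only [Set.mem_union, Set.mem_ofPred_eq, List.mem_cons, List.mem_append,
          List.not_mem_nil, or_false]
        constructor
        · rintro (h | rfl | h | rfl) <;> tauto
        · tauto
      · intro u v
        rw [← SimpleGraph.Subgraph.mem_edgeSet, hedges, Set.mem_union,
          SimpleGraph.Subgraph.mem_edgeSet, Set.mem_ofPred_eq]
        refine or_congr_right ⟨?_, ?_⟩
        · rintro ⟨p, hp, e⟩
          rcases Sym2.eq_iff.1 e with ⟨rfl, rfl⟩ | ⟨rfl, rfl⟩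
          · exact Or.inl hp
          · exact Or.inr hp
        · rintro (h | h)
          · exact ⟨_, h, rfl⟩
          · exact ⟨_, h, Sym2.eq_swap⟩
  exact (hlast ▸ key (Fin.last k)).hasOPPDC
end
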